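/- arXiv:1810.11389 — 3 statements merged into one kernel-verified Lean document; each statement's English description precedes it below -/
import Mathlib

section
/- Let Ω ⊂ ℂ^d be a convex domain containing no complex affine line. Suppose that either (1) there exists a non-constant holomorphic map from the unit disk 𝔻 into the boundary ∂Ω, or (2) ∂Ω is a C^∞ smooth real hypersurface and ∂Ω has a point of infinite type in the sense of D'Angelo. Then there exist an affine limit Ω_∞ of Ω and a complex affine 2-plane V ⊂ ℂ^d such that V ∩ Ω_∞ is biholomorphic to 𝔻 × 𝔻. -/
open Set Metric Filter Topology
open scoped ENNReal NNReal

noncomputable section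

section Defs

variable {E F : Type*} [NormedAddCommGroup E] [NormedSpace ℂ E]
  [NormedAddCommGroup F] [NormedSpace ℂ F]

/-- A convex domain: a non-empty open convex subset. -/
def IsConvexDomain (Ω : Set E) : Prop := IsOpen Ω ∧ Convex ℝ Ω ∧ Ω.Nonempty

/-- `Ω` contains no complex affine line `a + ℂ·b`, `b ≠ 0`. -/
def NoComplexLine (Ω : Set E) : Prop :=
  ∀ a b : E, b ≠ 0 → ¬ (∀ lam : ℂ, a + lam • b ∈ Ω)

/-- Membership in `𝕏_d`: a convex domain containing no complex affine line. -/
def InX (Ω : Set E) : Prop := IsConvexDomain Ω ∧ NoComplexLine Ω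

/-- Convergence of a sequence of sets in the local Hausdorff topology. -/
def LocHausConv (Ωn : ℕ → Set E) (Ω : Set E) : Prop :=
  ∃ R₀ : ℝ, 0 < R₀ ∧ ∀ R : ℝ, R₀ ≤ R →
    Tendsto (fun n => Metric.hausdorffDist (Ωn n ∩ Metric.ball 0 R) (Ω ∩ Metric.ball 0 R))
      atTop (nhds 0)

/-- The sequence `z` is compactly divergent in `Ω`. -/
def CompactlyDivergent (Ω : Set E) (z : ℕ → E) : Prop :=
  ∀ K : Set E, IsCompact K → K ⊆ Ω → ∃ N : ℕ, ∀ n ≥ N, z n ∉ K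

/-- `Ω'` is an affine limit of `Ω`. -/
def IsAffineLimit (Ω Ω' : Set E) : Prop :=
  InX Ω' ∧
  ∃ (z : ℕ → E) (zlim : E) (A : ℕ → (E ≃ᵃ[ℂ] E)),
    (∀ n, z n ∈ Ω) ∧ CompactlyDivergent Ω z ∧ zlim ∈ Ω' ∧
    LocHausConv (fun n => (A n) '' Ω) Ω' ∧
    Tendsto (fun n => A n (z n)) atTop (nhds zlim)

/-- `S ⊆ E` and `T ⊆ F` are biholomorphic. -/
def Biholomorphic (S : Set E) (T : Set F) : Prop :=
  ∃ (f : E → F) (g : F → E),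
    DifferentiableOn ℂ f S ∧ DifferentiableOn ℂ g T ∧
    MapsTo f S T ∧ MapsTo g T S ∧ InvOn g f S T

/-- The bidisk `𝔻 × 𝔻 ⊆ ℂ × ℂ`. -/
def unitBidisk : Set (ℂ × ℂ) := (Metric.ball (0:ℂ) 1) ×ˢ (Metric.ball (0:ℂ) 1)

/-- The infinitesimal Kobayashi metric of `Ω ⊆ E`. -/
def kob (Ω : Set E) (z v : E) : ℝ :=
  sInf { c : ℝ | ∃ (ξ : ℂ) (f : ℂ → E),
    DifferentiableOn ℂ f (Metric.ball 0 1) ∧ MapsTo f (Metric.ball 0 1) Ω ∧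
    f 0 = z ∧ ξ • deriv f 0 = v ∧ c = ‖ξ‖ }

/-- `δ_Ω(z; v)`: the distance from `z` to `(z + ℂ·v) ∩ ∂Ω`, valued in `ℝ≥0∞`
(`⊤` when the intersection is empty). -/
def distInDir (Ω : Set E) (z v : E) : ℝ≥0∞ :=
  EMetric.infEdist z ({x | ∃ lam : ℂ, x = z + lam • v} ∩ frontier Ω)

end Defs


/-- The order of vanishing at `0` of `g - g 0` for a map `g : ℂ → G`: the least `k ≥ 1`
such that the `k`-th (real) iterated derivative of `g` at `0` is non-zero (`⊤` if none). -/
def vanishOrder {G : Type*} [NormedAddCommGroup G] [NormedSpace ℝ G] (g : ℂ → G) : ℕ∞ :=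
  sInf {n : ℕ∞ | ∃ k : ℕ, n = (k : ℕ∞) ∧ 1 ≤ k ∧ iteratedFDeriv ℝ k g 0 ≠ 0}

variable {E : Type*} [NormedAddCommGroup E] [NormedSpace ℂ E]

/-- `Γ` is a `C^∞` smooth real hypersurface: near each of its points it is the zero set
of a smooth local defining function with non-vanishing differential. -/
def IsSmoothRealHypersurface (Γ : Set E) : Prop :=
  ∀ p ∈ Γ, ∃ (U : Set E) (r : E → ℝ), IsOpen U ∧ p ∈ U ∧ ContDiffOn ℝ (⊤ : ℕ∞) r U ∧
    (∀ x ∈ U, fderiv ℝ r x ≠ 0) ∧ Γ ∩ U = {x ∈ U | r x = 0}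

/-- `p` is a point of infinite D'Angelo type of `Γ`: for a smooth local defining
function `r` of `Γ` at `p`, for every `N` there is a germ of a non-constant holomorphic
map `z : (ℂ,0) → (E,p)` with `ν(r ∘ z) ≥ N · ν(z)`. -/
def InfiniteTypePoint (Γ : Set E) (p : E) : Prop :=
  p ∈ Γ ∧ ∃ (U : Set E) (r : E → ℝ), IsOpen U ∧ p ∈ U ∧ ContDiffOn ℝ (⊤ : ℕ∞) r U ∧
    (∀ x ∈ U, fderiv ℝ r x ≠ 0) ∧ Γ ∩ U = {x ∈ U | r x = 0} ∧
    ∀ N : ℕ, ∃ (ε : ℝ) (z : ℂ → E), 0 < ε ∧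
      DifferentiableOn ℂ z (Metric.ball 0 ε) ∧ z 0 = p ∧
      (¬ ∀ w ∈ Metric.ball (0:ℂ) ε, z w = p) ∧
      (N : ℕ∞) * vanishOrder z ≤ vanishOrder (fun w => r (z w))

/-!
Call `Ω` rich in bidisk sections if, far out in `Ω`, there are points whose sections by suitable
affine 2-planes contain and avoid any prescribed finite set that a product of two half-planes
contains, respectively avoids. Normalising the Minkowski gauges by Auerbach bases and applying
Arzelà–Ascoli turns a sequence of such sections into an affine limit one of whose sections is a
product of half-planes, that is, a bidisk.

A holomorphic disc in `∂Ω`, averaged over circles against the kernel `1 + Re`, yields an affine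
disc in `∂Ω`. Near it `Ω` looks like the product of a planar convex slice and a planar cone, and
blowing up at boundary points of both factors gives half-planes.

At a point of infinite type, averaging the leading term of a curve with high contact produces a
complex direction `e` in which `∂Ω` has contact of order `N` with its tangent line. Unless the
closure of `Ω` contains an affine disc in direction `e`, the points `p + z e + t ν` missed by `Ω`
satisfy `t ≤ C |z| ^ n` with extremal ones arbitrarily close to `p`. Rescaling at these gives
sections that are flat of order `n`: as `n → ∞` they resemble `𝔻` times a half-plane, and a
further zoom at a boundary point of `𝔻` gives the product of half-planes.
-/

lemma exists_subseq_tendsto_of_lipschitzWith {X : Type*} [PseudoMetricSpace X] [CompactSpace X]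
    {K : ℝ≥0} {a b : ℝ} {F : ℕ → X → ℝ} (hlip : ∀ n, LipschitzWith K (F n))
    (hF : ∀ n x, F n x ∈ Icc a b) :
    ∃ (φ : ℕ → ℕ) (G : X → ℝ), StrictMono φ ∧
      ∀ x, Tendsto (fun n => F (φ n) x) atTop (𝓝 (G x)) := by
  let B : ℕ → BoundedContinuousFunction X ℝ := fun n =>
    BoundedContinuousFunction.mkOfCompact ⟨F n, (hlip n).continuous⟩
  have hequi : Equicontinuous ((↑) : range B → X → ℝ) := by
    refine (LipschitzWith.uniformEquicontinuous _ K ?_).equicontinuous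
    rintro ⟨_, n, rfl⟩
    exact hlip n
  have hcompact : IsCompact (closure (range B)) :=
    BoundedContinuousFunction.arzela_ascoli (Icc a b) isCompact_Icc _
      (by rintro _ x ⟨n, rfl⟩; exact hF n x) hequi
  obtain ⟨G, -, φ, hφ, hG⟩ := hcompact.tendsto_subseq fun n => subset_closure (mem_range_self n)
  exact ⟨φ, G, hφ, fun x =>
    ((BoundedContinuousFunction.lipschitz_eval_const x).continuous.tendsto G).comp hG⟩

/-- A nonnegative sublinear functional, such as the gauge of a convex neighbourhood of `0`. -/
structure IsSublinear {V : Type*} [AddCommGroup V] [Module ℝ V] (g : V → ℝ) : Prop where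
  nonneg : ∀ x, 0 ≤ g x
  add_le : ∀ x y, g (x + y) ≤ g x + g y
  smul : ∀ c : ℝ, 0 ≤ c → ∀ x, g (c • x) = c * g x

namespace IsSublinear

section Algebra

variable {V W : Type*} [AddCommGroup V] [Module ℝ V] [AddCommGroup W] [Module ℝ W]
  {f g : V → ℝ}

lemma map_zero (hg : IsSublinear g) : g 0 = 0 := by
  simpa using hg.smul 0 le_rfl 0

lemma comp_linearMap (hg : IsSublinear g) (L : W →ₗ[ℝ] V) : IsSublinear fun x => g (L x) where
  nonneg x := hg.nonneg _
  add_le x y := by simpa only [map_add] using hg.add_le (L x) (L y)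
  smul c hc x := by simpa only [map_smul] using hg.smul c hc (L x)

lemma add (hf : IsSublinear f) (hg : IsSublinear g) : IsSublinear fun x => f x + g x where
  nonneg x := add_nonneg (hf.nonneg x) (hg.nonneg x)
  add_le x y := by linarith [hf.add_le x y, hg.add_le x y]
  smul c hc x := by rw [hf.smul c hc, hg.smul c hc, mul_add]

lemma of_tendsto {ι : Type*} {l : Filter ι} [l.NeBot] {F : ι → V → ℝ} {G : V → ℝ}
    (hF : ∀ n, IsSublinear (F n)) (hG : ∀ x, Tendsto (F · x) l (𝓝 (G x))) : IsSublinear G where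
  nonneg x := ge_of_tendsto' (hG x) fun n => (hF n).nonneg x
  add_le x y := le_of_tendsto_of_tendsto' (hG _) ((hG x).add (hG y)) fun n => (hF n).add_le x y
  smul c hc x := tendsto_nhds_unique (hG (c • x))
    (((hG x).const_mul c).congr fun n => ((hF n).smul c hc x).symm)

lemma sum_le (hg : IsSublinear g) {ι : Type*} (s : Finset ι) (x : ι → V) :
    g (∑ i ∈ s, x i) ≤ ∑ i ∈ s, g (x i) :=
  Finset.le_sum_of_subadditive g hg.map_zero.le hg.add_le s x

lemma convex_lt_one (hg : IsSublinear g) : Convex ℝ {x | g x < 1} := by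
  intro x hx y hy a b ha hb hab
  calc g (a • x + b • y) ≤ a * g x + b * g y := by
        simpa only [hg.smul a ha, hg.smul b hb] using hg.add_le (a • x) (b • y)
    _ < 1 := by
        rcases ha.eq_or_lt with rfl | ha
        · simpa [show b = 1 by linarith] using hy
        · nlinarith [mul_lt_mul_of_pos_left (show g x < 1 from hx) ha,
            mul_le_mul_of_nonneg_left (show g y < 1 from hy).le hb]

lemma le_of_inv_smul (hg : IsSublinear g) {c : ℝ} (hc : 0 < c) {x : V} (h : g (c⁻¹ • x) < 1) :
    g x ≤ c := by
  rw [hg.smul _ (by positivity), inv_mul_lt_iff₀ hc, mul_one] at h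
  exact h.le

lemma le_of_one_le_inv_smul (hg : IsSublinear g) {c : ℝ} (hc : 0 < c) {x : V}
    (h : 1 ≤ g (c⁻¹ • x)) : c ≤ g x := by
  rwa [hg.smul _ (by positivity), le_inv_mul_iff₀ hc, mul_one] at h

end Algebra

section Normed

variable {V : Type*} [NormedAddCommGroup V] [NormedSpace ℝ V] {f g h : V → ℝ} {C : ℝ}

lemma lipschitzWith (hg : IsSublinear g) (hC : ∀ x, g x ≤ C * ‖x‖) :
    LipschitzWith C.toNNReal g := by
  refine LipschitzWith.of_le_add_mul _ fun x y => ?_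
  calc g x ≤ g y + g (x - y) := by simpa using hg.add_le y (x - y)
    _ ≤ g y + C * ‖x - y‖ := by gcongr; exact hC _
    _ ≤ g y + C.toNNReal * dist x y := by
        rw [dist_eq_norm]
        gcongr
        exact Real.le_coe_toNNReal C

lemma abs_sub_le (hg : IsSublinear g) (hC₀ : 0 ≤ C) (hC : ∀ x, g x ≤ C * ‖x‖) (x y : V) :
    |g x - g y| ≤ C * ‖x - y‖ := by
  simpa [Real.dist_eq, dist_eq_norm, Real.coe_toNNReal C hC₀] using
    (hg.lipschitzWith hC).dist_le_mul x y

lemma abs_sub_le_of_unit_ball (hg : IsSublinear g) (hh : IsSublinear h) {ε : ℝ}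
    (H : ∀ x, ‖x‖ ≤ 1 → |g x - h x| ≤ ε) (x : V) : |g x - h x| ≤ ε * ‖x‖ := by
  rcases eq_or_ne x 0 with rfl | hx
  · simp [hg.map_zero, hh.map_zero]
  · have hx' : 0 < ‖x‖ := norm_pos_iff.2 hx
    have key := H (‖x‖⁻¹ • x) (by rw [norm_smul, norm_inv, norm_norm, inv_mul_cancel₀ hx'.ne'])
    rwa [hg.smul _ (by positivity), hh.smul _ (by positivity), ← mul_sub, abs_mul,
      abs_of_pos (by positivity), inv_mul_le_iff₀ hx', mul_comm] at key

lemma le_mul_norm_of_ball (hg : IsSublinear g) {r : ℝ} (hr : 0 < r)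
    (H : ∀ x ∈ ball (0 : V) r, g x < 1) (x : V) : g x ≤ 2 / r * ‖x‖ := by
  rcases eq_or_ne x 0 with rfl | hx
  · simp [hg.map_zero]
  · refine hg.le_of_inv_smul (by positivity) (H _ ?_)
    rw [mem_ball_zero_iff, norm_smul, Real.norm_of_nonneg (by positivity)]
    field_simp
    norm_num

/-- Two close sublinear functionals have close unit sublevel sets: shrink a point of one set
towards the origin until it enters the other. -/
lemma hausdorffDist_le (hf : IsSublinear f) (hg : IsSublinear g) {ε R : ℝ} (hε : 0 ≤ ε)
    (hR : 0 ≤ R) (hfg : ∀ x, |f x - g x| ≤ ε * ‖x‖) :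
    hausdorffDist ({x | f x < 1} ∩ ball 0 R) ({x | g x < 1} ∩ ball 0 R) ≤ ε * R ^ 2 := by
  have shrink : ∀ f g : V → ℝ, IsSublinear g → (∀ x, |f x - g x| ≤ ε * ‖x‖) →
      ∀ x ∈ {x | f x < 1} ∩ ball 0 R, ∃ y ∈ {x | g x < 1} ∩ ball 0 R, dist x y ≤ ε * R ^ 2 := by
    rintro f g hg hfg x ⟨hx1 : f x < 1, hx2⟩
    rw [mem_ball_zero_iff] at hx2
    have hp : 0 < 1 + ε * R := by positivity
    set θ := (1 + ε * R)⁻¹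
    have hθ0 : 0 < θ := inv_pos.2 hp
    have hθp : θ * (1 + ε * R) = 1 := inv_mul_cancel₀ hp.ne'
    have hθ1 : θ ≤ 1 := inv_le_one_of_one_le₀ (by nlinarith)
    have hgx : g x < 1 + ε * R := by nlinarith [(abs_le.1 (hfg x)).1]
    refine ⟨θ • x, ⟨?_, ?_⟩, ?_⟩
    · rw [mem_ofPred_eq, hg.smul θ hθ0.le, ← hθp]
      gcongr
    · rw [mem_ball_zero_iff, norm_smul, Real.norm_of_nonneg hθ0.le]
      nlinarith [norm_nonneg x]
    · calc dist x (θ • x) = (1 - θ) * ‖x‖ := by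
            rw [dist_eq_norm, show x - θ • x = (1 - θ) • x by module, norm_smul,
              Real.norm_of_nonneg (by linarith)]
        _ ≤ (ε * R) * R := by
            gcongr
            nlinarith [mul_nonneg hε hR]
        _ = ε * R ^ 2 := by ring
  exact hausdorffDist_le_of_mem_dist (by positivity) (shrink f g hg hfg)
    (shrink g f hf fun x => by rw [abs_sub_comm]; exact hfg x)

lemma exists_finset_forall_abs_sub_le_of_mem_net (hh : IsSublinear h) {η : ℝ} (hη : 0 < η)
    (N : Set V) (hN : N.Finite) :
    ∃ S : Finset V, ∀ g, IsSublinear g → (∀ x ∈ S, h x < 1 → g x < 1) →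
      (∀ x ∈ S, 1 < h x → 1 ≤ g x) → ∀ s ∈ N, |g s - h s| ≤ η := by
  classical
  refine ⟨hN.toFinset.image (fun s => (h s + η)⁻¹ • s) ∪
    hN.toFinset.image (fun s => (h s - η)⁻¹ • s), fun g hg hin hout s hs => ?_⟩
  have hs' : s ∈ hN.toFinset := by simpa using hs
  have hpos : 0 < h s + η := add_pos_of_nonneg_of_pos (hh.nonneg s) hη
  have hupper : g s ≤ h s + η := by
    refine hg.le_of_inv_smul hpos (hin _ (Finset.mem_union_left _
      (Finset.mem_image_of_mem _ hs')) ?_)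
    rw [hh.smul _ (by positivity), inv_mul_lt_iff₀ hpos]
    linarith
  have hlower : h s - η ≤ g s := by
    rcases le_or_gt (h s - η) 0 with hle | hlt
    · exact hle.trans (hg.nonneg s)
    · refine hg.le_of_one_le_inv_smul hlt (hout _ (Finset.mem_union_right _
        (Finset.mem_image_of_mem _ hs')) ?_)
      rw [hh.smul _ (by positivity), lt_inv_mul_iff₀ hlt]
      linarith
  exact abs_le.2 ⟨by linarith, by linarith⟩

end Normed

section FiniteDimensional

variable {V : Type*} [NormedAddCommGroup V] [NormedSpace ℝ V] [FiniteDimensional ℝ V]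
  {h : V → ℝ} {C : ℝ}

/-- The test points are the vertices of a simplex around the origin. -/
lemma exists_finset_forall_le_mul_norm (hC : ∀ x, h x ≤ C * ‖x‖) :
    ∃ (S : Finset V) (M : ℝ), 0 < M ∧ ∀ g, IsSublinear g → (∀ x ∈ S, h x < 1 → g x < 1) →
      ∀ x, g x ≤ M * ‖x‖ := by
  have hnhds : {x : V | C * ‖x‖ < 1} ∈ 𝓝 0 :=
    (isOpen_lt (by fun_prop) continuous_const).mem_nhds (by simp)
  obtain ⟨b, hb, hbs⟩ := exists_mem_interior_convexHull_affineBasis hnhds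
  obtain ⟨r, hr, hrb⟩ := Metric.mem_nhds_iff.1 (mem_interior_iff_mem_nhds.1 hb)
  refine ⟨(finite_range b).toFinset, 2 / r, by positivity, fun g hg hS => ?_⟩
  have hbg : range b ⊆ {x | g x < 1} := fun x hx => hS x (by simpa using hx)
    ((hC x).trans_lt (hbs (subset_convexHull ℝ _ hx)))
  exact hg.le_mul_norm_of_ball hr fun x hx => convexHull_min hbg hg.convex_lt_one (hrb hx)

lemma exists_finset_forall_abs_sub_le (hh : IsSublinear h) (hC₀ : 0 ≤ C)
    (hC : ∀ x, h x ≤ C * ‖x‖) {ε : ℝ} (hε : 0 < ε) :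
    ∃ S : Finset V, ∀ g, IsSublinear g → (∀ x ∈ S, h x < 1 → g x < 1) →
      (∀ x ∈ S, 1 < h x → 1 ≤ g x) → ∀ x, |g x - h x| ≤ ε * ‖x‖ := by
  classical
  obtain ⟨S₁, M, hM, hS₁⟩ := exists_finset_forall_le_mul_norm hC
  set η := ε / (1 + C + M)
  have hη : 0 < η := by positivity
  obtain ⟨N, -, hN, hcover⟩ := (isCompact_closedBall (0 : V) 1).finite_cover_balls hη
  obtain ⟨S₂, hS₂⟩ := exists_finset_forall_abs_sub_le_of_mem_net hh hη N hN
  refine ⟨S₁ ∪ S₂, fun g hg hin hout => abs_sub_le_of_unit_ball hg hh fun x hx => ?_⟩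
  have hgM := hS₁ g hg fun y hy => hin y (Finset.mem_union_left _ hy)
  have hgN := hS₂ g hg (fun y hy => hin y (Finset.mem_union_right _ hy))
    (fun y hy => hout y (Finset.mem_union_right _ hy))
  obtain ⟨s, hs, hxs⟩ : ∃ s ∈ N, x ∈ ball s η := by
    simpa using hcover (mem_closedBall_zero_iff.2 hx)
  rw [mem_ball, dist_eq_norm] at hxs
  calc |g x - h x| = |(g x - g s) + (g s - h s) + (h s - h x)| := by ring_nf
    _ ≤ |g x - g s| + |g s - h s| + |h s - h x| := abs_add_three _ _ _
    _ ≤ M * η + η + C * η := by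
        gcongr
        · exact (hg.abs_sub_le hM.le hgM x s).trans (by gcongr)
        · exact hgN s hs
        · exact (hh.abs_sub_le hC₀ hC s x).trans (by rw [norm_sub_rev]; gcongr)
    _ = ε := by
        simp only [η]
        field_simp
        ring

lemma eventually_abs_sub_le {ι : Type*} {l : Filter ι} {F : ι → V → ℝ}
    (hF : ∀ n, IsSublinear (F n)) (hh : IsSublinear h) (hC₀ : 0 ≤ C) (hC : ∀ x, h x ≤ C * ‖x‖)
    (hlim : ∀ x, Tendsto (F · x) l (𝓝 (h x))) {ε : ℝ} (hε : 0 < ε) :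
    ∀ᶠ n in l, ∀ x, |F n x - h x| ≤ ε * ‖x‖ := by
  obtain ⟨S, hS⟩ := hh.exists_finset_forall_abs_sub_le hC₀ hC hε
  have hin : ∀ᶠ n in l, ∀ x ∈ S, h x < 1 → F n x < 1 :=
    (Filter.eventually_all_finset S).2 fun x _ => eventually_imp_distrib_left.2 fun hx =>
      (hlim x).eventually_lt_const hx
  have hout : ∀ᶠ n in l, ∀ x ∈ S, 1 < h x → 1 ≤ F n x :=
    (Filter.eventually_all_finset S).2 fun x _ => eventually_imp_distrib_left.2 fun hx =>
      (hlim x).eventually_const_le hx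
  filter_upwards [hin, hout] with n hn₁ hn₂ using hS _ (hF n) hn₁ hn₂

lemma exists_subseq_tendsto {F : ℕ → V → ℝ} (hF : ∀ n, IsSublinear (F n))
    (hC : ∀ n x, F n x ≤ C * ‖x‖) :
    ∃ (φ : ℕ → ℕ) (G : V → ℝ), StrictMono φ ∧
      ∀ x, Tendsto (fun n => F (φ n) x) atTop (𝓝 (G x)) := by
  have : ProperSpace V := FiniteDimensional.proper ℝ V
  have : CompactSpace (closedBall (0 : V) 1) :=
    isCompact_iff_compactSpace.1 (isCompact_closedBall 0 1)
  obtain ⟨φ, G, hφ, hG⟩ := exists_subseq_tendsto_of_lipschitzWith (a := 0) (b := C.toNNReal)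
    (F := fun n (x : closedBall (0 : V) 1) => F n x) (K := C.toNNReal * 1)
    (fun n => ((hF n).lipschitzWith (hC n)).comp (LipschitzWith.subtype_val _)) fun n x =>
      ⟨(hF n).nonneg x, (hC n x).trans (by
        simpa using mul_le_mul (Real.le_coe_toNNReal C) (mem_closedBall_zero_iff.1 x.2)
          (norm_nonneg _) C.toNNReal.2)⟩
  have hlim : ∀ x, ∃ y, Tendsto (fun n => F (φ n) x) atTop (𝓝 y) := by
    intro x
    have hc : 0 < ‖x‖ + 1 := by positivity
    have hmem : (‖x‖ + 1)⁻¹ • x ∈ closedBall (0 : V) 1 := by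
      rw [mem_closedBall_zero_iff, norm_smul, norm_inv, Real.norm_of_nonneg hc.le,
        inv_mul_le_iff₀ hc]
      linarith
    refine ⟨(‖x‖ + 1) * G ⟨_, hmem⟩, ((hG ⟨_, hmem⟩).const_mul (‖x‖ + 1)).congr fun n => ?_⟩
    rw [(hF _).smul _ (by positivity), mul_inv_cancel_left₀ hc.ne']
  choose G hG using hlim
  exact ⟨φ, G, hφ, hG⟩

lemma exists_norm_le_mul (hh : IsSublinear h) (hcont : Continuous h)
    (hproper : ∀ x, h x = 0 → x = 0) : ∃ c, 0 ≤ c ∧ ∀ x, ‖x‖ ≤ c * h x := by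
  have : ProperSpace V := FiniteDimensional.proper ℝ V
  have hpos : ∀ x ∈ sphere (0 : V) 1, 0 < h x := fun x hx =>
    (hh.nonneg x).lt_of_ne' fun h0 =>
      ne_of_mem_sphere hx one_ne_zero (hproper x h0)
  obtain ⟨m, hm, hmin⟩ := (isCompact_sphere (0 : V) 1).exists_forall_le' hcont.continuousOn hpos
  refine ⟨m⁻¹, by positivity, fun x => ?_⟩
  rcases eq_or_ne x 0 with rfl | hx
  · simp [hh.map_zero]
  · have hx' : 0 < ‖x‖ := norm_pos_iff.2 hx
    have := hmin (‖x‖⁻¹ • x) (by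
      rw [mem_sphere_zero_iff_norm, norm_smul, norm_inv, norm_norm, inv_mul_cancel₀ hx'.ne'])
    rw [hh.smul _ (by positivity), le_inv_mul_iff₀ hx'] at this
    rwa [le_inv_mul_iff₀ hm, mul_comm]

end FiniteDimensional

end IsSublinear

/-- The gauge of `Ω` centred at the point `z`. -/
def gaugeAt {V : Type*} [AddCommGroup V] [Module ℝ V] (Ω : Set V) (z : V) : V → ℝ :=
  gauge ((z + ·) ⁻¹' Ω)

section GaugeAt

variable {V : Type*} [NormedAddCommGroup V] {Ω : Set V} {z : V}

lemma preimage_add_left_mem_nhds_zero (ho : IsOpen Ω) (hz : z ∈ Ω) : (z + ·) ⁻¹' Ω ∈ 𝓝 0 :=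
  (ho.preimage (continuous_const_add z)).mem_nhds (by simpa using hz)

variable [NormedSpace ℝ V]

lemma isSublinear_gaugeAt (ho : IsOpen Ω) (hc : Convex ℝ Ω) (hz : z ∈ Ω) :
    IsSublinear (gaugeAt Ω z) where
  nonneg := gauge_nonneg
  add_le := gauge_add_le (hc.translate_preimage_right z)
    (absorbent_nhds_zero (preimage_add_left_mem_nhds_zero ho hz))
  smul _ hc' x := gauge_smul_of_nonneg hc' x

lemma continuous_gaugeAt (ho : IsOpen Ω) (hc : Convex ℝ Ω) (hz : z ∈ Ω) :
    Continuous (gaugeAt Ω z) :=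
  continuous_gauge (hc.translate_preimage_right z) (preimage_add_left_mem_nhds_zero ho hz)

lemma gaugeAt_lt_one_iff (ho : IsOpen Ω) (hc : Convex ℝ Ω) (hz : z ∈ Ω) {x : V} :
    gaugeAt Ω z x < 1 ↔ z + x ∈ Ω :=
  Set.ext_iff.1 (setOfPred_gauge_lt_one_eq_self_of_isOpen (hc.translate_preimage_right z)
    (by simpa using hz) (ho.preimage (continuous_const_add z))) x

end GaugeAt

/-- The sum of `g` over the four unit directions `±x`, `±i x` of a complex line. Up to a factor
of `4` it is invariant under multiplication by unimodular complex numbers. -/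
def circledGauge {H : Type*} [AddCommGroup H] [Module ℂ H] (g : H → ℝ) (x : H) : ℝ :=
  g x + g (-x) + g (Complex.I • x) + g (-(Complex.I • x))

section CircledGauge

variable {H H' : Type*} [AddCommGroup H] [Module ℂ H] [AddCommGroup H'] [Module ℂ H'] {g : H → ℝ}

lemma circledGauge_comp_linearMap (g : H → ℝ) (L : H' →ₗ[ℂ] H) (x : H') :
    circledGauge (fun y => g (L y)) x = circledGauge g (L x) := by
  simp only [circledGauge, map_neg, map_smul]

lemma isSublinear_circledGauge (hg : IsSublinear g) : IsSublinear (circledGauge g) :=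
  let I : H →ₗ[ℝ] H := (LinearMap.lsmul ℂ H Complex.I).restrictScalars ℝ
  ((hg.add (hg.comp_linearMap (-LinearMap.id))).add (hg.comp_linearMap I)).add
    (hg.comp_linearMap (-I))

lemma IsSublinear.apply_real_smul_le (hg : IsSublinear g) (r : ℝ) (x : H) :
    g (r • x) ≤ |r| * (g x + g (-x)) := by
  rcases le_total 0 r with hr | hr
  · rw [hg.smul r hr, abs_of_nonneg hr]
    gcongr
    linarith [hg.nonneg (-x)]
  · rw [← neg_smul_neg, hg.smul _ (neg_nonneg.2 hr), abs_of_nonpos hr]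
    gcongr
    · linarith
    · linarith [hg.nonneg x]

lemma IsSublinear.apply_smul_le (hg : IsSublinear g) (a : ℂ) (x : H) :
    g (a • x) ≤ ‖a‖ * circledGauge g x := by
  have hdecomp : a • x = a.re • x + a.im • (Complex.I • x) := by
    rw [← Complex.coe_smul, ← Complex.coe_smul, smul_smul, ← add_smul, Complex.re_add_im]
  calc g (a • x) ≤ g (a.re • x) + g (a.im • (Complex.I • x)) := hdecomp ▸ hg.add_le _ _
    _ ≤ |a.re| * (g x + g (-x)) + |a.im| * (g (Complex.I • x) + g (-(Complex.I • x))) :=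
        add_le_add (hg.apply_real_smul_le _ _) (hg.apply_real_smul_le _ _)
    _ ≤ ‖a‖ * (g x + g (-x)) + ‖a‖ * (g (Complex.I • x) + g (-(Complex.I • x))) := by
        gcongr
        · exact add_nonneg (hg.nonneg _) (hg.nonneg _)
        · exact Complex.abs_re_le_norm a
        · exact add_nonneg (hg.nonneg _) (hg.nonneg _)
        · exact Complex.abs_im_le_norm a
    _ = ‖a‖ * circledGauge g x := by
        simp only [circledGauge]
        ring

lemma IsSublinear.noComplexLine_lt_one {X : Type*} [NormedAddCommGroup X] [NormedSpace ℂ X]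
    {G : X → ℝ} (hG : IsSublinear G) (hproper : ∀ x, circledGauge G x = 0 → x = 0) :
    NoComplexLine {x | G x < 1} := by
  intro a b hb hline
  refine hb (hproper b (le_antisymm ?_ ((isSublinear_circledGauge hG).nonneg b)))
  have hbound : ∀ c : ℂ, G (c • b) ≤ 1 + G (-a) := fun c =>
    calc G (c • b) = G (a + c • b + -a) := by congr 1; abel
      _ ≤ G (a + c • b) + G (-a) := hG.add_le _ _
      _ ≤ 1 + G (-a) := by gcongr; exact (hline c).le
  have hscaled : ∀ t : ℝ, 0 ≤ t → t * circledGauge G b ≤ 4 * (1 + G (-a)) := by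
    intro t ht
    rw [← (isSublinear_circledGauge hG).smul t ht, ← Complex.coe_smul, circledGauge]
    have h1 := hbound t
    have h2 := hbound (-t)
    have h3 := hbound (Complex.I * t)
    have h4 := hbound (-(Complex.I * t))
    simp only [neg_smul, mul_smul] at h2 h3 h4
    linarith
  by_contra! hpos
  have := hscaled (4 * (1 + G (-a)) / circledGauge G b + 1)
    (by have := hG.nonneg (-a); positivity)
  rw [add_mul, div_mul_cancel₀ _ hpos.ne'] at this
  linarith

end CircledGauge

section Normed

variable {H : Type*} [NormedAddCommGroup H] [NormedSpace ℂ H] {Ω : Set H} {g h : H → ℝ} {z : H}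

lemma circledGauge_le_add {ε : ℝ} (hgh : ∀ x, |g x - h x| ≤ ε * ‖x‖) (x : H) :
    circledGauge h x ≤ circledGauge g x + 4 * ε * ‖x‖ := by
  have key : ∀ y, ‖y‖ = ‖x‖ → h y ≤ g y + ε * ‖x‖ := fun y hy =>
    hy ▸ by linarith [(abs_le.1 (hgh y)).1]
  have h1 := key x rfl
  have h2 := key (-x) (norm_neg x)
  have h3 := key (Complex.I • x) (by simp [norm_smul])
  have h4 := key (-(Complex.I • x)) (by simp [norm_smul])
  rw [circledGauge, circledGauge]
  linarith

lemma continuous_circledGauge (hg : Continuous g) : Continuous (circledGauge g) := by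
  unfold circledGauge
  fun_prop

lemma eq_zero_of_circledGauge_gaugeAt_eq_zero (ho : IsOpen Ω) (hc : Convex ℝ Ω)
    (hl : NoComplexLine Ω) (hz : z ∈ Ω) {x : H} (hx : circledGauge (gaugeAt Ω z) x = 0) :
    x = 0 := by
  by_contra hne
  refine hl z x hne fun a => (gaugeAt_lt_one_iff ho hc hz).1 ?_
  have := (isSublinear_gaugeAt ho hc hz).apply_smul_le a x
  rw [hx, mul_zero] at this
  exact this.trans_lt one_pos

end Normed

/-- The gauge of the product of half planes `{Re a < 1} × {Re b < 1}`. -/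
def halfPlaneGauge (x : ℂ × ℂ) : ℝ := max 0 (max x.1.re x.2.re)

lemma halfPlaneGauge_lt_one_iff {x : ℂ × ℂ} : halfPlaneGauge x < 1 ↔ x.1.re < 1 ∧ x.2.re < 1 := by
  simp [halfPlaneGauge]

lemma one_lt_halfPlaneGauge_iff {x : ℂ × ℂ} : 1 < halfPlaneGauge x ↔ 1 < x.1.re ∨ 1 < x.2.re := by
  simp [halfPlaneGauge, not_lt_of_gt]

lemma isSublinear_halfPlaneGauge : IsSublinear halfPlaneGauge where
  nonneg _ := le_max_left _ _
  add_le x y := by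
    refine max_le (add_nonneg (le_max_left _ _) (le_max_left _ _)) (max_le ?_ ?_)
    · exact add_le_add ((le_max_left _ _).trans (le_max_right _ _))
        ((le_max_left _ _).trans (le_max_right _ _))
    · exact add_le_add ((le_max_right _ _).trans (le_max_right _ _))
        ((le_max_right _ _).trans (le_max_right _ _))
  smul c hc x := by simp [halfPlaneGauge, mul_max_of_nonneg _ _ hc]

lemma halfPlaneGauge_le_norm (x : ℂ × ℂ) : halfPlaneGauge x ≤ ‖x‖ :=
  max_le (norm_nonneg x) (max_le ((Complex.re_le_norm _).trans (norm_fst_le x))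
    ((Complex.re_le_norm _).trans (norm_snd_le x)))

lemma norm_le_circledGauge_halfPlaneGauge (x : ℂ × ℂ) :
    ‖x‖ ≤ circledGauge halfPlaneGauge x := by
  have hnonneg := isSublinear_halfPlaneGauge.nonneg
  have hfst : ∀ y : ℂ × ℂ, |y.1.re| ≤ halfPlaneGauge y + halfPlaneGauge (-y) := fun y => by
    have h₁ : y.1.re ≤ halfPlaneGauge y := (le_max_left _ _).trans (le_max_right _ _)
    have h₂ : -y.1.re ≤ halfPlaneGauge (-y) := (le_max_left _ _).trans (le_max_right _ _)
    exact abs_le.2 ⟨by linarith [hnonneg y], by linarith [hnonneg (-y)]⟩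
  have hsnd : ∀ y : ℂ × ℂ, |y.2.re| ≤ halfPlaneGauge y + halfPlaneGauge (-y) := fun y => by
    have h₁ : y.2.re ≤ halfPlaneGauge y := (le_max_right _ _).trans (le_max_right _ _)
    have h₂ : -y.2.re ≤ halfPlaneGauge (-y) := (le_max_right _ _).trans (le_max_right _ _)
    exact abs_le.2 ⟨by linarith [hnonneg y], by linarith [hnonneg (-y)]⟩
  have hsplit : circledGauge halfPlaneGauge x = (halfPlaneGauge x + halfPlaneGauge (-x)) +
      (halfPlaneGauge (Complex.I • x) + halfPlaneGauge (-(Complex.I • x))) := by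
    rw [circledGauge]
    ring
  rw [hsplit, Prod.norm_def]
  refine max_le ((Complex.norm_le_abs_re_add_abs_im _).trans (add_le_add (hfst x) ?_))
    ((Complex.norm_le_abs_re_add_abs_im _).trans (add_le_add (hsnd x) ?_))
  · simpa using hfst (Complex.I • x)
  · simpa using hsnd (Complex.I • x)

/-- Near the boundary, `Ω` has slices by complex 2-planes which look like a product of two half
planes: the slice, in suitable affine coordinates `x ↦ z + L x` centred at a point `z ∈ Ω` outside
any given compact set, agrees with `{Re a < 1} × {Re b < 1}` on any given finite set, up to the
boundary of the latter. -/
def HasBidiskSections {H : Type*} [NormedAddCommGroup H] [NormedSpace ℂ H] (Ω : Set H) : Prop :=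
  ∀ (S : Finset (ℂ × ℂ)) (K : Set H), IsCompact K → K ⊆ Ω →
    ∃ z ∈ Ω \ K, ∃ L : ℂ × ℂ →ₗ[ℂ] H, ∀ x ∈ S,
      (halfPlaneGauge x < 1 → z + L x ∈ Ω) ∧ (1 < halfPlaneGauge x → z + L x ∉ Ω)

lemma HasBidiskSections.exists_gaugeAt_approx {H : Type*} [NormedAddCommGroup H] [NormedSpace ℂ H]
    {Ω K : Set H} (hs : HasBidiskSections Ω) (ho : IsOpen Ω) (hc : Convex ℝ Ω) (hK : IsCompact K)
    (hKΩ : K ⊆ Ω) {ε : ℝ} (hε : 0 < ε) :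
    ∃ z ∈ Ω \ K, ∃ L : ℂ × ℂ →ₗ[ℂ] H,
      ∀ x, |gaugeAt Ω z (L x) - halfPlaneGauge x| ≤ ε * ‖x‖ := by
  obtain ⟨S, hS⟩ := isSublinear_halfPlaneGauge.exists_finset_forall_abs_sub_le zero_le_one
    (fun x => by simpa using halfPlaneGauge_le_norm x) hε
  obtain ⟨z, hz, L, hL⟩ := hs S K hK hKΩ
  have hlt : ∀ x, gaugeAt Ω z (L x) < 1 ↔ z + L x ∈ Ω := fun x => gaugeAt_lt_one_iff ho hc hz.1
  exact ⟨z, hz, L, hS _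
    ((isSublinear_gaugeAt ho hc hz.1).comp_linearMap (L.restrictScalars ℝ))
    (fun x hx h => (hlt x).2 ((hL x hx).1 h))
    (fun x hx h => not_lt.1 (mt (hlt x).1 ((hL x hx).2 h)))⟩

lemma exists_compact_exhaustion {X : Type*} [TopologicalSpace X] [LocallyCompactSpace X]
    [SecondCountableTopology X] {Ω : Set X} (ho : IsOpen Ω) :
    ∃ K : ℕ → Set X, (∀ n, IsCompact (K n)) ∧ (∀ n, K n ⊆ Ω) ∧
      ∀ L, IsCompact L → L ⊆ Ω → ∃ N, ∀ n ≥ N, L ⊆ K n := by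
  have : LocallyCompactSpace Ω := ho.locallyCompactSpace
  let K := CompactExhaustion.choice Ω
  refine ⟨fun n => (↑) '' K n, fun n => (K.isCompact n).image continuous_subtype_val,
    fun n => Subtype.coe_image_subset Ω _, fun L hL hLΩ => ?_⟩
  have hL' : IsCompact ((↑) ⁻¹' L : Set Ω) :=
    Topology.IsInducing.subtypeVal.isCompact_preimage' hL (by simpa using hLΩ)
  obtain ⟨N, hN⟩ := K.exists_superset_of_isCompact hL'
  exact ⟨N, fun n hn x hx => ⟨⟨x, hLΩ hx⟩, K.subset hn (hN hx), rfl⟩⟩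

lemma HasBidiskSections.exists_seq {H : Type*} [NormedAddCommGroup H] [NormedSpace ℂ H]
    [FiniteDimensional ℂ H] {Ω : Set H} (hs : HasBidiskSections Ω) (ho : IsOpen Ω)
    (hc : Convex ℝ Ω) :
    ∃ (z : ℕ → H) (L : ℕ → ℂ × ℂ →ₗ[ℂ] H), (∀ n, z n ∈ Ω) ∧ CompactlyDivergent Ω z ∧
      ∀ n x, |gaugeAt Ω (z n) (L n x) - halfPlaneGauge x| ≤ 1 / (n + 8) * ‖x‖ := by
  have : ProperSpace H := FiniteDimensional.proper ℂ H
  obtain ⟨K, hK, hKΩ, hexh⟩ := exists_compact_exhaustion ho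
  choose z hz L hL using fun n : ℕ =>
    hs.exists_gaugeAt_approx ho hc (hK n) (hKΩ n) (ε := 1 / (n + 8)) (by positivity)
  refine ⟨z, L, fun n => (hz n).1, fun L' hL' hLΩ => ?_, hL⟩
  obtain ⟨N, hN⟩ := hexh L' hL' hLΩ
  exact ⟨N, fun n hn hzn => (hz n).2 (hN n hn hzn)⟩

section Auerbach

lemma exists_basis_sum_extend {K V ι : Type*} [Field K] [AddCommGroup V] [Module K V]
    [FiniteDimensional K V] [Fintype ι] {v : ι → V} {S : Set V} {k : ℕ}
    (hv : LinearIndependent K v) (hk : Module.finrank K V = Fintype.card ι + k)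
    (hS : ∀ x, ∃ c : K, c ≠ 0 ∧ c • x ∈ S) :
    ∃ e : Module.Basis (ι ⊕ Fin k) K V, (∀ i, e (.inl i) = v i) ∧ ∀ j, e (.inr j) ∈ S := by
  let e₀ := Module.Basis.sumExtend hv
  have : Finite (ι ⊕ Module.Basis.sumExtendIndex hv) := Module.Finite.finite_basis e₀
  have : Finite (Module.Basis.sumExtendIndex hv) := Finite.sum_right ι
  have := Fintype.ofFinite (Module.Basis.sumExtendIndex hv)
  have hcard : Fintype.card (Module.Basis.sumExtendIndex hv) = k := by
    rw [Module.finrank_eq_card_basis e₀, Fintype.card_sum] at hk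
    omega
  let e₁ := e₀.reindex (Equiv.sumCongr (Equiv.refl ι) (Fintype.equivFinOfCardEq hcard))
  choose c hc hcS using fun j : Fin k => hS (e₁ (.inr j))
  have hunit : ∀ i, IsUnit ((Sum.elim (fun _ => 1) c : ι ⊕ Fin k → K) i) := by
    rintro (_ | _)
    · simp
    · simp [hc]
  have hinl : ∀ i, e₀ (.inl i) = v i := fun i => by
    simp only [Module.Basis.sumExtend, Equiv.trans_def, Module.Basis.coe_reindex,
      Module.Basis.coe_extend, Function.comp_apply, e₀]
    rfl
  refine ⟨e₁.isUnitSMul hunit, fun i => ?_, fun j => ?_⟩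
  · simp [Module.Basis.isUnitSMul_apply, e₁, hinl]
  · rw [Module.Basis.isUnitSMul_apply]
    exact hcS j

variable {𝕜 X ι : Type*} [NontriviallyNormedField 𝕜] [CompleteSpace 𝕜] [NormedAddCommGroup X]
  [NormedSpace 𝕜 X] {v : ι → X} {S : Set X} {k : ℕ}

lemma continuous_basis_det [Fintype ι] [DecidableEq ι]
    (e : Module.Basis ι 𝕜 X) : Continuous fun B : ι → X => e.det B := by
  have : FiniteDimensional 𝕜 X := e.finiteDimensional_of_finite
  change Continuous fun B : ι → X => (e.toMatrix B).det
  refine Continuous.matrix_det (continuous_matrix fun i j => ?_)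
  exact (LinearMap.continuous_of_finiteDimensional (e.coord i)).comp (continuous_apply j)

/-- Auerbach's argument: maximize the determinant over the vectors of `S`. -/
lemma exists_auerbach_basis [FiniteDimensional 𝕜 X] [Fintype ι]
    (hv : LinearIndependent 𝕜 v) (hk : Module.finrank 𝕜 X = Fintype.card ι + k)
    (hS : ∀ x, ∃ c : 𝕜, c ≠ 0 ∧ c • x ∈ S) (hScomp : IsCompact S) :
    ∃ b : Module.Basis (ι ⊕ Fin k) 𝕜 X, (∀ i, b (.inl i) = v i) ∧ (∀ j, b (.inr j) ∈ S) ∧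
      ∀ x ∈ S, ∀ j, ‖b.repr x (.inr j)‖ ≤ 1 := by
  classical
  obtain ⟨e, hev, heS⟩ := exists_basis_sum_extend hv hk hS
  let P : Set (ι ⊕ Fin k → X) := Set.pi univ (Sum.elim (fun i => {v i}) fun _ => S)
  have hP : IsCompact P := isCompact_univ_pi (by
    rintro (_ | _)
    · exact isCompact_singleton
    · exact hScomp)
  have heP : (e : ι ⊕ Fin k → X) ∈ P := by
    rintro (i | j) -
    · exact hev i
    · exact heS j
  obtain ⟨B, hBP, hBmax⟩ := hP.exists_isMaxOn ⟨_, heP⟩ (continuous_basis_det e).norm.continuousOn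
  have hdet : 0 < ‖e.det B‖ := by
    have : ‖e.det e‖ ≤ ‖e.det B‖ := hBmax heP
    rw [e.det_self, norm_one] at this
    exact one_pos.trans_le this
  obtain ⟨hli, hsp⟩ := e.is_basis_iff_det.2 (isUnit_iff_ne_zero.2 (norm_pos_iff.1 hdet))
  let b := Module.Basis.mk hli hsp.ge
  have hbB : ∀ i, b i = B i := fun i => by simp [b]
  refine ⟨b, fun i => (hbB _).trans (hBP (.inl i) trivial), fun j => ?_, fun x hx j => ?_⟩
  · rw [hbB]
    exact hBP (.inr j) trivial
  · have hcramer : e.det B * b.repr x (.inr j) = e.det (Function.update B (.inr j) x) :=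
      LinearMap.congr_fun (e.det_smul_mk_coord_eq_det_update hli hsp.ge (.inr j)) x
    have hupdate : Function.update B (.inr j) x ∈ P := by
      intro i _
      rcases eq_or_ne i (.inr j) with rfl | hij
      · simpa using hx
      · rw [Function.update_of_ne hij]
        exact hBP i trivial
    have hle : ‖e.det (Function.update B (.inr j) x)‖ ≤ ‖e.det B‖ := hBmax hupdate
    rw [← hcramer, norm_mul] at hle
    exact le_of_mul_le_mul_left (by linarith) hdet

lemma exists_auerbach_extension {F : Type*} [AddCommGroup F] [Module 𝕜 F]
    [FiniteDimensional 𝕜 X] [FiniteDimensional 𝕜 F] {L : F →ₗ[𝕜] X}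
    (hL : Function.Injective L) (hk : Module.finrank 𝕜 X = Module.finrank 𝕜 F + k)
    (hS : ∀ x, ∃ c : 𝕜, c ≠ 0 ∧ c • x ∈ S) (hScomp : IsCompact S) :
    ∃ (w : Fin k → X) (Φ : (F × (Fin k → 𝕜)) ≃ₗ[𝕜] X),
      (∀ y, Φ y = L y.1 + ∑ j, y.2 j • w j) ∧ (∀ j, w j ∈ S) ∧
      ∀ y, Φ y ∈ S → ‖y.2‖ ≤ 1 := by
  let f := Module.finBasis 𝕜 F
  obtain ⟨b, hbL, hbS, hb⟩ := exists_auerbach_basis (S := S) (k := k)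
    (f.linearIndependent.map' L (LinearMap.ker_eq_bot.2 hL)) (by simpa using hk) hS hScomp
  let e := f.prod (Pi.basisFun 𝕜 (Fin k))
  let Φ := e.equiv b (Equiv.refl _)
  refine ⟨fun j => b (.inr j), Φ, fun y => ?_, hbS, fun y hy => ?_⟩
  · have hΦ : (Φ : F × (Fin k → 𝕜) →ₗ[𝕜] X) =
        L.coprod (Fintype.linearCombination 𝕜 fun j => b (.inr j)) := by
      refine e.ext fun i => ?_
      rw [LinearEquiv.coe_coe, show Φ (e i) = b i from e.equiv_apply i b (Equiv.refl _)]
      rcases i with i | j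
      · simp [hbL, e]
      · simp [e]
    simpa [Fintype.linearCombination_apply] using LinearMap.congr_fun hΦ y
  · refine (pi_norm_le_iff_of_nonneg zero_le_one).2 fun j => ?_
    have hrepr : b.repr (Φ y) (.inr j) = y.2 j := by
      simp [Φ, e, Module.Basis.equiv]
    exact hrepr ▸ hb _ hy j

end Auerbach

section AdaptedEquiv

variable {H F : Type*} [NormedAddCommGroup H] [NormedSpace ℂ H] [NormedAddCommGroup F]
  [NormedSpace ℂ F] {g : H → ℝ} {k : ℕ} {w : Fin k → H}

lemma IsSublinear.apply_sum_smul_le (hg : IsSublinear g) (hw : ∀ j, circledGauge g (w j) ≤ 1)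
    (c : Fin k → ℂ) : g (∑ j, c j • w j) ≤ k * ‖c‖ := by
  calc g (∑ j, c j • w j) ≤ ∑ j, g (c j • w j) := hg.sum_le _ _
    _ ≤ ∑ _j : Fin k, ‖c‖ := by
        refine Finset.sum_le_sum fun j _ => (hg.apply_smul_le _ _).trans ?_
        calc ‖c j‖ * circledGauge g (w j) ≤ ‖c‖ * 1 := by
              gcongr
              · exact (isSublinear_circledGauge hg).nonneg _
              · exact norm_le_pi_norm c j
              · exact hw j
          _ = ‖c‖ := mul_one _
    _ = k * ‖c‖ := by simp

lemma IsSublinear.circledGauge_sum_smul_le (hg : IsSublinear g)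
    (hw : ∀ j, circledGauge g (w j) ≤ 1) (c : Fin k → ℂ) :
    circledGauge g (∑ j, c j • w j) ≤ 4 * k * ‖c‖ := by
  have key : ∀ a : ℂ, ‖a‖ = 1 → g (a • ∑ j, c j • w j) ≤ k * ‖c‖ := fun a ha => by
    simpa only [Finset.smul_sum, ← smul_assoc, Pi.smul_apply, norm_smul, ha, one_mul] using
      hg.apply_sum_smul_le hw (a • c)
  have h1 := key 1 (by simp)
  have h2 := key (-1) (by simp)
  have h3 := key Complex.I (by simp)
  have h4 := key (-Complex.I) (by simp)
  simp only [neg_smul, one_smul] at h1 h2 h4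
  rw [circledGauge]
  linarith

lemma isCompact_circledGauge_le_one [FiniteDimensional ℂ H] (hg : IsSublinear g)
    (hcont : Continuous g) (hproper : ∀ x, circledGauge g x = 0 → x = 0) :
    IsCompact {x | circledGauge g x ≤ 1} := by
  have : ProperSpace H := FiniteDimensional.proper ℂ H
  obtain ⟨c, hc, hnorm⟩ := (isSublinear_circledGauge hg).exists_norm_le_mul
    (continuous_circledGauge hcont) hproper
  refine (isCompact_closedBall (0 : H) c).of_isClosed_subset
    (isClosed_le (continuous_circledGauge hcont) continuous_const) fun x hx => ?_
  rw [mem_closedBall_zero_iff]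
  exact (hnorm x).trans (mul_le_of_le_one_right hc hx)

lemma exists_smul_circledGauge_le_one (hg : IsSublinear g) (x : H) :
    ∃ c : ℂ, c ≠ 0 ∧ c • x ∈ {x | circledGauge g x ≤ 1} := by
  have hpos : 0 < circledGauge g x + 1 :=
    add_pos_of_nonneg_of_pos ((isSublinear_circledGauge hg).nonneg x) one_pos
  refine ⟨((circledGauge g x + 1)⁻¹ : ℝ), by exact_mod_cast (inv_pos.2 hpos).ne', ?_⟩
  rw [mem_ofPred_eq, Complex.coe_smul, (isSublinear_circledGauge hg).smul _ (by positivity),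
    inv_mul_le_iff₀ hpos]
  linarith

lemma norm_snd_le_circledGauge (hg : IsSublinear g) {Y : Type*} [NormedAddCommGroup Y]
    [NormedSpace ℂ Y] {Φ : F × Y →ₗ[ℂ] H} (hΦ : ∀ y, circledGauge g (Φ y) ≤ 1 → ‖y.2‖ ≤ 1)
    (y : F × Y) : ‖y.2‖ ≤ circledGauge g (Φ y) := by
  refine le_of_forall_pos_le_add fun ε hε => ?_
  have hpos : 0 < circledGauge g (Φ y) + ε :=
    add_pos_of_nonneg_of_pos ((isSublinear_circledGauge hg).nonneg _) hε
  have h := hΦ ((circledGauge g (Φ y) + ε)⁻¹ • y) (by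
    rw [LinearMap.map_smul_of_tower, (isSublinear_circledGauge hg).smul _ (by positivity),
      inv_mul_le_iff₀ hpos]
    linarith)
  rwa [Prod.smul_snd, norm_smul, norm_inv, Real.norm_of_nonneg hpos.le, inv_mul_le_iff₀ hpos,
    mul_one] at h

/-- The constant depends on the convex set with gauge `g` only through `M`: this is what makes
the rescaled domains precompact. -/
lemma IsSublinear.exists_adapted_equiv [FiniteDimensional ℂ H] [FiniteDimensional ℂ F]
    (hg : IsSublinear g) (hcont : Continuous g) (hproper : ∀ x, circledGauge g x = 0 → x = 0)
    (hk : Module.finrank ℂ H = Module.finrank ℂ F + k) {L : F →ₗ[ℂ] H} {M : ℝ} (hM : 0 ≤ M)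
    (hupper : ∀ p, g (L p) ≤ M * ‖p‖) (hlower : ∀ p, ‖p‖ ≤ M * circledGauge g (L p)) :
    ∃ Φ : (F × (Fin k → ℂ)) ≃ₗ[ℂ] H, (∀ p, Φ (p, 0) = L p) ∧
      (∀ y, g (Φ y) ≤ (M + 1) * (1 + 4 * k) * ‖y‖) ∧
      ∀ y, ‖y‖ ≤ (M + 1) * (1 + 4 * k) * circledGauge g (Φ y) := by
  have hL : Function.Injective L := (injective_iff_map_eq_zero L).2 fun p hp => by
    simpa [hp, (isSublinear_circledGauge hg).map_zero] using hlower p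
  obtain ⟨w, Φ, hΦ, hwS, hΦS⟩ := exists_auerbach_extension hL hk
    (exists_smul_circledGauge_le_one hg) (isCompact_circledGauge_le_one hg hcont hproper)
  refine ⟨Φ, fun p => by simp [hΦ], fun y => ?_, fun y => ?_⟩
  · calc g (Φ y) ≤ g (L y.1) + g (∑ j, y.2 j • w j) := hΦ y ▸ hg.add_le _ _
      _ ≤ M * ‖y‖ + k * ‖y‖ := by
          gcongr
          · exact (hupper _).trans (by gcongr; exact norm_fst_le y)
          · exact (hg.apply_sum_smul_le hwS _).trans (by gcongr; exact norm_snd_le y)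
      _ ≤ (M + 1) * (1 + 4 * k) * ‖y‖ := by
          rw [← add_mul]
          gcongr
          nlinarith [mul_nonneg hM k.cast_nonneg]
  · set t := circledGauge g (Φ y)
    have ht : 0 ≤ t := (isSublinear_circledGauge hg).nonneg _
    have hsnd : ‖y.2‖ ≤ t := norm_snd_le_circledGauge hg (Φ := Φ.toLinearMap) hΦS y
    have hfst : ‖y.1‖ ≤ M * (t + 4 * k * t) := by
      refine (hlower _).trans (mul_le_mul_of_nonneg_left ?_ hM)
      calc circledGauge g (L y.1) = circledGauge g (Φ y + ∑ j, (-y.2) j • w j) := by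
            simp [hΦ]
        _ ≤ t + 4 * k * ‖-y.2‖ := ((isSublinear_circledGauge hg).add_le _ _).trans
            (by gcongr; exact hg.circledGauge_sum_smul_le hwS _)
        _ ≤ t + 4 * k * t := by rw [norm_neg]; gcongr
    have hkt : 0 ≤ k * t := by positivity
    rw [Prod.norm_def]
    refine max_le ?_ ?_ <;> nlinarith

end AdaptedEquiv

section AffineLimit

variable {H : Type*} [NormedAddCommGroup H] [NormedSpace ℂ H] {Ω : Set H}

lemma IsSublinear.locHausConv {X : Type*} [NormedAddCommGroup X] [NormedSpace ℂ X]
    [FiniteDimensional ℂ X] {F : ℕ → X → ℝ} {G : X → ℝ} {C : ℝ} (hF : ∀ n, IsSublinear (F n))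
    (hC₀ : 0 ≤ C) (hC : ∀ n x, F n x ≤ C * ‖x‖)
    (hlim : ∀ x, Tendsto (F · x) atTop (𝓝 (G x))) :
    LocHausConv (fun n => {x | F n x < 1}) {x | G x < 1} := by
  have hG : IsSublinear G := .of_tendsto hF hlim
  refine ⟨1, one_pos, fun R hR => ?_⟩
  rw [Metric.tendsto_nhds]
  intro δ hδ
  filter_upwards [eventually_abs_sub_le hF hG hC₀
    (fun x => le_of_tendsto' (hlim x) fun n => hC n x) hlim
    (show 0 < δ / 2 / R ^ 2 by positivity)] with n hn
  rw [Real.dist_0_eq_abs, abs_of_nonneg hausdorffDist_nonneg]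
  calc _ ≤ δ / 2 / R ^ 2 * R ^ 2 := (hF n).hausdorffDist_le hG (by positivity) (by linarith) hn
    _ < δ := by
      rw [div_mul_cancel₀ _ (by positivity)]
      linarith

/-- The affine automorphism of `H` taking `Ω` to the unit sublevel set of
`x ↦ gaugeAt Ω z (Φ x)` and `z` to the origin. -/
def rescaling (z : H) (Φ : H ≃ₗ[ℂ] H) : H ≃ᵃ[ℂ] H :=
  (AffineEquiv.constVAdd ℂ H (-z)).trans Φ.symm.toAffineEquiv

lemma rescaling_self (z : H) (Φ : H ≃ₗ[ℂ] H) : rescaling z Φ z = 0 := by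
  simp [rescaling]

lemma rescaling_image (ho : IsOpen Ω) (hc : Convex ℝ Ω) {z : H} (hz : z ∈ Ω) (Φ : H ≃ₗ[ℂ] H) :
    rescaling z Φ '' Ω = {x | gaugeAt Ω z (Φ x) < 1} := by
  ext x
  rw [mem_ofPred_eq, gaugeAt_lt_one_iff ho hc hz]
  refine ⟨?_, fun hx => ⟨z + Φ x, hx, by simp [rescaling]⟩⟩
  rintro ⟨y, hy, rfl⟩
  simpa [rescaling] using hy

lemma bounds_of_abs_sub_halfPlaneGauge_le {g : H → ℝ} {L : ℂ × ℂ →ₗ[ℂ] H}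
    (h : ∀ x, |g (L x) - halfPlaneGauge x| ≤ 1 / 8 * ‖x‖) (x : ℂ × ℂ) :
    g (L x) ≤ 2 * ‖x‖ ∧ ‖x‖ ≤ 2 * circledGauge g (L x) := by
  have hlower := (norm_le_circledGauge_halfPlaneGauge x).trans (circledGauge_le_add h x)
  rw [circledGauge_comp_linearMap] at hlower
  constructor <;> linarith [(abs_le.1 (h x)).2, halfPlaneGauge_le_norm x, norm_nonneg x]

variable [FiniteDimensional ℂ H]

lemma exists_isAffineLimit_of_gaugeAt_bounds (ho : IsOpen Ω) (hc : Convex ℝ Ω) {z : ℕ → H}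
    (hz : ∀ n, z n ∈ Ω) (hdiv : CompactlyDivergent Ω z) {Φ : ℕ → H ≃ₗ[ℂ] H} {C : ℝ} (hC : 0 ≤ C)
    (hupper : ∀ n x, gaugeAt Ω (z n) (Φ n x) ≤ C * ‖x‖)
    (hlower : ∀ n x, ‖x‖ ≤ C * circledGauge (gaugeAt Ω (z n)) (Φ n x)) :
    ∃ (φ : ℕ → ℕ) (G : H → ℝ), StrictMono φ ∧
      (∀ x, Tendsto (fun n => gaugeAt Ω (z (φ n)) (Φ (φ n) x)) atTop (𝓝 (G x))) ∧
      IsAffineLimit Ω {x | G x < 1} := by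
  let F : ℕ → H → ℝ := fun n x => gaugeAt Ω (z n) (Φ n x)
  have hF : ∀ n, IsSublinear (F n) := fun n =>
    (isSublinear_gaugeAt ho hc (hz n)).comp_linearMap ((Φ n).toLinearMap.restrictScalars ℝ)
  obtain ⟨φ, G, hφ, hlim⟩ := IsSublinear.exists_subseq_tendsto hF hupper
  have hG : IsSublinear G := .of_tendsto (fun n => hF (φ n)) hlim
  have hGC : ∀ x, G x ≤ C * ‖x‖ := fun x => le_of_tendsto' (hlim x) fun n => hupper _ x
  have hproper : ∀ x, circledGauge G x = 0 → x = 0 := fun x hx => by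
    have hcirc : Tendsto (fun n => circledGauge (F (φ n)) x) atTop (𝓝 (circledGauge G x)) :=
      (((hlim _).add (hlim _)).add (hlim _)).add (hlim _)
    have := ge_of_tendsto' (hcirc.const_mul C) fun n => by
      exact (hlower (φ n) x).trans_eq (congrArg (C * ·)
        (circledGauge_comp_linearMap _ (Φ (φ n)).toLinearMap x).symm)
    simpa [hx] using this
  refine ⟨φ, G, hφ, hlim, ⟨⟨?_, hG.convex_lt_one, 0, by simp [hG.map_zero]⟩,
    hG.noComplexLine_lt_one hproper⟩, z ∘ φ, 0, fun n => rescaling (z (φ n)) (Φ (φ n)),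
    fun n => hz _, fun K hK hKΩ => ?_, by simp [hG.map_zero], ?_, ?_⟩
  · exact isOpen_lt (hG.lipschitzWith hGC).continuous continuous_const
  · obtain ⟨N, hN⟩ := hdiv K hK hKΩ
    exact ⟨N, fun n hn => hN _ (hn.trans (hφ.id_le n))⟩
  · simpa only [rescaling_image ho hc (hz _)] using
      IsSublinear.locHausConv (fun n => hF (φ n)) hC (fun n => hupper (φ n)) hlim
  · simp [rescaling_self]

lemma exists_bounds_comp_linearEquiv {Y : Type*} [NormedAddCommGroup Y] [NormedSpace ℂ Y]
    {g : ℕ → H → ℝ} {Φ : ℕ → Y ≃ₗ[ℂ] H} {C : ℝ} (hC : 0 ≤ C) (hg : ∀ n x, 0 ≤ g n x)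
    (hupper : ∀ n y, g n (Φ n y) ≤ C * ‖y‖)
    (hlower : ∀ n y, ‖y‖ ≤ C * circledGauge (g n) (Φ n y)) (Ψ : H ≃ₗ[ℂ] Y) :
    ∃ C', 0 ≤ C' ∧ (∀ n x, g n (Φ n (Ψ x)) ≤ C' * ‖x‖) ∧
      ∀ n x, ‖x‖ ≤ C' * circledGauge (g n) (Φ n (Ψ x)) := by
  have : FiniteDimensional ℂ Y := Ψ.finiteDimensional
  let Ψc := Ψ.toContinuousLinearEquiv
  have hnorm : ∀ x, ‖Ψ x‖ ≤ ‖(Ψc : H →L[ℂ] Y)‖ * ‖x‖ := (Ψc : H →L[ℂ] Y).le_opNorm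
  have hnorm_symm : ∀ x, ‖x‖ ≤ ‖(Ψc.symm : Y →L[ℂ] H)‖ * ‖Ψ x‖ := fun x => by
    simpa [Ψc] using (Ψc.symm : Y →L[ℂ] H).le_opNorm (Ψ x)
  refine ⟨C * (‖(Ψc : H →L[ℂ] Y)‖ + ‖(Ψc.symm : Y →L[ℂ] H)‖), by positivity,
    fun n x => (hupper n _).trans ?_, fun n x => ?_⟩
  · rw [mul_assoc]
    gcongr
    exact (hnorm x).trans (by gcongr; exact le_add_of_nonneg_right (norm_nonneg _))
  · have hcirc : 0 ≤ circledGauge (g n) (Φ n (Ψ x)) :=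
      add_nonneg (add_nonneg (add_nonneg (hg _ _) (hg _ _)) (hg _ _)) (hg _ _)
    calc ‖x‖ ≤ ‖(Ψc.symm : Y →L[ℂ] H)‖ * (C * circledGauge (g n) (Φ n (Ψ x))) :=
          (hnorm_symm x).trans (by gcongr; exact hlower n _)
      _ ≤ (‖(Ψc : H →L[ℂ] Y)‖ + ‖(Ψc.symm : Y →L[ℂ] H)‖) *
            (C * circledGauge (g n) (Φ n (Ψ x))) := by
          gcongr
          exact le_add_of_nonneg_left (norm_nonneg _)
      _ = _ := by ring

lemma HasBidiskSections.exists_adapted_seq (hs : HasBidiskSections Ω) (hΩ : InX Ω) :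
    ∃ (z : ℕ → H) (Φ : ℕ → H ≃ₗ[ℂ] H) (L : ℂ × ℂ →ₗ[ℂ] H) (C : ℝ), (∀ n, z n ∈ Ω) ∧
      CompactlyDivergent Ω z ∧ Function.Injective L ∧ 0 ≤ C ∧
      (∀ n x, gaugeAt Ω (z n) (Φ n x) ≤ C * ‖x‖) ∧
      (∀ n x, ‖x‖ ≤ C * circledGauge (gaugeAt Ω (z n)) (Φ n x)) ∧
      ∀ x, Tendsto (fun n => gaugeAt Ω (z n) (Φ n (L x))) atTop (𝓝 (halfPlaneGauge x)) := by
  obtain ⟨⟨ho, hc, -⟩, hl⟩ := hΩ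
  obtain ⟨z, L, hz, hdiv, hL⟩ := hs.exists_seq ho hc
  have hbounds := fun n => bounds_of_abs_sub_halfPlaneGauge_le (g := gaugeAt Ω (z n)) (L := L n)
    fun x => (hL n x).trans (by gcongr; linarith [n.cast_nonneg (α := ℝ)])
  have hsub : ∀ n, IsSublinear (gaugeAt Ω (z n)) := fun n => isSublinear_gaugeAt ho hc (hz n)
  have hinj : Function.Injective (L 0) := (injective_iff_map_eq_zero (L 0)).2 fun x hx => by
    simpa [hx, (isSublinear_circledGauge (hsub 0)).map_zero] using (hbounds 0 x).2
  obtain ⟨k, hk⟩ := Nat.exists_eq_add_of_le (LinearMap.finrank_le_finrank_of_injective hinj)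
  choose Φ hΦ hupper hlower using fun n => (hsub n).exists_adapted_equiv
    (continuous_gaugeAt ho hc (hz n))
    (fun _ => eq_zero_of_circledGauge_gaugeAt_eq_zero ho hc hl (hz n)) hk zero_le_two
    (fun x => (hbounds n x).1) (fun x => (hbounds n x).2)
  obtain ⟨C, hC, hupper', hlower'⟩ := exists_bounds_comp_linearEquiv (by positivity)
    (fun n => (hsub n).nonneg) hupper hlower (Φ 0).symm
  refine ⟨z, fun n => (Φ 0).symm.trans (Φ n), L 0, C, hz, hdiv, hinj, hC, hupper', hlower',
    fun x => ?_⟩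
  have hΦL : ∀ n, Φ n ((Φ 0).symm (L 0 x)) = L n x := fun n => by
    rw [← hΦ 0, LinearEquiv.symm_apply_apply, hΦ]
  simp only [LinearEquiv.trans_apply, hΦL]
  refine tendsto_iff_dist_tendsto_zero.2 (squeeze_zero (fun _ => dist_nonneg)
    (fun n => (Real.dist_eq _ _).trans_le (hL n x)) ?_)
  have : Tendsto (fun n : ℕ => (n : ℝ) + 8) atTop atTop :=
    tendsto_atTop_add_const_right _ _ tendsto_natCast_atTop_atTop
  simpa using this.inv_tendsto_atTop.mul_const ‖x‖

end AffineLimit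

section Cayley

lemma two_sub_ne_zero_of_re_lt_one {a : ℂ} (ha : a.re < 1) : 2 - a ≠ 0 := fun h => by
  have := congrArg Complex.re h
  rw [Complex.sub_re, Complex.re_ofNat, Complex.zero_re] at this
  linarith

lemma one_add_ne_zero_of_norm_lt_one {w : ℂ} (hw : ‖w‖ < 1) : 1 + w ≠ 0 := fun h => by
  rw [eq_neg_of_add_eq_zero_right h, norm_neg, norm_one] at hw
  exact hw.false

lemma norm_div_two_sub_lt_one {a : ℂ} (ha : a.re < 1) : ‖a / (2 - a)‖ < 1 := by
  rw [norm_div, div_lt_one (norm_pos_iff.2 (two_sub_ne_zero_of_re_lt_one ha)),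
    ← sq_lt_sq₀ (norm_nonneg _) (norm_nonneg _), ← Complex.normSq_eq_norm_sq,
    ← Complex.normSq_eq_norm_sq, Complex.normSq_sub, ← sub_pos]
  simp only [Complex.normSq_ofNat, Complex.mul_re, Complex.re_ofNat, Complex.conj_re,
    Complex.im_ofNat, Complex.conj_im, mul_neg, zero_mul, neg_zero, sub_zero, sub_pos]
  linarith

lemma re_two_mul_div_one_add_lt_one {w : ℂ} (hw : ‖w‖ < 1) : (2 * w / (1 + w)).re < 1 := by
  have hn : Complex.normSq w < 1 := by
    rw [Complex.normSq_eq_norm_sq]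
    exact pow_lt_one₀ (norm_nonneg w) hw two_ne_zero
  have hpos := Complex.normSq_pos.2 (one_add_ne_zero_of_norm_lt_one hw)
  rw [Complex.div_re, ← add_div, div_lt_one hpos]
  rw [Complex.normSq_apply] at hn ⊢
  simp only [Complex.mul_re, Complex.re_ofNat, Complex.im_ofNat, zero_mul, sub_zero,
    Complex.add_re, Complex.one_re, Complex.mul_im, add_zero, Complex.add_im, Complex.one_im,
    zero_add]
  nlinarith

lemma two_mul_div_two_sub_div_one_add {a : ℂ} (ha : 2 - a ≠ 0) :
    2 * (a / (2 - a)) / (1 + a / (2 - a)) = a := by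
  have : 1 + a / (2 - a) = 2 / (2 - a) := by
    field_simp
    ring
  rw [this]
  field_simp

lemma two_mul_div_one_add_div_two_sub {w : ℂ} (hw : 1 + w ≠ 0) :
    2 * w / (1 + w) / (2 - 2 * w / (1 + w)) = w := by
  have : 2 - 2 * w / (1 + w) = 2 / (1 + w) := by
    field_simp
    ring
  rw [this]
  field_simp

/-- The Cayley transform `a ↦ a / (2 - a)` maps `{Re a < 1}` onto the disc. -/
lemma biholomorphic_halfPlanes_unitBidisk :
    Biholomorphic {x : ℂ × ℂ | halfPlaneGauge x < 1} unitBidisk := by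
  refine ⟨fun x => (x.1 / (2 - x.1), x.2 / (2 - x.2)),
    fun w => (2 * w.1 / (1 + w.1), 2 * w.2 / (1 + w.2)), fun x hx => ?_, fun w hw => ?_,
    fun x hx => ?_, fun w hw => ?_, fun x hx => ?_, fun w hw => ?_⟩
  all_goals
    simp only [mem_ofPred_eq, halfPlaneGauge_lt_one_iff, unitBidisk, mem_prod,
      mem_ball_zero_iff] at *
  · have := two_sub_ne_zero_of_re_lt_one hx.1
    have := two_sub_ne_zero_of_re_lt_one hx.2
    exact DifferentiableAt.differentiableWithinAt (by fun_prop (disch := assumption))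
  · have := one_add_ne_zero_of_norm_lt_one hw.1
    have := one_add_ne_zero_of_norm_lt_one hw.2
    exact DifferentiableAt.differentiableWithinAt (by fun_prop (disch := assumption))
  · exact ⟨norm_div_two_sub_lt_one hx.1, norm_div_two_sub_lt_one hx.2⟩
  · exact ⟨re_two_mul_div_one_add_lt_one hw.1, re_two_mul_div_one_add_lt_one hw.2⟩
  · exact Prod.ext (two_mul_div_two_sub_div_one_add (two_sub_ne_zero_of_re_lt_one hx.1))
      (two_mul_div_two_sub_div_one_add (two_sub_ne_zero_of_re_lt_one hx.2))
  · exact Prod.ext (two_mul_div_one_add_div_two_sub (one_add_ne_zero_of_norm_lt_one hw.1))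
      (two_mul_div_one_add_div_two_sub (one_add_ne_zero_of_norm_lt_one hw.2))

lemma biholomorphic_range_inter {H X Y : Type*} [NormedAddCommGroup H] [NormedSpace ℂ H]
    [FiniteDimensional ℂ H] [NormedAddCommGroup X] [NormedSpace ℂ X] [FiniteDimensional ℂ X]
    [NormedAddCommGroup Y] [NormedSpace ℂ Y] {L : X →ₗ[ℂ] H} (hL : Function.Injective L)
    {S : Set H} {T : Set Y} (h : Biholomorphic (L ⁻¹' S) T) :
    Biholomorphic (range L ∩ S) T := by
  obtain ⟨f, g, hf, hg, hfm, hgm, hgf, hfg⟩ := h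
  obtain ⟨P, hP⟩ := L.exists_leftInverse_of_injective (LinearMap.ker_eq_bot.2 hL)
  have hPL : ∀ x, P (L x) = x := fun x => LinearMap.congr_fun hP x
  have hmaps : MapsTo P (range L ∩ S) (L ⁻¹' S) := by
    rintro _ ⟨⟨x, rfl⟩, hx⟩
    rwa [hPL]
  refine ⟨f ∘ P, L ∘ g, hf.comp P.toContinuousLinearMap.differentiable.differentiableOn hmaps,
    L.toContinuousLinearMap.differentiable.comp_differentiableOn hg, hfm.comp hmaps,
    fun w hw => ⟨mem_range_self _, hgm hw⟩, ?_, fun w hw => ?_⟩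
  · rintro _ ⟨⟨x, rfl⟩, hx⟩
    exact congrArg L ((congrArg (g ∘ f) (hPL x)).trans (hgf hx))
  · exact (congrArg f (hPL _)).trans (hfg hw)

end Cayley

theorem HasBidiskSections.exists_isAffineLimit {H : Type*} [NormedAddCommGroup H]
    [NormedSpace ℂ H] [FiniteDimensional ℂ H] {Ω : Set H} (hs : HasBidiskSections Ω)
    (hΩ : InX Ω) :
    ∃ Ωlim V : Set H, IsAffineLimit Ω Ωlim ∧
      (∃ (q : H) (W : Submodule ℂ H), Module.finrank ℂ W = 2 ∧ V = {x | x - q ∈ W}) ∧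
      Biholomorphic (V ∩ Ωlim) unitBidisk := by
  obtain ⟨z, Φ, L, C, hz, hdiv, hL, hC, hupper, hlower, hlim⟩ := hs.exists_adapted_seq hΩ
  obtain ⟨φ, G, hφ, hG, hGlim⟩ :=
    exists_isAffineLimit_of_gaugeAt_bounds hΩ.1.1 hΩ.1.2.1 hz hdiv hC hupper hlower
  have hGL : ∀ x, G (L x) = halfPlaneGauge x := fun x =>
    tendsto_nhds_unique (hG (L x)) ((hlim x).comp hφ.tendsto_atTop)
  refine ⟨{x | G x < 1}, range L, hGlim, ⟨0, LinearMap.range L, ?_, by ext; simp⟩, ?_⟩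
  · rw [LinearMap.finrank_range_of_inj hL, Module.finrank_prod, Module.finrank_self]
  · refine biholomorphic_range_inter hL ?_
    simpa only [preimage_ofPred_eq, hGL] using biholomorphic_halfPlanes_unitBidisk

section HalfPlaneApprox

lemma eventually_norm_one_add_mul_lt_one {a : ℂ} (ha : a.re < 1) :
    ∀ᶠ s : ℝ in 𝓝[>] 0, ‖1 + s * (a - 1)‖ < 1 := by
  have hlim : Tendsto (fun s : ℝ => 2 * (a.re - 1) + s * Complex.normSq (a - 1)) (𝓝[>] 0)
      (𝓝 (2 * (a.re - 1) + 0 * Complex.normSq (a - 1))) :=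
    (Continuous.tendsto (by fun_prop) 0).mono_left nhdsWithin_le_nhds
  filter_upwards [hlim.eventually_lt_const (show _ < (0 : ℝ) by linarith),
    self_mem_nhdsWithin] with s hs (hs0 : 0 < s)
  rw [← sq_lt_sq₀ (norm_nonneg _) zero_le_one, ← Complex.normSq_eq_norm_sq, Complex.normSq_apply]
  rw [Complex.normSq_apply] at hs
  simp only [Complex.sub_re, Complex.one_re, Complex.sub_im, Complex.one_im, sub_zero,
    Complex.add_re, Complex.mul_re, Complex.ofReal_re, Complex.ofReal_im, zero_mul,
    Complex.add_im, Complex.mul_im, add_zero, zero_add, one_pow] at hs ⊢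
  nlinarith

variable {U : Set ℂ}

lemma eventually_mem_of_ball_subset {b u : ℂ} (hb : b ≠ u) (hball : ball u (dist b u) ⊆ U) {a : ℂ}
    (ha : a.re < 1) : ∀ᶠ s : ℝ in 𝓝[>] 0, b + s * ((b - u) * (a - 1)) ∈ U := by
  filter_upwards [eventually_norm_one_add_mul_lt_one ha] with s hs
  refine hball ?_
  rw [mem_ball, dist_eq_norm,
    show b + s * ((b - u) * (a - 1)) - u = (b - u) * (1 + s * (a - 1)) by ring, norm_mul,
    ← dist_eq_norm]
  exact mul_lt_of_lt_one_right (dist_pos.2 hb) hs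

lemma notMem_closure_of_eventually_mem (ho : IsOpen U) (hc : Convex ℝ U) {b v : ℂ} (hb : b ∉ U)
    (hv : ∀ᶠ t : ℝ in 𝓝[>] 0, b - t * v ∈ U) {s : ℝ} (hs : 0 < s) : b + s * v ∉ closure U := by
  intro hmem
  obtain ⟨t, htU, ht : 0 < t⟩ := (hv.and self_mem_nhdsWithin).exists
  have hcombo := hc.combo_closure_interior_mem_interior hmem (ho.interior_eq.symm ▸ htU)
    (a := t / (s + t)) (b := s / (s + t)) (by positivity) (by positivity) (by field_simp; ring)
  refine hb (interior_subset ?_)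
  convert hcombo using 1
  have : (s : ℂ) + t ≠ 0 := by
    rw [← Complex.ofReal_add, Complex.ofReal_ne_zero]
    positivity
  simp only [Complex.real_smul]
  push_cast
  field_simp
  ring

/-- Blow up `U` at a boundary point `b` which lies on the boundary of a disc inside `U`. -/
lemma exists_affine_halfPlane_approx (ho : IsOpen U) (hc : Convex ℝ U) (hne : U.Nonempty)
    (huniv : U ≠ univ) (S : Finset ℂ) : ∃ α β : ℂ, ∀ a ∈ S,
      (a.re < 1 → α + β * a ∈ U) ∧ (1 < a.re → α + β * a ∉ closure U) := by
  obtain ⟨u, hu⟩ := hne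
  obtain ⟨b, hb, hbd⟩ := ho.isClosed_compl.exists_infDist_eq_dist (nonempty_compl.2 huniv) u
  have hbu : b ≠ u := by
    rintro rfl
    exact hb hu
  have hball : ball u (dist b u) ⊆ U := fun w hw => by
    by_contra h
    have := infDist_le_dist_of_mem (x := u) (show w ∈ Uᶜ from h)
    rw [hbd, dist_comm u b, dist_comm u w] at this
    exact this.not_gt hw
  have hin : ∀ a : ℂ, a.re < 1 → ∀ᶠ s : ℝ in 𝓝[>] 0, b + s * ((b - u) * (a - 1)) ∈ U :=
    fun a ha => eventually_mem_of_ball_subset hbu hball ha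
  have hev : ∀ᶠ s : ℝ in 𝓝[>] 0, ∀ a ∈ S, a.re < 1 → b + s * ((b - u) * (a - 1)) ∈ U :=
    (Finset.eventually_all S).2 fun a _ => eventually_imp_distrib_left.2 (hin a)
  obtain ⟨s, hs, hs0 : 0 < s⟩ := (hev.and self_mem_nhdsWithin).exists
  have heq : ∀ a, b - s * (b - u) + s * (b - u) * a = b + s * ((b - u) * (a - 1)) :=
    fun a => by ring
  refine ⟨b - s * (b - u), s * (b - u), fun a ha => heq a ▸ ⟨hs a ha, fun ha1 => ?_⟩⟩
  refine notMem_closure_of_eventually_mem ho hc hb ?_ hs0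
  filter_upwards [hin (2 - a) (by rw [Complex.sub_re, Complex.re_ofNat]; linarith)] with t ht
  convert ht using 1
  ring

end HalfPlaneApprox

section FlatDisc

variable {H : Type*} [NormedAddCommGroup H] [NormedSpace ℂ H] {Ω : Set H} {p e n : H} {z w : ℂ}

lemma add_smul_mem_of_mem_closure (ho : IsOpen Ω) (hc : Convex ℝ Ω) {x y : H}
    (hx : x ∈ closure Ω) (hy : y ∈ Ω) {a b : ℝ} (ha : 0 ≤ a) (hb : 0 < b) (hab : a + b = 1) :
    a • x + b • y ∈ Ω :=
  interior_subset
    (hc.combo_closure_interior_mem_interior hx (ho.interior_eq.symm ▸ hy) ha hb hab)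

/-- The slice of the closure of `Ω` by the complex line through `p` in direction `e`. -/
def closureSlice (Ω : Set H) (p e : H) : Set ℂ := {z | p + z • e ∈ closure Ω}

/-- The slice by the complex line through `p` in direction `n` of the cone with vertex `p`
generated by `Ω`. -/
def coneSlice (Ω : Set H) (p n : H) : Set ℂ := {w | ∃ t : ℝ, 0 < t ∧ p + (t * w) • n ∈ Ω}

lemma convex_preimage_line {Ω : Set H} (hc : Convex ℝ Ω) (p e : H) :
    Convex ℝ {z : ℂ | p + z • e ∈ Ω} :=
  (hc.translate_preimage_right p).linear_preimage
    ((LinearMap.toSpanSingleton ℂ H e).restrictScalars ℝ)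

lemma isClosed_closureSlice : IsClosed (closureSlice Ω p e) :=
  isClosed_closure.preimage (by fun_prop)

lemma isOpen_coneSlice (ho : IsOpen Ω) : IsOpen (coneSlice Ω p n) := by
  have : coneSlice Ω p n = ⋃ t : ℝ, ⋃ _ : 0 < t, {w : ℂ | p + (t * w) • n ∈ Ω} := by
    ext
    simp [coneSlice]
  rw [this]
  exact isOpen_iUnion fun t => isOpen_iUnion fun _ => ho.preimage (by fun_prop)

lemma eventually_add_smul_mem (ho : IsOpen Ω) (hc : Convex ℝ Ω)
    (hz : z ∈ interior (closureSlice Ω p e)) (hw : w ∈ coneSlice Ω p n) :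
    ∀ᶠ τ : ℝ in 𝓝[>] 0, p + z • e + (τ * w) • n ∈ Ω := by
  obtain ⟨t, ht, hwt⟩ := hw
  have hlim : Tendsto (fun τ : ℝ => z / (1 - τ / t)) (𝓝[>] 0) (𝓝 z) := by
    have : ContinuousAt (fun τ : ℝ => z / (1 - (τ : ℂ) / t)) 0 :=
      ContinuousAt.div continuousAt_const (by fun_prop) (by simp)
    simpa using this.tendsto.mono_left (nhdsWithin_le_nhds (s := Ioi 0))
  filter_upwards [hlim.eventually (mem_interior_iff_mem_nhds.1 hz), Ioo_mem_nhdsGT ht]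
    with τ hτz hτ
  have hτt : τ / t < 1 := (div_lt_one ht).2 hτ.2
  have := add_smul_mem_of_mem_closure ho hc hτz hwt (a := 1 - τ / t)
    (b := τ / t) (by linarith) (div_pos hτ.1 ht) (by ring)
  convert this using 1
  have ht0 : (t : ℂ) ≠ 0 := Complex.ofReal_ne_zero.2 ht.ne'
  have htτ : (t : ℂ) - τ ≠ 0 := sub_ne_zero.2 (Complex.ofReal_injective.ne hτ.2.ne')
  simp only [← Complex.coe_smul]
  push_cast
  match_scalars <;> field_simp
  ring

lemma convex_coneSlice (ho : IsOpen Ω) (hc : Convex ℝ Ω)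
    (h0 : 0 ∈ interior (closureSlice Ω p e)) : Convex ℝ (coneSlice Ω p n) := by
  have hev : ∀ w ∈ coneSlice Ω p n, ∀ᶠ t : ℝ in 𝓝[>] 0, p + w • (t : ℂ) • n ∈ Ω :=
    fun w hw => (eventually_add_smul_mem ho hc h0 hw).mono fun t ht => by
      rwa [zero_smul, add_zero, mul_comm, mul_smul] at ht
  intro x hx y hy a b ha hb hab
  obtain ⟨t, ⟨htx, hty⟩, ht⟩ := ((hev x hx).and (hev y hy) |>.and self_mem_nhdsWithin).exists
  refine ⟨t, ht, ?_⟩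
  rw [mul_comm, mul_smul]
  exact convex_preimage_line hc p _ htx hty ha hb hab

lemma add_smul_notMem (ho : IsOpen Ω) (hc : Convex ℝ Ω) (h0 : 0 ∈ interior (closureSlice Ω p e))
    (hw : w ∉ coneSlice Ω p n) (z : ℂ) {τ : ℝ} (hτ : 0 < τ) : p + z • e + (τ * w) • n ∉ Ω := by
  intro hmem
  have hlim : Tendsto (fun κ : ℝ => -(κ * z)) (𝓝[>] 0) (𝓝 0) := by
    have : Continuous fun κ : ℝ => -(κ * z) := by fun_prop
    simpa using (this.tendsto 0).mono_left (nhdsWithin_le_nhds (s := Ioi 0))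
  obtain ⟨κ, hκz, hκ : 0 < κ⟩ :=
    ((hlim.eventually (mem_interior_iff_mem_nhds.1 h0)).and self_mem_nhdsWithin).exists
  refine hw ⟨κ / (1 + κ) * τ, by positivity, ?_⟩
  have := add_smul_mem_of_mem_closure ho hc hκz hmem (a := 1 / (1 + κ))
    (b := κ / (1 + κ)) (by positivity) (by positivity) (by field_simp)
  convert this using 1
  have : (1 : ℂ) + κ ≠ 0 := by
    rw [← Complex.ofReal_one, ← Complex.ofReal_add, Complex.ofReal_ne_zero]
    positivity
  simp only [← Complex.coe_smul]
  push_cast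
  match_scalars <;> field_simp
  ring

lemma eventually_add_smul_notMem {A : Set H} (hA : IsClosed A) (hz : p + z • e ∉ A) (w : ℂ)
    (n : H) : ∀ᶠ τ : ℝ in 𝓝[>] 0, p + z • e + (τ * w) • n ∉ A := by
  have hcont : Continuous fun τ : ℝ => p + z • e + (τ * w) • n := by fun_prop
  refine ((hcont.tendsto 0).mono_left nhdsWithin_le_nhds).eventually
    (hA.isOpen_compl.mem_nhds ?_)
  simpa using hz

lemma zero_notMem_coneSlice (hp : p ∉ Ω) : (0 : ℂ) ∉ coneSlice Ω p n := by
  rintro ⟨t, -, ht⟩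
  exact hp (by simpa using ht)

lemma add_smul_notMem_of_zero_mem_interior (ho : IsOpen Ω) (hc : Convex ℝ Ω) (hp : p ∉ Ω)
    (h0 : 0 ∈ interior (closureSlice Ω p e)) (z : ℂ) : p + z • e ∉ Ω := by
  simpa using add_smul_notMem ho hc h0 (zero_notMem_coneSlice (n := 0) hp) z one_pos

lemma closureSlice_ne_univ (hΩ : InX Ω) (he : e ≠ 0) : closureSlice Ω p e ≠ univ := by
  obtain ⟨⟨ho, hc, x, hx⟩, hl⟩ := hΩ
  intro huniv
  refine hl ((2⁻¹ : ℝ) • p + (2⁻¹ : ℝ) • x) e he fun a => ?_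
  have ha : 2 * a ∈ closureSlice Ω p e := huniv ▸ mem_univ _
  have := add_smul_mem_of_mem_closure ho hc ha hx (a := 2⁻¹) (b := 2⁻¹) (by norm_num)
    (by norm_num) (by norm_num)
  convert this using 1
  simp only [← Complex.coe_smul]
  push_cast
  module

lemma exists_slice_halfPlane_approx (hΩ : InX Ω) (hp : p ∉ Ω) (hn : p + n ∈ Ω) (he : e ≠ 0)
    (h0 : 0 ∈ interior (closureSlice Ω p e)) (S : Finset (ℂ × ℂ)) : ∃ α β α' β' : ℂ, ∀ x ∈ S,
      (x.1.re < 1 → α + β * x.1 ∈ interior (closureSlice Ω p e)) ∧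
      (1 < x.1.re → α + β * x.1 ∉ closureSlice Ω p e) ∧
      (x.2.re < 1 → α' + β' * x.2 ∈ coneSlice Ω p n) ∧
      (1 < x.2.re → α' + β' * x.2 ∉ coneSlice Ω p n) := by
  classical
  obtain ⟨ho, hc, -⟩ := hΩ.1
  have hconv : Convex ℝ (closureSlice Ω p e) := convex_preimage_line hc.closure p e
  obtain ⟨α, β, h⟩ := exists_affine_halfPlane_approx isOpen_interior hconv.interior ⟨0, h0⟩
    (fun h => closureSlice_ne_univ hΩ he (univ_subset_iff.1 (h ▸ interior_subset)))
    (S.image Prod.fst)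
  rw [hconv.closure_interior_eq_closure_of_nonempty_interior ⟨0, h0⟩,
    isClosed_closureSlice.closure_eq] at h
  obtain ⟨α', β', h'⟩ := exists_affine_halfPlane_approx (isOpen_coneSlice (n := n) ho)
    (convex_coneSlice ho hc h0) ⟨1, 1, one_pos, by simpa using hn⟩
    (fun h => zero_notMem_coneSlice hp (h ▸ mem_univ _)) (S.image Prod.snd)
  refine ⟨α, β, α', β', fun x hx => ?_⟩
  obtain ⟨hin, hout⟩ := h x.1 (Finset.mem_image_of_mem _ hx)
  obtain ⟨hin', hout'⟩ := h' x.2 (Finset.mem_image_of_mem _ hx)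
  exact ⟨hin, hout, hin', fun hx' hmem => hout' hx' (subset_closure hmem)⟩

/-- Near a complex disc in its boundary, `Ω` looks like the product of a planar convex domain
containing the disc and a planar convex cone; blow up both factors at boundary points. -/
theorem hasBidiskSections_of_zero_mem_interior (hΩ : InX Ω) (hp : p ∉ Ω) (he : e ≠ 0)
    (h0 : 0 ∈ interior (closureSlice Ω p e)) : HasBidiskSections Ω := by
  obtain ⟨ho, hc, x₀, hx₀⟩ := hΩ.1
  obtain ⟨n, rfl⟩ : ∃ n, x₀ = p + n := ⟨x₀ - p, (add_sub_cancel p x₀).symm⟩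
  classical
  intro S K hK hKΩ
  obtain ⟨α, β, α', β', h⟩ := exists_slice_halfPlane_approx hΩ hp hx₀ he h0 (insert 0 S)
  have hev : ∀ᶠ τ : ℝ in 𝓝[>] 0, ∀ x ∈ insert 0 S,
      (x.1.re < 1 → x.2.re < 1 → p + (α + β * x.1) • e + (τ * (α' + β' * x.2)) • n ∈ Ω) ∧
      (1 < x.1.re → p + (α + β * x.1) • e + (τ * (α' + β' * x.2)) • n ∉ closure Ω) := by
    refine (Finset.eventually_all _).2 fun x hx => ?_
    obtain ⟨hin, hout, hin', -⟩ := h x hx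
    refine .and ?_ ?_
    · exact eventually_imp_distrib_left.2 fun h1 => eventually_imp_distrib_left.2 fun h2 =>
        eventually_add_smul_mem ho hc (hin h1) (hin' h2)
    · exact eventually_imp_distrib_left.2 fun h1 =>
        eventually_add_smul_notMem isClosed_closure (hout h1) _ _
  have hevK : ∀ᶠ τ : ℝ in 𝓝[>] 0, p + α • e + (τ * α') • n ∉ K :=
    eventually_add_smul_notMem hK.isClosed
      (fun h => add_smul_notMem_of_zero_mem_interior ho hc hp h0 α (hKΩ h)) _ _
  obtain ⟨τ, ⟨hτ, hτK⟩, hτ0 : 0 < τ⟩ := ((hev.and hevK).and self_mem_nhdsWithin).exists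
  have hτΩ := (hτ 0 (Finset.mem_insert_self 0 S)).1 (by simp) (by simp)
  refine ⟨p + α • e + (τ * α') • n, ⟨by simpa using hτΩ, hτK⟩,
    (LinearMap.toSpanSingleton ℂ H (β • e)).coprod (.toSpanSingleton ℂ H ((τ * β') • n)),
    fun x hx => ?_⟩
  have heq : p + α • e + (τ * α') • n + (x.1 • β • e + x.2 • (τ * β') • n) =
      p + (α + β * x.1) • e + (τ * (α' + β' * x.2)) • n := by module
  obtain ⟨hin, hout⟩ := hτ x (Finset.mem_insert_of_mem hx)
  simp only [LinearMap.coprod_apply, LinearMap.toSpanSingleton_apply, heq,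
    halfPlaneGauge_lt_one_iff, one_lt_halfPlaneGauge_iff]
  exact ⟨fun hx => hin hx.1 hx.2, fun hx' => hx'.elim (fun h1 => notMem_subset subset_closure
    (hout h1)) fun h2 => add_smul_notMem ho hc h0 ((h x (Finset.mem_insert_of_mem hx)).2.2.2 h2)
      _ hτ0⟩

end FlatDisc

section Averaging

open ComplexConjugate

lemma re_nonneg_of_forall_mem_frontier {f : ℂ → ℂ} {U : Set ℂ} (hU : Bornology.IsBounded U)
    (hf : DiffContOnCl ℂ f U) (h : ∀ w ∈ frontier U, 0 ≤ (f w).re) {z : ℂ} (hz : z ∈ closure U) :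
    0 ≤ (f z).re := by
  have hnorm : ∀ w, ‖Complex.exp (-f w)‖ ≤ 1 ↔ 0 ≤ (f w).re := fun w => by
    rw [Complex.norm_exp, Real.exp_le_one_iff, Complex.neg_re, neg_nonpos]
  rw [← hnorm]
  exact Complex.norm_le_of_forall_mem_frontier_norm_le hU
    (Complex.differentiable_exp.comp_diffContOnCl hf.neg) (fun w hw => (hnorm w).2 (h w hw)) hz

lemma add_conj_mul_sq_add_div_two {q : ℂ} (hq : ‖q‖ = 1) (c : ℂ) :
    q + (conj c * q ^ 2 + c) / 2 = q * (1 + (conj c * q).re : ℝ) := by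
  have hqq : q * conj q = 1 := by
    rw [Complex.mul_conj, Complex.normSq_eq_norm_sq, hq]
    norm_num
  have hre := Complex.re_eq_add_conj (conj c * q)
  rw [map_mul, Complex.conj_conj] at hre
  rw [Complex.ofReal_add, hre, Complex.ofReal_one]
  linear_combination (-c / 2) * hqq

/-- The mean of `w ^ k * h w` over the circle against the positive kernel `1 + Re (c̄ q)`,
`q = (w / ρ) ^ k`, is `c * ρ ^ k / 2 * h 0`. -/
lemma le_re_mul_of_forall_norm_eq {h : ℂ → ℂ} {ρ : ℝ} (hρ : 0 < ρ)
    (hd : DifferentiableOn ℂ h (closedBall 0 ρ)) {k : ℕ} (hk : k ≠ 0) {a : ℝ}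
    (hc : ∀ w : ℂ, ‖w‖ = ρ → a ≤ (w ^ k * h w).re) {c : ℂ} (hc1 : ‖c‖ ≤ 1) :
    a ≤ (c * ρ ^ k / 2 * h 0).re := by
  have hρc : (ρ : ℂ) ≠ 0 := Complex.ofReal_ne_zero.2 hρ.ne'
  let q : ℂ → ℂ := fun w => (w / ρ) ^ k
  let Q : ℂ → ℂ := fun w =>
    ρ ^ k * (q w + (conj c * q w ^ 2 + c) / 2) * h w - a * (1 + conj c * q w)
  have hQ : DiffContOnCl ℂ Q (ball 0 ρ) := by
    refine DifferentiableOn.diffContOnCl ?_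
    rw [closure_ball _ hρ.ne']
    simp only [Q, q]
    fun_prop
  have hQ0 : 0 ≤ (Q 0).re := by
    refine re_nonneg_of_forall_mem_frontier isBounded_ball hQ (fun w hw => ?_)
      (subset_closure (mem_ball_self hρ))
    rw [frontier_ball _ hρ.ne', mem_sphere_zero_iff_norm] at hw
    have hq : ‖q w‖ = 1 := by
      rw [norm_pow, norm_div, hw, Complex.norm_of_nonneg hρ.le, div_self hρ.ne', one_pow]
    have hpos : 0 ≤ 1 + (conj c * q w).re := by
      have := (abs_le.1 (Complex.abs_re_le_norm (conj c * q w))).1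
      rw [norm_mul, hq, mul_one, RCLike.norm_conj] at this
      linarith
    have hQw : Q w = (1 + (conj c * q w).re : ℝ) * (w ^ k * h w) - a * (1 + conj c * q w) := by
      simp only [Q]
      rw [add_conj_mul_sq_add_div_two hq, show w ^ k = ρ ^ k * q w by
        rw [← mul_pow, mul_div_cancel₀ _ hρc]]
      ring
    rw [hQw, Complex.sub_re, Complex.re_ofReal_mul, Complex.re_ofReal_mul, Complex.add_re,
      Complex.one_re]
    nlinarith [hc w hw]
  have hq0 : q 0 = 0 := by simp [q, hk]
  simp only [Q, hq0, ne_eq, OfNat.ofNat_ne_zero, not_false_eq_true, zero_pow, mul_zero, zero_add,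
    add_zero, mul_one, Complex.sub_re, Complex.ofReal_re, sub_nonneg] at hQ0
  rwa [mul_comm c, mul_div_assoc]

variable {H : Type*} [NormedAddCommGroup H] [NormedSpace ℂ H]

lemma add_smul_mem_of_forall_norm_eq {S : Set H} (hS : IsClosed S) (hSc : Convex ℝ S) {h : ℂ → H}
    {ρ : ℝ} (hρ : 0 < ρ) (hd : DifferentiableOn ℂ h (closedBall 0 ρ)) {k : ℕ} (hk : k ≠ 0) {p : H}
    (hc : ∀ w : ℂ, ‖w‖ = ρ → p + w ^ k • h w ∈ S) {z : ℂ} (hz : ‖z‖ ≤ ρ ^ k / 2) :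
    p + z • h 0 ∈ S := by
  by_contra hn
  obtain ⟨f, u, hfu, hfS⟩ := RCLike.geometric_hahn_banach_point_closed (𝕜 := ℂ) hSc hS hn
  simp only [map_add, map_smul, smul_eq_mul, RCLike.re_to_complex] at hfu
  have hρk : (ρ : ℂ) ^ k ≠ 0 := pow_ne_zero _ (Complex.ofReal_ne_zero.2 hρ.ne')
  have hz1 : ‖2 * z / ρ ^ k‖ ≤ 1 := by
    rw [norm_div, norm_mul, norm_pow, Complex.norm_of_nonneg hρ.le, Complex.norm_ofNat,
      div_le_one (by positivity)]
    linarith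
  have := le_re_mul_of_forall_norm_eq hρ (f.differentiable.comp_differentiableOn hd) hk
    (a := u - (f p).re) (fun w hw => ?_) hz1
  · rw [show 2 * z / ρ ^ k * ρ ^ k / 2 = z by field_simp] at this
    simp only [Function.comp_apply] at this
    linarith
  · have := hfS _ (hc w hw)
    simp only [map_add, map_smul, smul_eq_mul, RCLike.re_to_complex] at this
    simp only [Function.comp_apply]
    linarith

variable [CompleteSpace H] {f : ℂ → H} {ε : ℝ}

lemma analyticOrderAt_sub_ne_top (hε : 0 < ε) (hf : DifferentiableOn ℂ f (ball 0 ε))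
    (hne : ¬ ∀ w ∈ ball (0 : ℂ) ε, f w = f 0) : analyticOrderAt (fun w => f w - f 0) 0 ≠ ⊤ := by
  rw [Ne, analyticOrderAt_eq_top]
  exact fun hev => hne fun w hw => sub_eq_zero.1 <|
    ((hf.sub_const (f 0)).analyticOnNhd isOpen_ball).eqOn_zero_of_preconnected_of_eventuallyEq_zero
      (convex_ball (0 : ℂ) ε).isPreconnected (mem_ball_self hε) hev hw

lemma exists_leading_term (hε : 0 < ε) (hf : DifferentiableOn ℂ f (ball 0 ε))
    (hne : ¬ ∀ w ∈ ball (0 : ℂ) ε, f w = f 0) :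
    ∃ (k : ℕ) (h : ℂ → H), k ≠ 0 ∧ analyticOrderAt (fun w => f w - f 0) 0 = k ∧
      AnalyticAt ℂ h 0 ∧ h 0 ≠ 0 ∧ ∀ᶠ w in 𝓝 0, f w = f 0 + w ^ k • h w := by
  have han : AnalyticAt ℂ (fun w => f w - f 0) 0 :=
    (hf.sub_const (f 0)).analyticAt (ball_mem_nhds 0 hε)
  obtain ⟨k, hk⟩ := ENat.ne_top_iff_exists.1 (analyticOrderAt_sub_ne_top hε hf hne)
  obtain ⟨h, hh, hh0, hev⟩ := han.analyticOrderAt_eq_natCast.1 hk.symm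
  refine ⟨k, h, ?_, hk.symm, hh, hh0, ?_⟩
  · rintro rfl
    exact hh0 (by simpa using hev.self_of_nhds.symm)
  · filter_upwards [hev] with w hw
    rw [sub_zero] at hw
    rw [← hw, add_sub_cancel]

theorem hasBidiskSections_of_holomorphic_disc {Ω : Set H} (hΩ : InX Ω)
    (hf : DifferentiableOn ℂ f (ball 0 1)) (hmap : MapsTo f (ball (0 : ℂ) 1) (frontier Ω))
    (hne : ¬ ∃ c, ∀ w ∈ ball (0 : ℂ) 1, f w = c) : HasBidiskSections Ω := by
  obtain ⟨k, h, hk, -, hh, hh0, hfh⟩ := exists_leading_term one_pos hf fun h => hne ⟨_, h⟩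
  obtain ⟨δ, hδ, hδ'⟩ := Metric.eventually_nhds_iff_ball.1 <|
    (hfh.and hh.eventually_analyticAt).and (ball_mem_nhds (0 : ℂ) one_pos)
  have hρ : 0 < δ / 2 := half_pos hδ
  have hsub : closedBall (0 : ℂ) (δ / 2) ⊆ ball 0 δ := closedBall_subset_ball (half_lt_self hδ)
  refine hasBidiskSections_of_zero_mem_interior hΩ (p := f 0) ?_ hh0 ?_
  · exact (hΩ.1.1.frontier_eq ▸ hmap (mem_ball_self one_pos)).2
  · refine mem_interior_iff_mem_nhds.2 (mem_of_superset
      (closedBall_mem_nhds 0 (by positivity : 0 < (δ / 2) ^ k / 2)) fun z hz => ?_)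
    refine add_smul_mem_of_forall_norm_eq isClosed_closure hΩ.1.2.1.closure hρ
      (fun w hw => (hδ' w (hsub hw)).1.2.differentiableAt.differentiableWithinAt) hk
      (fun w hw => ?_) (mem_closedBall_zero_iff.1 hz)
    obtain ⟨⟨hw1, -⟩, hw2⟩ := hδ' w (hsub (mem_closedBall_zero_iff.2 hw.le))
    rw [← hw1]
    exact frontier_subset_closure (hmap hw2)

end Averaging

section Order

universe u v

lemma isBigO_norm_sub_pow_succ_of_fderiv {X F : Type*} [NormedAddCommGroup X] [NormedSpace ℝ X]
    [NormedAddCommGroup F] [NormedSpace ℝ F] {x : X} {g : X → F} {m : ℕ} (hg : g x = 0)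
    (hd : ∀ᶠ y in 𝓝 x, DifferentiableAt ℝ g y)
    (h : fderiv ℝ g =O[𝓝 x] fun y => ‖y - x‖ ^ m) : g =O[𝓝 x] fun y => ‖y - x‖ ^ (m + 1) := by
  obtain ⟨C, hC, hbound⟩ := h.exists_nonneg
  obtain ⟨δ, hδ, hall⟩ := Metric.eventually_nhds_iff_ball.1 (hbound.bound.and hd)
  refine Asymptotics.IsBigO.of_bound C ?_
  filter_upwards [ball_mem_nhds x hδ] with y hy
  have hsub : closedBall x ‖y - x‖ ⊆ ball x δ :=
    closedBall_subset_ball (by rwa [← dist_eq_norm])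
  have hfd : ∀ z ∈ closedBall x ‖y - x‖, ‖fderiv ℝ g z‖ ≤ C * ‖y - x‖ ^ m := fun z hz => by
    refine (hall z (hsub hz)).1.trans ?_
    rw [norm_pow, norm_norm]
    gcongr
    exact mem_closedBall_iff_norm.1 hz
  have := (convex_closedBall x ‖y - x‖).norm_image_sub_le_of_norm_fderiv_le
    (fun z hz => (hall z (hsub hz)).2) hfd (mem_closedBall_self (norm_nonneg _))
    (mem_closedBall_iff_norm.2 le_rfl)
  rwa [hg, sub_zero, mul_assoc, ← pow_succ, ← norm_norm (y - x), ← norm_pow] at this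

lemma isBigO_norm_sub_pow_of_iteratedFDeriv_eq_zero {m : ℕ} {X : Type u} {F : Type max u v}
    [NormedAddCommGroup X] [NormedSpace ℝ X] [NormedAddCommGroup F] [NormedSpace ℝ F] {x : X}
    {g : X → F} (hg : ContDiffAt ℝ m g x) (hz : ∀ j < m, iteratedFDeriv ℝ j g x = 0) :
    g =O[𝓝 x] fun y => ‖y - x‖ ^ m := by
  induction m generalizing F with
  | zero => simpa using hg.continuousAt.tendsto.isBigO_one ℝ
  | succ m ih =>
    refine isBigO_norm_sub_pow_succ_of_fderiv ?_ ?_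
      (ih (hg.fderiv_right (m := m) (by norm_cast)) ?_)
    · rw [← norm_eq_zero, ← norm_iteratedFDeriv_zero (𝕜 := ℝ), hz 0 m.succ_pos, norm_zero]
    · exact (hg.eventually (by simp)).mono fun y hy => hy.differentiableAt (by simp)
    · intro j hj
      rw [← norm_eq_zero, norm_iteratedFDeriv_fderiv, hz (j + 1) (by omega), norm_zero]

lemma iteratedFDeriv_eq_zero_of_lt_vanishOrder {G : Type*} [NormedAddCommGroup G] [NormedSpace ℝ G]
    {g : ℂ → G} {j : ℕ} (hj : 1 ≤ j) (h : (j : ℕ∞) < vanishOrder g) :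
    iteratedFDeriv ℝ j g 0 = 0 := by
  by_contra hne
  exact not_le.2 h (sInf_le ⟨j, rfl, hj, hne⟩)

lemma isBigO_of_le_vanishOrder {G : Type*} [NormedAddCommGroup G] [NormedSpace ℝ G] {g : ℂ → G}
    {m : ℕ} (hg : ContDiffAt ℝ m g 0) (hg0 : g 0 = 0) (hm : (m : ℕ∞) ≤ vanishOrder g) :
    g =O[𝓝 0] fun w => ‖w‖ ^ m := by
  have := isBigO_norm_sub_pow_of_iteratedFDeriv_eq_zero hg fun j hj => ?_
  · simpa only [sub_zero] using this
  rcases Nat.eq_zero_or_pos j with rfl | hj0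
  · rw [← norm_eq_zero, norm_iteratedFDeriv_zero, hg0, norm_zero]
  · exact iteratedFDeriv_eq_zero_of_lt_vanishOrder hj0 ((Nat.cast_lt.2 hj).trans_le hm)

variable {H : Type*} [NormedAddCommGroup H] [NormedSpace ℂ H] [CompleteSpace H] {ζ : ℂ → H} {k : ℕ}

lemma natCast_le_vanishOrder (hζ : AnalyticAt ℂ ζ 0)
    (hk : (k : ℕ∞) ≤ analyticOrderAt (fun w => ζ w - ζ 0) 0) : (k : ℕ∞) ≤ vanishOrder ζ := by
  refine le_sInf ?_
  rintro _ ⟨j, rfl, hj, hne⟩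
  rw [Nat.cast_le]
  by_contra! hlt
  have hsub : iteratedDeriv j (fun w => ζ w - ζ 0) 0 = 0 :=
    (natCast_le_analyticOrderAt_iff_iteratedDeriv_eq_zero (hζ.sub analyticAt_const)).1 hk j hlt
  have hder : iteratedFDeriv ℂ j ζ 0 = 0 := by
    rw [← norm_eq_zero, ← norm_iteratedFDeriv_eq_norm_iteratedDeriv, norm_eq_zero,
      fun_iteratedFDeriv_sub_apply hζ.contDiffAt contDiffAt_const,
      iteratedFDeriv_const_of_ne (by omega), Pi.zero_apply, sub_zero] at hsub
    exact hsub
  rw [← (hζ.contDiffAt (n := j)).restrictScalars_iteratedFDeriv (𝕜 := ℝ), Function.comp_apply,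
    hder] at hne
  exact hne rfl

lemma isBigO_of_mul_vanishOrder_le {N : ℕ} {r : H → ℝ} (hζ : AnalyticAt ℂ ζ 0)
    (hr : ContDiffAt ℝ (⊤ : ℕ∞) r (ζ 0)) (hr0 : r (ζ 0) = 0)
    (hk : (k : ℕ∞) ≤ analyticOrderAt (fun w => ζ w - ζ 0) 0)
    (hN : (N : ℕ∞) * vanishOrder ζ ≤ vanishOrder fun w => r (ζ w)) :
    (fun w => r (ζ w)) =O[𝓝 0] fun w => ‖w‖ ^ (N * k) := by
  refine isBigO_of_le_vanishOrder ?_ hr0 (le_trans ?_ hN)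
  · exact (hr.of_le (by exact_mod_cast le_top)).comp 0 (hζ.contDiffAt.restrict_scalars ℝ)
  · rw [Nat.cast_mul]
    gcongr
    exact natCast_le_vanishOrder hζ hk

end Order

section InnerNormal

section Real

variable {H : Type*} [NormedAddCommGroup H] [NormedSpace ℝ H] {Ω : Set H} {p n ξ : H} {r : H → ℝ}
  {r' : H →L[ℝ] ℝ}

lemma exists_eq_smul_of_isLocalExtrOn [CompleteSpace H] {φ : H → ℝ} {φ' : H →L[ℝ] ℝ}
    (hext : IsLocalExtrOn φ {x | r x = r p} p) (hr : HasStrictFDerivAt r r' p)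
    (hφ : HasStrictFDerivAt φ φ' p) (hφ' : φ' ≠ 0) : ∃ κ : ℝ, r' = κ • φ' := by
  obtain ⟨a, b, hab, h⟩ := hext.exists_multipliers_of_hasStrictFDerivAt_1d hr hφ
  have ha : a ≠ 0 := by
    rintro rfl
    rw [zero_smul, zero_add] at h
    exact hab (by rw [(smul_eq_zero.1 h).resolve_right hφ']; rfl)
  refine ⟨a⁻¹ * -b, ?_⟩
  rw [mul_smul, eq_comm, inv_smul_eq_iff₀ ha, eq_neg_of_add_eq_zero_left h]
  module

lemma inter_frontier_nonempty_of_isPreconnected {X : Type*} [TopologicalSpace X] {T A : Set X}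
    (hT : IsPreconnected T) (hA : IsOpen A) (hTA : (T ∩ A).Nonempty) (hTA' : (T ∩ Aᶜ).Nonempty) :
    (T ∩ frontier A).Nonempty := by
  by_contra h
  have hcl : T ∩ closure A ⊆ A := fun x hx => by
    by_contra hxA
    exact h ⟨x, hx.1, hA.frontier_eq ▸ ⟨hx.2, hxA⟩⟩
  obtain ⟨x, hxT, hxA⟩ := hTA'
  obtain ⟨y, -, hyA, hy⟩ := hT A (closure A)ᶜ hA isClosed_closure.isOpen_compl
    (fun y hy => (em (y ∈ closure A)).imp (fun h => hcl ⟨hy, h⟩) id) hTA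
    ⟨x, hxT, fun h => hxA (hcl ⟨hxT, h⟩)⟩
  exact hy (subset_closure hyA)

lemma exists_abs_le_of_map_ne_zero (hr : HasStrictFDerivAt r r' p) (hn : r' n ≠ 0) :
    ∃ c > 0, ∀ᶠ q : H × ℝ in 𝓝 (p, 0), r (q.1 + q.2 • n) = 0 → |q.2| ≤ c * |r q.1| := by
  have hlim : Tendsto (fun q : H × ℝ => (q.1 + q.2 • n, q.1)) (𝓝 (p, 0)) (𝓝 (p, p)) := by
    have : Continuous fun q : H × ℝ => (q.1 + q.2 • n, q.1) := by fun_prop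
    simpa using this.tendsto (p, 0)
  have hO : (fun q : H × ℝ => (q.1 + q.2 • n) - q.1) =O[𝓝 (p, 0)] fun q : H × ℝ => q.2 := by
    refine Asymptotics.IsBigO.of_bound ‖n‖ (.of_forall fun q => ?_)
    rw [add_sub_cancel_left, norm_smul, mul_comm]
  have hr'n : 0 < |r' n| := abs_pos.2 hn
  have ho := ((hr.isLittleO.comp_tendsto hlim).trans_isBigO hO).def (half_pos hr'n)
  refine ⟨2 / |r' n|, by positivity, ho.mono fun q hq hrq => ?_⟩
  simp only [Function.comp_apply, hrq, add_sub_cancel_left, map_smul, smul_eq_mul,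
    Real.norm_eq_abs] at hq
  have htri := abs_sub_abs_le_abs_sub (q.2 * r' n) (0 - r q.1)
  rw [zero_sub, abs_neg, abs_mul, abs_sub_comm, ← zero_sub] at htri
  rw [div_mul_eq_mul_div, le_div_iff₀ hr'n]
  linarith

lemma exists_forall_add_smul_mem (ho : IsOpen Ω) (hr : HasStrictFDerivAt r r' p) (hn : r' n ≠ 0)
    (hfr : ∀ᶠ x in 𝓝 p, x ∈ frontier Ω → r x = 0) (hray : ∀ᶠ t : ℝ in 𝓝[>] 0, p + t • n ∈ Ω) :
    ∃ c > 0, ∀ᶠ q : H × ℝ in 𝓝 (p, 0), c * |r q.1| < q.2 → q.1 + q.2 • n ∈ Ω := by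
  obtain ⟨c, hc, hle⟩ := exists_abs_le_of_map_ne_zero hr hn
  have hlim : Tendsto (fun q : H × ℝ => q.1 + q.2 • n) (𝓝 (p, 0)) (𝓝 p) := by
    have : Continuous fun q : H × ℝ => q.1 + q.2 • n := by fun_prop
    simpa using this.tendsto (p, 0)
  obtain ⟨ρ, hρ, hball⟩ := Metric.eventually_nhds_iff_ball.1 (hle.and (hlim.eventually hfr))
  obtain ⟨δ, hδΩ, hδ, hδρ⟩ := (hray.and (Ioo_mem_nhdsGT hρ)).exists
  have hδx : ∀ᶠ x in 𝓝 p, x + δ • n ∈ Ω :=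
    (by fun_prop : Continuous fun x : H => x + δ • n).continuousAt.eventually (ho.mem_nhds hδΩ)
  refine ⟨c, hc, ?_⟩
  rw [nhds_prod_eq]
  filter_upwards [(hδx.and (ball_mem_nhds p hρ)).prod_mk (Iio_mem_nhds hδ)]
    with ⟨x, s⟩ ⟨⟨hxΩ, hxρ⟩, (hsδ : s < δ)⟩ (hs : c * |r x| < s)
  by_contra hns
  have hpre : IsPreconnected ((fun τ : ℝ => x + τ • n) '' Icc s δ) :=
    isPreconnected_Icc.image _ (by fun_prop)
  obtain ⟨_, ⟨τ, hτ, rfl⟩, hτfr⟩ := inter_frontier_nonempty_of_isPreconnected hpre ho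
    ⟨_, ⟨δ, ⟨hsδ.le, le_rfl⟩, rfl⟩, hxΩ⟩ ⟨_, ⟨s, ⟨le_rfl, hsδ.le⟩, rfl⟩, hns⟩
  have hs0 : 0 < s := lt_of_le_of_lt (by positivity) hs
  have hτ0 : 0 < τ := hs0.trans_le hτ.1
  obtain ⟨hτle, hτr⟩ := hball (x, τ) (by
    rw [mem_ball, Prod.dist_eq, max_lt_iff, Real.dist_0_eq_abs, abs_of_pos hτ0]
    exact ⟨hxρ, hτ.2.trans_lt hδρ⟩)
  have := hτle (hτr hτfr)
  rw [abs_of_pos hτ0] at this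
  exact this.not_gt (hs.trans_le hτ.1)

lemma eventually_add_smul_add_smul_mem (hr : HasFDerivAt r r' p) (hr0 : r p = 0) {c : ℝ}
    (hc : ∀ᶠ q : H × ℝ in 𝓝 (p, 0), c * |r q.1| < q.2 → q.1 + q.2 • n ∈ Ω) (hξ : r' ξ = 0)
    {σ : ℝ} (hσ : 0 < σ) : ∀ᶠ t : ℝ in 𝓝[>] 0, p + t • (ξ + σ • n) ∈ Ω := by
  have hlim : Tendsto (fun t : ℝ => (p + t • ξ, t * σ)) (𝓝[>] 0) (𝓝 (p, 0)) := by
    have : Continuous fun t : ℝ => (p + t • ξ, t * σ) := by fun_prop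
    simpa using (this.tendsto 0).mono_left nhdsWithin_le_nhds
  have hlittle : (fun t : ℝ => c * |r (p + t • ξ)|) =o[𝓝 0] fun t => t := by
    have := hasLineDerivAt_iff_isLittleO_nhds_zero.1 (hr.hasLineDerivAt ξ)
    simp only [hr0, hξ, smul_zero, sub_zero] at this
    exact this.abs_left.const_mul_left c
  filter_upwards [hlim.eventually hc, nhdsWithin_le_nhds (hlittle.def (half_pos hσ)),
    self_mem_nhdsWithin] with t hmem hlt (ht : 0 < t)
  have := hmem (by
    rw [Real.norm_eq_abs, Real.norm_of_nonneg ht.le] at hlt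
    nlinarith [le_abs_self (c * |r (p + t • ξ)|), mul_pos ht hσ])
  rwa [mul_smul, add_assoc, ← smul_add] at this

end Real

variable {H : Type*} [NormedAddCommGroup H] [NormedSpace ℂ H] {Ω : Set H} {p n : H}

lemma exists_supporting_functional (ho : IsOpen Ω) (hc : Convex ℝ Ω) (hp : p ∉ Ω) :
    ∃ ℓ : H →L[ℂ] ℂ, ∀ x ∈ Ω, 0 < (ℓ (x - p)).re := by
  obtain ⟨f, hf⟩ := RCLike.geometric_hahn_banach_open_point (𝕜 := ℂ) hc ho hp
  refine ⟨-f, fun x hx => ?_⟩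
  have := hf x hx
  simp only [RCLike.re_to_complex] at this
  rw [neg_apply, map_sub, Complex.neg_re, Complex.sub_re]
  linarith

lemma re_nonneg_of_mem_closure {ℓ : H →L[ℂ] ℂ} (hℓ : ∀ x ∈ Ω, 0 < (ℓ (x - p)).re) {x : H}
    (hx : x ∈ closure Ω) : 0 ≤ (ℓ (x - p)).re :=
  closure_minimal (t := {y | 0 ≤ (ℓ (y - p)).re}) (fun y hy => (hℓ y hy).le)
    (isClosed_le continuous_const (by fun_prop)) hx

/-- An inner normal of `Ω` at a boundary point `p` with a unique tangent hyperplane: `ℓ` supports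
`Ω` at `p`, and `Ω` contains the germs at `p` of all rays in the line `p + ℂ • ν` on which the real
part of `ℓ` increases. -/
structure IsInnerNormal (Ω : Set H) (p : H) (ℓ : H →L[ℂ] ℂ) (ν : H) : Prop where
  re_pos : ∀ x ∈ Ω, 0 < (ℓ (x - p)).re
  map_eq_one : ℓ ν = 1
  eventually_mem : ∀ w : ℂ, 0 < w.re → ∀ᶠ t : ℝ in 𝓝[>] 0, p + (t * w) • ν ∈ Ω

variable {r : H → ℝ} {r' : H →L[ℝ] ℝ} {ℓ : H →L[ℂ] ℂ}

lemma exists_forall_eq_mul_re [CompleteSpace H] (hne : Ω.Nonempty)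
    (hℓ : ∀ x ∈ Ω, 0 < (ℓ (x - p)).re) (hr : HasStrictFDerivAt r r' p) (hr0 : r p = 0)
    (hfr : ∀ᶠ x in 𝓝 p, r x = 0 → x ∈ frontier Ω) : ∃ κ : ℝ, ∀ x, r' x = κ * (ℓ x).re := by
  let φ : H →L[ℝ] ℝ := Complex.reCLM.comp (ℓ.restrictScalars ℝ)
  have hφ : φ ≠ 0 := fun h => by
    obtain ⟨x, hx⟩ := hne
    exact (hℓ x hx).ne' (DFunLike.congr_fun h (x - p))
  have hext : IsLocalExtrOn φ {x | r x = r p} p := by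
    left
    filter_upwards [self_mem_nhdsWithin, nhdsWithin_le_nhds hfr] with x hx hxfr
    have := re_nonneg_of_mem_closure hℓ (frontier_subset_closure (hxfr (hx.trans hr0)))
    rwa [map_sub, Complex.sub_re, sub_nonneg] at this
  obtain ⟨κ, rfl⟩ := exists_eq_smul_of_isLocalExtrOn hext hr φ.hasStrictFDerivAt hφ
  exact ⟨κ, fun x => rfl⟩

lemma eventually_add_smul_mem_of_re_pos (hr : HasFDerivAt r r' p) (hr0 : r p = 0) {κ c : ℝ}
    (hκ : ∀ x, r' x = κ * (ℓ x).re) (hn : 0 < (ℓ n).re)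
    (hc : ∀ᶠ q : H × ℝ in 𝓝 (p, 0), c * |r q.1| < q.2 → q.1 + q.2 • n ∈ Ω) {η : H}
    (hη : 0 < (ℓ η).re) : ∀ᶠ t : ℝ in 𝓝[>] 0, p + t • η ∈ Ω := by
  have hξ : r' (η - ((ℓ η).re / (ℓ n).re) • n) = 0 := by
    rw [hκ, ← Complex.coe_smul, map_sub, map_smul, smul_eq_mul, Complex.sub_re,
      Complex.re_ofReal_mul, div_mul_cancel₀ _ hn.ne', sub_self, mul_zero]
  simpa only [sub_add_cancel] using
    eventually_add_smul_add_smul_mem hr hr0 hc hξ (div_pos hη hn)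

theorem exists_isInnerNormal [CompleteSpace H] (hΩ : IsConvexDomain Ω)
    (hr : HasStrictFDerivAt r r' p) (hr' : r' ≠ 0)
    (hfr : ∀ᶠ x in 𝓝 p, x ∈ frontier Ω ↔ r x = 0) (hp : p ∈ frontier Ω) :
    ∃ ℓ ν, IsInnerNormal Ω p ℓ ν ∧
      ∃ c > 0, ∀ᶠ q : H × ℝ in 𝓝 (p, 0), c * |r q.1| < q.2 → q.1 + q.2 • ν ∈ Ω := by
  obtain ⟨ho, hc, x₀, hx₀⟩ := hΩ
  obtain ⟨n, rfl⟩ : ∃ n, x₀ = p + n := ⟨x₀ - p, (add_sub_cancel p x₀).symm⟩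
  have hr0 : r p = 0 := hfr.self_of_nhds.1 hp
  obtain ⟨hpc, hpΩ⟩ := ho.frontier_eq ▸ hp
  obtain ⟨ℓ, hℓ⟩ := exists_supporting_functional ho hc hpΩ
  obtain ⟨κ, hκ⟩ := exists_forall_eq_mul_re ⟨_, hx₀⟩ hℓ hr hr0 (hfr.mono fun x => Iff.mpr)
  have hκ0 : κ ≠ 0 := fun h => hr' (ContinuousLinearMap.ext fun x => by rw [hκ, h, zero_mul]; rfl)
  have hcontact : ∀ m, 0 < (ℓ m).re → (∀ᶠ t : ℝ in 𝓝[>] 0, p + t • m ∈ Ω) →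
      ∃ c > 0, ∀ᶠ q : H × ℝ in 𝓝 (p, 0), c * |r q.1| < q.2 → q.1 + q.2 • m ∈ Ω := fun m hm =>
    exists_forall_add_smul_mem ho hr (by rw [hκ]; exact mul_ne_zero hκ0 hm.ne')
      (hfr.mono fun x => Iff.mp)
  have hn : 0 < (ℓ n).re := by simpa using hℓ _ hx₀
  have hrayn : ∀ᶠ t : ℝ in 𝓝[>] 0, p + t • n ∈ Ω := by
    filter_upwards [Ioo_mem_nhdsGT one_pos] with t ht
    have := add_smul_mem_of_mem_closure ho hc hpc hx₀ (sub_nonneg.2 ht.2.le) ht.1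
      (sub_add_cancel 1 t)
    convert this using 1
    module
  obtain ⟨c, -, hcn⟩ := hcontact n hn hrayn
  have hray : ∀ η, 0 < (ℓ η).re → ∀ᶠ t : ℝ in 𝓝[>] 0, p + t • η ∈ Ω := fun η =>
    eventually_add_smul_mem_of_re_pos hr.hasFDerivAt hr0 hκ hn hcn
  have hℓn : ℓ n ≠ 0 := fun h => by simp [h] at hn
  have hℓν : ℓ ((ℓ n)⁻¹ • n) = 1 := by rw [map_smul, smul_eq_mul, inv_mul_cancel₀ hℓn]
  have hν : 0 < (ℓ ((ℓ n)⁻¹ • n)).re := by rw [hℓν]; exact one_pos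
  refine ⟨ℓ, (ℓ n)⁻¹ • n, ⟨hℓ, hℓν, fun w hw => ?_⟩, hcontact _ hν (hray _ hν)⟩
  refine (hray (w • (ℓ n)⁻¹ • n) (by rwa [map_smul, hℓν, smul_eq_mul, mul_one])).mono fun t ht => ?_
  rwa [mul_smul, Complex.coe_smul]

end InnerNormal

section Contact

variable {H : Type*} [NormedAddCommGroup H] [NormedSpace ℂ H] {Ω : Set H} {p e ν : H} {N k : ℕ}

/-- `Ω` osculates the complex line `p + ℂ • e` to order `N` at `p`: near `p`, moving from a point of
the line in direction `ν` by more than a multiple of the `N`-th power of its distance to `p` leads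
into `Ω`. -/
def HasContact (Ω : Set H) (p e ν : H) (N : ℕ) : Prop :=
  ∃ C > 0, ∀ᶠ q : ℂ × ℝ in 𝓝 0, C * ‖q.1‖ ^ N < q.2 → p + q.1 • e + q.2 • ν ∈ Ω

lemma HasContact.of_closure (ho : IsOpen Ω) (hc : Convex ℝ Ω)
    (hray : ∀ᶠ t : ℝ in 𝓝[>] 0, p + t • ν ∈ Ω) (h : HasContact (closure Ω) p e ν N) :
    HasContact Ω p e ν N := by
  obtain ⟨C, hC, h⟩ := h
  refine ⟨2 * (C * 2 ^ N), by positivity, ?_⟩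
  have hlim : Tendsto (fun q : ℂ × ℝ => ((2 * q.1, q.2 / 2) : ℂ × ℝ)) (𝓝 0) (𝓝 0) :=
    Continuous.tendsto' (by fun_prop) _ _ (by simp)
  have hlim' : Tendsto (fun q : ℂ × ℝ => 3 / 2 * q.2) (𝓝 0) (𝓝 0) :=
    Continuous.tendsto' (by fun_prop) _ _ (by simp)
  filter_upwards [hlim.eventually h, hlim'.eventually (eventually_nhdsWithin_iff.1 hray)]
    with q hcl hΩ hq
  have hq0 : 0 < q.2 := lt_of_le_of_lt (by positivity) hq
  have := add_smul_mem_of_mem_closure ho hc (hcl ?_) (hΩ (mem_Ioi.2 (by positivity)))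
    one_half_pos.le one_half_pos (add_halves 1)
  · convert this using 1
    simp only [← Complex.coe_smul]
    push_cast
    module
  · rw [norm_mul, Complex.norm_ofNat, mul_pow]
    linarith

lemma exists_add_pow_smul_add_smul_mem {r : H → ℝ} {h : ℂ → H} {c : ℝ} (hc : 0 < c)
    (hr : ∀ᶠ q : H × ℝ in 𝓝 (p, 0), c * |r q.1| < q.2 → q.1 + q.2 • ν ∈ Ω) (hk : k ≠ 0)
    (hh : ContinuousAt h 0)
    (hO : (fun w => r (p + w ^ k • h w)) =O[𝓝 0] fun w => ‖w‖ ^ (N * k)) :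
    ∃ C > 0, ∀ᶠ q : ℂ × ℝ in 𝓝 0,
      C * ‖q.1‖ ^ (N * k) < q.2 → p + q.1 ^ k • h q.1 + q.2 • ν ∈ Ω := by
  obtain ⟨C, hC, hO⟩ := hO.exists_pos
  have hlim : Tendsto (fun q : ℂ × ℝ => (p + q.1 ^ k • h q.1, q.2)) (𝓝 0) (𝓝 (p, 0)) := by
    have : ContinuousAt (fun q : ℂ × ℝ => (p + q.1 ^ k • h q.1, q.2)) 0 := by
      have : ContinuousAt (fun q : ℂ × ℝ => h q.1) 0 :=
        ContinuousAt.comp (f := Prod.fst) (x := (0 : ℂ × ℝ)) hh continuousAt_fst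
      fun_prop
    simpa [ContinuousAt, hk] using this
  refine ⟨c * C, by positivity, ?_⟩
  filter_upwards [hlim.eventually hr,
    (continuous_fst.tendsto' (0 : ℂ × ℝ) 0 rfl).eventually hO.bound] with q hqΩ hqr hq
  rw [norm_pow, norm_norm, Real.norm_eq_abs] at hqr
  refine hqΩ (lt_of_le_of_lt ?_ hq)
  rw [mul_assoc]
  gcongr

/-- The disc `w ↦ p + w ^ k • h w`, averaged over circles, yields the direction `h 0`. -/
lemma hasContact_closure_of_analyticAt [CompleteSpace H] (hc : Convex ℝ Ω) {h : ℂ → H}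
    (hh : AnalyticAt ℂ h 0) (hk : k ≠ 0) {C : ℝ} (hC : 0 < C) (hmem : ∀ᶠ q : ℂ × ℝ in 𝓝 0,
      C * ‖q.1‖ ^ (N * k) < q.2 → p + q.1 ^ k • h q.1 + q.2 • ν ∈ Ω) :
    HasContact (closure Ω) p (h 0) ν N := by
  obtain ⟨δ₁, hδ₁, hdiff⟩ := Metric.eventually_nhds_iff_ball.1 hh.eventually_analyticAt
  obtain ⟨δ₂, hδ₂, hmem⟩ := Metric.eventually_nhds_iff_ball.1 hmem
  obtain ⟨δ, hδ, hδlt⟩ := exists_between (lt_min hδ₁ hδ₂)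
  rw [lt_min_iff] at hδlt
  have hsmall : ∀ᶠ q : ℂ × ℝ in 𝓝 0, 2 * ‖q.1‖ < δ ^ k ∧ |q.2| < δ₂ := by
    refine .and ?_ ?_
    · exact (Continuous.tendsto' (by fun_prop) _ 0 (by simp)).eventually_lt_const (by positivity)
    · exact (Continuous.tendsto' (by fun_prop) _ 0 (by simp)).eventually_lt_const hδ₂
  refine ⟨C * 2 ^ N, by positivity, hsmall.mono fun q hq hzt => ?_⟩
  obtain ⟨z, t⟩ := q
  obtain ⟨hz, ht⟩ := hq
  simp only at hz ht hzt ⊢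
  obtain ⟨y, ⟨hyt, hyδ⟩, hy⟩ : ∃ y, (C * y ^ N < t ∧ y < δ ^ k) ∧ 2 * ‖z‖ < y := by
    have hcont : Continuous fun y : ℝ => C * y ^ N := by fun_prop
    have hlt : C * (2 * ‖z‖) ^ N < t := by rwa [mul_pow, ← mul_assoc]
    have hev := (hcont.continuousAt.eventually_lt_const hlt).and (gt_mem_nhds hz)
    exact ((hev.filter_mono nhdsWithin_le_nhds).and (self_mem_nhdsWithin (s := Ioi _))).exists
  have hy0 : 0 < y := lt_of_le_of_lt (by positivity) hy
  obtain ⟨ρ, hρ0, rfl⟩ : ∃ ρ : ℝ, 0 < ρ ∧ ρ ^ k = y :=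
    ⟨y ^ (k : ℝ)⁻¹, by positivity, Real.rpow_inv_natCast_pow hy0.le hk⟩
  have hρδ : ρ < δ := lt_of_pow_lt_pow_left₀ k hδ.le hyδ
  have := add_smul_mem_of_forall_norm_eq isClosed_closure hc.closure hρ0 (p := p + t • ν) (z := z)
    (fun w hw => (hdiff w (closedBall_subset_ball (hρδ.trans hδlt.1) hw)).differentiableAt
      |>.differentiableWithinAt) hk (fun w hw => subset_closure ?_) (by linarith)
  · rwa [add_right_comm] at this
  · rw [add_right_comm]
    refine hmem (w, t) ?_ ?_
    · rw [mem_ball_zero_iff, Prod.norm_def, max_lt_iff]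
      exact ⟨hw.trans_lt (hρδ.trans hδlt.2), ht⟩
    · rwa [hw, mul_comm N, pow_mul]

lemma HasContact.map_eq_zero {ℓ : H →L[ℂ] ℂ} (h : HasContact Ω p e ν N) (hN : 2 ≤ N)
    (hν : IsInnerNormal Ω p ℓ ν) : ℓ e = 0 := by
  obtain ⟨C, -, h⟩ := h
  by_contra ha
  have ha0 : 0 < ‖ℓ e‖ := norm_pos_iff.2 ha
  -- Along this curve the linear term of `ℓ` is negative and dominates the contact condition.
  have hlim : Tendsto (fun s : ℝ => ((-(s * starRingEnd ℂ (ℓ e)), s * (‖ℓ e‖ ^ 2 / 2)) : ℂ × ℝ))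
      (𝓝[>] 0) (𝓝 0) :=
    (Continuous.tendsto' (by fun_prop) 0 _ (by simp)).mono_left nhdsWithin_le_nhds
  have hpow : (fun s : ℝ => C * ‖ℓ e‖ ^ N * s ^ N) =o[𝓝 0] fun s => s :=
    (Asymptotics.isLittleO_pow_id (by omega)).const_mul_left _
  obtain ⟨s, ⟨hs, hsN⟩, hs0 : 0 < s⟩ := ((hlim.eventually h).and (nhdsWithin_le_nhds
    (hpow.def (show 0 < ‖ℓ e‖ ^ 2 / 4 by positivity))) |>.and self_mem_nhdsWithin).exists
  rw [Real.norm_of_nonneg hs0.le] at hsN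
  have hre := hν.re_pos _ (hs ?_)
  · rw [add_assoc, add_sub_cancel_left, ← Complex.coe_smul, map_add, map_smul, map_smul,
      hν.map_eq_one, smul_eq_mul, smul_eq_mul, mul_one, neg_mul, mul_assoc,
      ← Complex.normSq_eq_conj_mul_self, Complex.normSq_eq_norm_sq, ← Complex.ofReal_mul,
      Complex.add_re, Complex.neg_re,
      Complex.ofReal_re, Complex.ofReal_re] at hre
    nlinarith [mul_pos hs0 (pow_pos ha0 2)]
  · rw [norm_neg, norm_mul, Complex.norm_real, RCLike.norm_conj, Real.norm_of_nonneg hs0.le,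
      mul_pow, mul_comm (s ^ N), ← mul_assoc]
    refine (le_abs_self _).trans_lt (hsN.trans_lt ?_)
    nlinarith [mul_pos hs0 (pow_pos ha0 2)]

end Contact

section FlatOrder

variable {D : Set (ℂ × ℂ)} {n : ℕ}

/-- The planar shape singled out by the rescaling: the boundary of `D` passes through or below
`(1, 1)`, while `D` osculates the complex line `ℂ × {0}` to order `n`, uniformly on the disc. -/
def IsFlatOfOrder (n : ℕ) (D : Set (ℂ × ℂ)) : Prop :=
  (1, 1) ∉ D ∧ ∀ w : ℂ, ‖w‖ ≤ 1 → (w, (‖w‖ ^ n : ℂ)) ∈ closure D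

lemma eq_neg_norm_of_forall_norm_eq_one {α : ℂ}
    (hα : ∀ w : ℂ, ‖w‖ = 1 → 0 ≤ (α * (w - 1)).re) : α = -‖α‖ := by
  rcases eq_or_ne α 0 with rfl | h0
  · simp
  have hn : (‖α‖ : ℂ) ≠ 0 := by simpa using h0
  have h := hα (-(starRingEnd ℂ α / ‖α‖)) (by simp [h0])
  have hmul : α * (-(starRingEnd ℂ α / ‖α‖) - 1) = -(‖α‖ : ℂ) - α := by
    rw [mul_sub_one, mul_neg, mul_div_assoc', Complex.mul_conj', sq, mul_div_cancel_right₀ _ hn]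
  rw [hmul, Complex.sub_re, Complex.neg_re, Complex.ofReal_re] at h
  have hre : (-α).re = ‖-α‖ := by
    rw [Complex.neg_re, norm_neg]
    exact le_antisymm (by simpa using Complex.re_le_norm (-α)) (by linarith)
  rw [← neg_eq_iff_eq_neg, ← norm_neg]
  exact Complex.ext (by simpa using hre) (by simpa using Complex.re_eq_norm.1 hre |>.2.symm)

lemma norm_mul_le_of_forall_re {β : ℂ} {A M y : ℝ} (hM : 0 < M) (hy : y ≤ 1 / 2)
    (h1 : 0 < A + M * β.im) (h2 : 0 < A - M * β.im) (h3 : 0 < A + M * β.re)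
    (h4 : 0 ≤ A / M + β.re * (y - 1)) : M * ‖β‖ ≤ 3 * A := by
  have hre : M * |β.re| ≤ 2 * A := by
    rw [← abs_of_pos hM, ← abs_mul, abs_le]
    refine ⟨by linarith, ?_⟩
    have h5 : M * β.re * (1 - y) ≤ A := by
      rw [← sub_nonneg]
      rw [show A - M * β.re * (1 - y) = M * (A / M + β.re * (y - 1)) by field_simp; ring]
      exact mul_nonneg hM.le h4
    nlinarith
  have him : M * |β.im| ≤ A := by
    rw [← abs_of_pos hM, ← abs_mul, abs_le]
    exact ⟨by linarith, by linarith⟩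
  nlinarith [Complex.norm_le_abs_re_add_abs_im β]

lemma IsFlatOfOrder.exists_supporting (hD : IsFlatOfOrder n D) (ho : IsOpen D)
    (hc : Convex ℝ D) : ∃ (A : ℝ) (β : ℂ),
      (∀ x ∈ D, 0 < A * (1 - x.1.re) + (β * (x.2 - 1)).re) ∧
      ∀ x ∈ closure D, 0 ≤ A * (1 - x.1.re) + (β * (x.2 - 1)).re := by
  obtain ⟨ℓ, hℓ⟩ := exists_supporting_functional ho hc hD.1
  have hsplit (x : ℂ × ℂ) : ℓ (x - (1, 1)) = ℓ (1, 0) * (x.1 - 1) + ℓ (0, 1) * (x.2 - 1) := by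
    rw [mul_comm, mul_comm (ℓ (0, 1)), ← smul_eq_mul, ← smul_eq_mul, ← map_smul, ← map_smul,
      ← map_add]
    congr 1
    ext <;> simp
  have hα := eq_neg_norm_of_forall_norm_eq_one (α := ℓ (1, 0)) fun w hw => by
    simpa only [hsplit, hw, Complex.ofReal_one, one_pow, sub_self, mul_zero, add_zero]
      using re_nonneg_of_mem_closure hℓ (hD.2 w hw.le)
  have hre (x : ℂ × ℂ) : (ℓ (x - (1, 1))).re =
      ‖ℓ (1, 0)‖ * (1 - x.1.re) + (ℓ (0, 1) * (x.2 - 1)).re := by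
    rw [hsplit, hα, norm_neg, Complex.norm_real, norm_norm, Complex.add_re, neg_mul,
      Complex.neg_re, Complex.re_ofReal_mul, Complex.sub_re, Complex.one_re, ← mul_neg, neg_sub]
  exact ⟨‖ℓ (1, 0)‖, ℓ (0, 1), fun x hx => (hℓ x hx).trans_eq (hre x),
    fun x hx => (re_nonneg_of_mem_closure hℓ hx).trans_eq (hre x)⟩

lemma IsFlatOfOrder.notMem (hD : IsFlatOfOrder n D) (ho : IsOpen D) (hc : Convex ℝ D) {M : ℝ}
    (hM : 1 ≤ M) (hn : (1 - M⁻¹) ^ n ≤ 1 / 2) (h₀ : (0, 1) ∈ D) (h₁ : (0, (1 + M : ℂ)) ∈ D)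
    (h₂ : (0, 1 + M * Complex.I) ∈ D) (h₃ : (0, 1 - M * Complex.I) ∈ D) {a b : ℂ}
    (hab : 3 * ‖b - 1‖ ≤ M * (a.re - 1)) : (a, b) ∉ D := by
  obtain ⟨A, β, hpos, hnonneg⟩ := hD.exists_supporting ho hc
  have hM0 : 0 < M := one_pos.trans_le hM
  have hA : 0 < A := by simpa using hpos _ h₀
  have hβ : M * ‖β‖ ≤ 3 * A := by
    refine norm_mul_le_of_forall_re hM0 hn ?_ ?_ ?_ ?_
    · simpa [mul_comm] using hpos _ h₃
    · simpa [mul_comm, sub_eq_add_neg] using hpos _ h₂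
    · simpa [mul_comm] using hpos _ h₁
    · have hy0 : 0 ≤ 1 - M⁻¹ := sub_nonneg.2 (inv_le_one_of_one_le₀ hM)
      have hy : ‖((1 - M⁻¹ : ℝ) : ℂ)‖ = 1 - M⁻¹ := by
        rw [Complex.norm_real, Real.norm_of_nonneg hy0]
      have := hnonneg _ (hD.2 (1 - M⁻¹ : ℝ) (hy.trans_le (sub_le_self 1 (inv_pos.2 hM0).le)))
      rwa [hy, Complex.ofReal_re, sub_sub_cancel, ← div_eq_mul_inv, ← Complex.ofReal_pow,
        ← Complex.ofReal_one, ← Complex.ofReal_sub, Complex.re_mul_ofReal] at this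
  intro hmem
  have h := hpos _ hmem
  have hle : (β * (b - 1)).re ≤ ‖β‖ * ‖b - 1‖ := (Complex.re_le_norm _).trans (norm_mul_le _ _)
  have : M * (‖β‖ * ‖b - 1‖) ≤ M * (A * (a.re - 1)) := by
    nlinarith [norm_nonneg (b - 1)]
  linarith [le_of_mul_le_mul_left this hM0]

variable {ι X : Type*} {D : ι → X → Set (ℂ × ℂ)} {𝓕 : Filter X} {a b : ℂ}

lemma eventually_mem_of_isFlatOfOrder (ho : ∀ i x, IsOpen (D i x)) (hc : ∀ i x, Convex ℝ (D i x))
    (hD : ∀ i b, 0 < b.re → ∀ᶠ x in 𝓕, ((0 : ℂ), b) ∈ D i x) (ha : ‖a‖ < 1) (hb : 0 < b.re) :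
    ∀ᶠ n in atTop, ∀ i, ∀ᶠ x in 𝓕, IsFlatOfOrder n (D i x) → (a, b) ∈ D i x := by
  obtain ⟨u, hau, hu1⟩ := exists_between ha
  have hu0 : 0 < u := (norm_nonneg a).trans_lt hau
  have hw : ‖a / u‖ < 1 := by
    rw [norm_div, Complex.norm_real, Real.norm_of_nonneg hu0.le]
    exact (div_lt_one hu0).2 hau
  have hlim : Tendsto (fun n : ℕ => u * ‖a / u‖ ^ n) atTop (𝓝 0) := by
    simpa using (tendsto_pow_atTop_nhds_zero_of_lt_one (norm_nonneg _) hw).const_mul u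
  filter_upwards [hlim.eventually_lt_const hb] with n hn i
  have hre : 0 < (((1 - u)⁻¹ : ℝ) * (b - (u * ‖a / u‖ ^ n : ℝ)) : ℂ).re := by
    rw [Complex.re_ofReal_mul, Complex.sub_re, Complex.ofReal_re]
    exact mul_pos (inv_pos.2 (sub_pos.2 hu1)) (sub_pos.2 hn)
  -- `(a, b)` lies on the segment from this point over `0` to a point of the osculating graph.
  filter_upwards [hD i _ hre] with x hx hflat
  have := add_smul_mem_of_mem_closure (ho i x) (hc i x) (hflat.2 _ hw.le) hx hu0.le
    (sub_pos.2 hu1) (add_sub_cancel u 1)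
  have hu0' : (u : ℂ) ≠ 0 := mod_cast hu0.ne'
  have hu1' : (1 - u : ℂ) ≠ 0 := mod_cast (sub_pos.2 hu1).ne'
  convert this using 1
  ext1
  · simp [mul_div_cancel₀ _ hu0']
  · simp [mul_inv_cancel_left₀ hu1']

lemma eventually_notMem_of_isFlatOfOrder (ho : ∀ i x, IsOpen (D i x))
    (hc : ∀ i x, Convex ℝ (D i x)) (hD : ∀ i b, 0 < b.re → ∀ᶠ x in 𝓕, ((0 : ℂ), b) ∈ D i x)
    (ha : 1 < a.re) :
    ∀ᶠ n in atTop, ∀ i, ∀ᶠ x in 𝓕, IsFlatOfOrder n (D i x) → (a, b) ∉ D i x := by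
  have ha0 : 0 < a.re - 1 := sub_pos.2 ha
  obtain ⟨M, hM1, hM⟩ : ∃ M : ℝ, 1 ≤ M ∧ 3 * ‖b - 1‖ ≤ M * (a.re - 1) :=
    ⟨max 1 (3 * ‖b - 1‖ / (a.re - 1)), le_max_left _ _, (div_le_iff₀ ha0).1 (le_max_right _ _)⟩
  have hM0 : 0 < M := one_pos.trans_le hM1
  have hlim := tendsto_pow_atTop_nhds_zero_of_lt_one (sub_nonneg.2 (inv_le_one_of_one_le₀ hM1))
    (sub_lt_self 1 (inv_pos.2 hM0))
  filter_upwards [hlim.eventually_le_const one_half_pos] with n hn i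
  filter_upwards [hD i 1 (by simp), hD i (1 + M) (by simpa using by positivity),
    hD i (1 + M * Complex.I) (by simp), hD i (1 - M * Complex.I) (by simp)]
    with x h₀ h₁ h₂ h₃ hflat
  exact hflat.notMem (ho i x) (hc i x) hM1 hn h₀ h₁ h₂ h₃ hM

/-- Zooming in at `(1, 0)` turns the disc, which domains flat of high order resemble in the first
coordinate, into a half-plane. -/
lemma exists_zoom_of_isFlatOfOrder (ho : ∀ i x, IsOpen (D i x)) (hc : ∀ i x, Convex ℝ (D i x))
    (hD : ∀ i b, 0 < b.re → ∀ᶠ x in 𝓕, ((0 : ℂ), b) ∈ D i x) (S : Finset (ℂ × ℂ)) :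
    ∃ s : ℝ, ∀ᶠ n in atTop, ∀ i, ∀ᶠ x in 𝓕, IsFlatOfOrder n (D i x) → ∀ y ∈ S,
      (y.1.re < 1 → y.2.re < 1 → (1 + s * (y.1 - 1), 1 - y.2) ∈ D i x) ∧
      (1 < y.1.re → (1 + s * (y.1 - 1), 1 - y.2) ∉ D i x) := by
  obtain ⟨s, hs, hs0 : 0 < s⟩ : ∃ s : ℝ, (∀ y ∈ S, y.1.re < 1 → ‖1 + s * (y.1 - 1)‖ < 1) ∧ 0 < s :=
    (((Finset.eventually_all _).2 fun y _ => eventually_imp_distrib_left.2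
      eventually_norm_one_add_mul_lt_one).and (self_mem_nhdsWithin (s := Ioi 0))).exists
  have hin : ∀ᶠ n in atTop, ∀ y ∈ S, y.1.re < 1 → y.2.re < 1 → ∀ i, ∀ᶠ x in 𝓕,
      IsFlatOfOrder n (D i x) → (1 + s * (y.1 - 1), 1 - y.2) ∈ D i x :=
    (Finset.eventually_all _).2 fun y hy => eventually_imp_distrib_left.2 fun h1 =>
      eventually_imp_distrib_left.2 fun h2 =>
        eventually_mem_of_isFlatOfOrder ho hc hD (hs y hy h1) (by simpa using h2)
  have hout : ∀ᶠ n in atTop, ∀ y ∈ S, 1 < y.1.re → ∀ i, ∀ᶠ x in 𝓕,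
      IsFlatOfOrder n (D i x) → (1 + s * (y.1 - 1), 1 - y.2) ∉ D i x :=
    (Finset.eventually_all _).2 fun y _ => eventually_imp_distrib_left.2 fun h1 =>
      eventually_notMem_of_isFlatOfOrder ho hc hD (by simpa [hs0] using h1)
  refine ⟨s, (hin.and hout).mono fun n hn i => ?_⟩
  have hin' := (Finset.eventually_all S).2 fun y hy => eventually_imp_distrib_left.2 fun h1 =>
    eventually_imp_distrib_left.2 fun h2 => hn.1 y hy h1 h2 i
  have hout' := (Finset.eventually_all S).2 fun y hy => eventually_imp_distrib_left.2 fun h1 =>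
    hn.2 y hy h1 i
  filter_upwards [hin', hout'] with x hx hx' hflat y hy
  exact ⟨fun h1 h2 => hx y hy h1 h2 hflat, fun h1 => hx' y hy h1 hflat⟩

end FlatOrder

section Rescaling

lemma exists_isMaxOn_div_norm_pow {X : Type*} [NormedAddCommGroup X] {T : Set (X × ℝ)}
    (hT : IsCompact T) {n : ℕ} {C : ℝ} (hC : ∀ q ∈ T, q.2 ≤ C * ‖q.1‖ ^ (n + 1))
    (hne : ∃ q ∈ T, 0 < q.2) :
    ∃ q ∈ T, 0 < q.2 ∧ ∀ q' ∈ T, q'.2 * ‖q.1‖ ^ n ≤ q.2 * ‖q'.1‖ ^ n := by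
  obtain ⟨q₁, hq₁, hpos⟩ := hne
  have hz₁ : q₁.1 ≠ 0 := by
    intro h
    have := hC q₁ hq₁
    simp only [h, norm_zero, zero_pow n.succ_ne_zero, mul_zero] at this
    linarith
  have hκ : 0 < q₁.2 / ‖q₁.1‖ ^ n := by positivity
  set κ := q₁.2 / ‖q₁.1‖ ^ n
  -- The ratio is at most `C * ‖q.1‖`, so only points with `‖q.1‖` bounded below can maximize it.
  have hne0 : ∀ q ∈ T ∩ {q | κ ≤ C * ‖q.1‖}, ‖q.1‖ ^ n ≠ 0 := fun q hq => by
    refine pow_ne_zero _ fun h => (hκ.trans_le hq.2).ne' (by simp [h])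
  have hcont : ContinuousOn (fun q => q.2 / ‖q.1‖ ^ n) (T ∩ {q | κ ≤ C * ‖q.1‖}) :=
    continuous_snd.continuousOn.div (continuous_fst.norm.pow n).continuousOn hne0
  have hmem : q₁ ∈ T ∩ {q | κ ≤ C * ‖q.1‖} := by
    refine ⟨hq₁, ?_⟩
    rw [mem_ofPred_eq, div_le_iff₀ (by positivity), mul_assoc, ← pow_succ']
    exact hC q₁ hq₁
  obtain ⟨q, hq, hmax⟩ := (hT.inter_right (isClosed_le (by fun_prop) (by fun_prop))).exists_isMaxOn
    ⟨q₁, hmem⟩ hcont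
  have hq0 : 0 < ‖q.1‖ ^ n := (pow_nonneg (norm_nonneg _) n).lt_of_ne' (hne0 q hq)
  have hκq : κ ≤ q.2 / ‖q.1‖ ^ n := hmax hmem
  refine ⟨q, hq.1, (div_pos_iff_of_pos_right hq0).1 (hκ.trans_le hκq), fun q' hq' => ?_⟩
  rw [← le_div_iff₀ hq0, mul_div_right_comm]
  rcases le_or_gt κ (C * ‖q'.1‖) with hκ' | hκ'
  · have hq'0 := (pow_nonneg (norm_nonneg q'.1) n).lt_of_ne' (hne0 q' ⟨hq', hκ'⟩)
    exact (div_le_iff₀ hq'0).1 (hmax ⟨hq', hκ'⟩)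
  · calc q'.2 ≤ C * ‖q'.1‖ * ‖q'.1‖ ^ n := by
          rw [mul_assoc, ← pow_succ']
          exact hC q' hq'
      _ ≤ q.2 / ‖q.1‖ ^ n * ‖q'.1‖ ^ n := by
          gcongr
          exact hκ'.le.trans hκq

variable {H : Type*} [NormedAddCommGroup H] [NormedSpace ℂ H] {Ω : Set H} {p e ν : H}
  {ℓ : H →L[ℂ] ℂ} {q : ℂ × ℝ} {n : ℕ}

/-- The slice of `Ω` by the affine plane through `p` spanned by `e` and `ν`, in the coordinates in
which `p + q.1 • e + q.2 • ν` is the point `(1, 1)`. -/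
def rescaledSlice (Ω : Set H) (p e ν : H) (q : ℂ × ℝ) : Set (ℂ × ℂ) :=
  {x | p + (q.1 * x.1) • e + (q.2 * x.2) • ν ∈ Ω}

lemma isOpen_rescaledSlice (ho : IsOpen Ω) : IsOpen (rescaledSlice Ω p e ν q) :=
  ho.preimage (by fun_prop)

lemma convex_rescaledSlice (hc : Convex ℝ Ω) : Convex ℝ (rescaledSlice Ω p e ν q) := by
  intro x hx y hy a b ha hb hab
  have := hc hx hy ha hb hab
  rw [rescaledSlice, mem_ofPred_eq]
  convert this using 1
  obtain rfl : b = 1 - a := by linarith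
  simp only [← Complex.coe_smul, Prod.fst_add, Prod.snd_add, Prod.smul_fst, Prod.smul_snd,
    smul_eq_mul]
  push_cast
  module

lemma isFlatOfOrder_rescaledSlice {η : ℝ} (hq0 : 0 < q.2) (hqη : q.2 < η) (hq1 : q.1 ≠ 0)
    (hq : p + q.1 • e + q.2 • ν ∉ Ω)
    (hmax : ∀ z : ℂ, ‖z‖ ≤ ‖q.1‖ → ∀ t ∈ Icc 0 η, q.2 * ‖z‖ ^ n < t * ‖q.1‖ ^ n →
      p + z • e + t • ν ∈ Ω) : IsFlatOfOrder n (rescaledSlice Ω p e ν q) := by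
  refine ⟨by simpa [rescaledSlice] using hq, fun w hw => ?_⟩
  have hlim : Tendsto (fun s : ℝ => (w, (s : ℂ))) (𝓝[>] (‖w‖ ^ n)) (𝓝 (w, (‖w‖ ^ n : ℂ))) :=
    (Continuous.tendsto' (by fun_prop) _ _ (by simp)).mono_left nhdsWithin_le_nhds
  have hlt : q.2 * ‖w‖ ^ n < η :=
    (mul_le_of_le_one_right hq0.le (pow_le_one₀ (norm_nonneg _) hw)).trans_lt hqη
  have hη : ∀ᶠ s : ℝ in 𝓝[>] (‖w‖ ^ n), q.2 * s < η :=
    nhdsWithin_le_nhds ((by fun_prop : Continuous fun s : ℝ => q.2 * s).continuousAt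
      |>.eventually_lt_const hlt)
  refine mem_closure_of_tendsto hlim ((hη.and self_mem_nhdsWithin).mono ?_)
  rintro s ⟨hs, hws : _ < s⟩
  have hs0 : 0 ≤ s := (pow_nonneg (norm_nonneg w) n).trans hws.le
  have := hmax (q.1 * w) ?_ (q.2 * s) ⟨by positivity, hs.le⟩ ?_
  · rwa [← Complex.coe_smul, Complex.ofReal_mul] at this
  · rw [norm_mul]
    exact mul_le_of_le_one_right (norm_nonneg _) hw
  · rw [norm_mul, mul_pow, mul_assoc, mul_comm s]
    gcongr

lemma exists_isFlatOfOrder_rescaledSlice (ho : IsOpen Ω) {r η C : ℝ}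
    (hη : ∀ z : ℂ, ‖z‖ ≤ r → p + z • e + η • ν ∈ Ω)
    (hC : ∀ z : ℂ, ‖z‖ ≤ r → ∀ t ∈ Icc 0 η, C * ‖z‖ ^ (n + 1) < t → p + z • e + t • ν ∈ Ω)
    (hne : ∃ z : ℂ, ‖z‖ ≤ r ∧ ∃ t ∈ Ioc 0 η, p + z • e + t • ν ∉ Ω) :
    ∃ q : ℂ × ℝ, ‖q.1‖ ≤ r ∧ q.2 ∈ Ioo 0 η ∧ IsFlatOfOrder n (rescaledSlice Ω p e ν q) := by
  obtain ⟨z₁, hz₁, t₁, ht₁, h₁⟩ := hne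
  have hT : IsCompact (closedBall 0 r ×ˢ Icc 0 η ∩ {q : ℂ × ℝ | p + q.1 • e + q.2 • ν ∉ Ω}) :=
    ((isCompact_closedBall 0 r).prod isCompact_Icc).inter_right
      (ho.isClosed_compl.preimage (by fun_prop))
  have hTC : ∀ q ∈ closedBall 0 r ×ˢ Icc 0 η ∩ {q : ℂ × ℝ | p + q.1 • e + q.2 • ν ∉ Ω},
      q.2 ≤ C * ‖q.1‖ ^ (n + 1) := fun q hq =>
    not_lt.1 fun hlt => hq.2 (hC q.1 (mem_closedBall_zero_iff.1 hq.1.1) q.2 hq.1.2 hlt)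
  obtain ⟨q, ⟨⟨hq1, hq2⟩, hq⟩, hq0, hmax⟩ := exists_isMaxOn_div_norm_pow hT hTC
    ⟨(z₁, t₁), ⟨⟨mem_closedBall_zero_iff.2 hz₁, Ioc_subset_Icc_self ht₁⟩, h₁⟩, ht₁.1⟩
  rw [mem_closedBall_zero_iff] at hq1
  have hqη : q.2 < η := hq2.2.lt_of_ne fun h => hq (h ▸ hη q.1 hq1)
  have hz : q.1 ≠ 0 := fun h => hq0.not_ge <| by
    simpa [h] using hTC q ⟨⟨mem_closedBall_zero_iff.2 hq1, hq2⟩, hq⟩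
  refine ⟨q, hq1, ⟨hq0, hqη⟩, isFlatOfOrder_rescaledSlice hq0 hqη hz hq
    fun z hz t ht hlt => ?_⟩
  by_contra hmem
  exact hlt.not_ge (hmax (z, t) ⟨⟨mem_closedBall_zero_iff.2 (hz.trans hq1), ht⟩, hmem⟩)

theorem HasContact.frequently_isFlatOfOrder (ho : IsOpen Ω)
    (h : HasContact Ω p e ν (n + 1)) (hν : ∀ᶠ t : ℝ in 𝓝[>] 0, p + t • ν ∈ Ω)
    (hne : ∃ᶠ z : ℂ in 𝓝 0, p + z • e ∉ closure Ω) :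
    ∃ᶠ q in 𝓝 0 ×ˢ 𝓝[>] 0, IsFlatOfOrder n (rescaledSlice Ω p e ν q) := by
  obtain ⟨C, -, h⟩ := h
  rw [((nhds_basis_ball (x := (0 : ℂ))).prod (nhdsGT_basis (0 : ℝ))).frequently_iff]
  rintro ⟨ε, δ⟩ ⟨hε, hδ⟩
  obtain ⟨δ', hδ', h⟩ := Metric.eventually_nhds_iff_ball.1 h
  obtain ⟨η, ⟨hη, hηδ, hηδ'⟩, hη0 : 0 < η⟩ := ((hν.and (nhdsWithin_le_nhds
    ((gt_mem_nhds hδ).and (gt_mem_nhds hδ')))).and self_mem_nhdsWithin).exists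
  have hcont : Continuous fun z : ℂ => p + z • e + η • ν := by fun_prop
  obtain ⟨ρ, hρ, hρη⟩ := Metric.eventually_nhds_iff_ball.1 (hcont.continuousAt.eventually
    (ho.mem_nhds (show p + (0 : ℂ) • e + η • ν ∈ Ω by simpa using hη)))
  obtain ⟨r, hr0, hr⟩ := exists_between (lt_min (lt_min hε hδ') hρ)
  simp only [lt_min_iff] at hr
  have hne' : ∃ z : ℂ, ‖z‖ ≤ r ∧ ∃ t ∈ Ioc 0 η, p + z • e + t • ν ∉ Ω := by
    obtain ⟨z, hz, hzr⟩ := (hne.and_eventually (Metric.ball_mem_nhds 0 hr0)).exists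
    obtain ⟨t, ⟨ht, htη⟩, ht0 : 0 < t⟩ := (((eventually_add_smul_notMem isClosed_closure hz 1 ν).and
      (nhdsWithin_le_nhds (gt_mem_nhds hη0))).and self_mem_nhdsWithin).exists
    refine ⟨z, (mem_ball_zero_iff.1 hzr).le, t, ⟨ht0, htη.le⟩, fun hmem => ht ?_⟩
    simpa using subset_closure hmem
  have hball (z : ℂ) (hz : ‖z‖ ≤ r) (t : ℝ) (ht : t ∈ Icc 0 η) : (z, t) ∈ ball (0 : ℂ × ℝ) δ' := by
    rw [mem_ball_zero_iff, Prod.norm_def, max_lt_iff, Real.norm_of_nonneg ht.1]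
    exact ⟨hz.trans_lt hr.1.2, ht.2.trans_lt hηδ'⟩
  obtain ⟨q, hq1, hq2, hq⟩ := exists_isFlatOfOrder_rescaledSlice ho
    (fun z hz => hρη z (mem_ball_zero_iff.2 (hz.trans_lt hr.2)))
    (fun z hz t ht => h (z, t) (hball z hz t ht)) hne'
  exact ⟨q, ⟨mem_ball_zero_iff.2 (hq1.trans_lt hr.1.1), hq2.1, hq2.2.trans hηδ⟩, hq⟩

lemma IsInnerNormal.eventually_mem_rescaledSlice (hν : IsInnerNormal Ω p ℓ ν) {b : ℂ}
    (hb : 0 < b.re) : ∀ᶠ q in 𝓝 0 ×ˢ 𝓝[>] 0, (0, b) ∈ rescaledSlice Ω p e ν q := by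
  simpa [rescaledSlice] using (hν.eventually_mem b hb).prod_inr (𝓝 (0 : ℂ))

lemma IsInnerNormal.notMem_rescaledSlice (hν : IsInnerNormal Ω p ℓ ν) (he : ℓ e = 0)
    (hq : 0 < q.2) {x : ℂ × ℂ} (hx : x.2.re ≤ 0) : x ∉ rescaledSlice Ω p e ν q := by
  intro hmem
  have := hν.re_pos _ hmem
  rw [add_assoc, add_sub_cancel_left, map_add, map_smul, map_smul, he, hν.map_eq_one, smul_zero,
    zero_add, smul_eq_mul, mul_one, Complex.re_ofReal_mul] at this
  exact (mul_nonpos_of_nonneg_of_nonpos hq.le hx).not_gt this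

theorem hasBidiskSections_of_isFlatOfOrder (ho : IsOpen Ω) (hc : Convex ℝ Ω)
    (hν : IsInnerNormal Ω p ℓ ν) (hflat : ∃ᶠ n in atTop, ∃ e, ℓ e = 0 ∧
      ∃ᶠ q in 𝓝 0 ×ˢ 𝓝[>] 0, IsFlatOfOrder n (rescaledSlice Ω p e ν q)) :
    HasBidiskSections Ω := by
  classical
  intro S K hK hKΩ
  have hD (e : H) (b : ℂ) (hb : 0 < b.re) := hν.eventually_mem_rescaledSlice (e := e) hb
  obtain ⟨s, hs⟩ := exists_zoom_of_isFlatOfOrder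
    (fun e q => isOpen_rescaledSlice (p := p) (e := e) (ν := ν) (q := q) ho)
    (fun e q => convex_rescaledSlice hc) hD (insert 0 S)
  obtain ⟨n, ⟨e, he, hfreq⟩, hn⟩ := (hflat.and_eventually hs).exists
  have hbase : ∀ᶠ q : ℂ × ℝ in 𝓝 0 ×ˢ 𝓝[>] 0,
      p + (q.1 * (1 - s)) • e + (q.2 : ℂ) • ν ∉ K := by
    have hcont : Continuous fun q : ℂ × ℝ => p + (q.1 * (1 - s)) • e + (q.2 : ℂ) • ν := by fun_prop
    have hp : p ∉ K := fun h => by simpa using hν.re_pos p (hKΩ h)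
    have := (hcont.tendsto' (0, 0) p (by simp)).eventually (hK.isClosed.isOpen_compl.mem_nhds hp)
    rw [nhds_prod_eq] at this
    exact this.filter_mono (prod_mono_right _ nhdsWithin_le_nhds)
  have hpos : ∀ᶠ q : ℂ × ℝ in 𝓝 0 ×ˢ 𝓝[>] 0, 0 < q.2 := eventually_mem_nhdsWithin.prod_inr _
  obtain ⟨q, hq, ⟨hqS, hqK⟩, hq0⟩ :=
    (hfreq.and_eventually (((hn e).and hbase).and hpos)).exists
  have heq (x : ℂ × ℂ) : p + (q.1 * (1 - s)) • e + (q.2 : ℂ) • ν +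
      (x.1 • (q.1 * s) • e + x.2 • (-q.2 : ℂ) • ν) =
      p + (q.1 * (1 + s * (x.1 - 1))) • e + (q.2 * (1 - x.2)) • ν := by module
  have hbaseΩ := (hqS hq 0 (Finset.mem_insert_self 0 S)).1 (by simp) (by simp)
  refine ⟨p + (q.1 * (1 - s)) • e + (q.2 : ℂ) • ν, ⟨?_, hqK⟩,
    (LinearMap.toSpanSingleton ℂ H ((q.1 * s) • e)).coprod
      (.toSpanSingleton ℂ H ((-q.2 : ℂ) • ν)), fun x hx => ?_⟩
  · simpa [rescaledSlice, ← sub_eq_add_neg] using hbaseΩ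
  obtain ⟨hin, hout⟩ := hqS hq x (Finset.mem_insert_of_mem hx)
  simp only [LinearMap.coprod_apply, LinearMap.toSpanSingleton_apply, heq,
    halfPlaneGauge_lt_one_iff, one_lt_halfPlaneGauge_iff]
  exact ⟨fun hx => hin hx.1 hx.2, fun hx' => hx'.elim hout fun h2 =>
    hν.notMem_rescaledSlice he hq0 (x := (1 + s * (x.1 - 1), 1 - x.2)) (by simpa using h2.le)⟩

end Rescaling

section InfiniteType

variable {H : Type*} [NormedAddCommGroup H] [NormedSpace ℂ H] {Ω : Set H} {p : H}

lemma exists_hasContact_of_le_vanishOrder [CompleteSpace H] (ho : IsOpen Ω) (hc : Convex ℝ Ω)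
    {ℓ : H →L[ℂ] ℂ} {ν : H} (hν : IsInnerNormal Ω p ℓ ν) {r : H → ℝ} {c : ℝ} (hc0 : 0 < c)
    (hr : ContDiffAt ℝ (⊤ : ℕ∞) r p) (hr0 : r p = 0)
    (hrΩ : ∀ᶠ q : H × ℝ in 𝓝 (p, 0), c * |r q.1| < q.2 → q.1 + q.2 • ν ∈ Ω) {ε : ℝ} (hε : 0 < ε)
    {ζ : ℂ → H} (hζ : DifferentiableOn ℂ ζ (ball 0 ε)) (hζ0 : ζ 0 = p)
    (hne : ¬ ∀ w ∈ ball (0 : ℂ) ε, ζ w = p) {N : ℕ}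
    (hN : (N : ℕ∞) * vanishOrder ζ ≤ vanishOrder fun w => r (ζ w)) :
    ∃ e, e ≠ 0 ∧ HasContact Ω p e ν N := by
  subst hζ0
  obtain ⟨k, h, hk, hord, hh, hh0, hζh⟩ := exists_leading_term hε hζ hne
  have hO := isBigO_of_mul_vanishOrder_le (hζ.analyticAt (ball_mem_nhds 0 hε)) hr hr0 hord.ge hN
  obtain ⟨C, hC, hmem⟩ := exists_add_pow_smul_add_smul_mem hc0 hrΩ hk hh.continuousAt
    (hO.congr' (hζh.mono fun w hw => congrArg r hw) EventuallyEq.rfl)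
  exact ⟨h 0, hh0, .of_closure ho hc (by simpa using hν.eventually_mem 1 (by simp))
    (hasContact_closure_of_analyticAt hc hh hk hC hmem)⟩

/-- Either one of the directions of high contact spans a complex disc in the boundary, or `Ω` can
be rescaled along these directions to domains flat of arbitrarily high order. -/
theorem hasBidiskSections_of_infiniteTypePoint [CompleteSpace H] (hΩ : InX Ω)
    (hp : InfiniteTypePoint (frontier Ω) p) : HasBidiskSections Ω := by
  obtain ⟨hpΓ, U, r, hU, hpU, hr, hdr, hΓ, htype⟩ := hp
  obtain ⟨ho, hc, -⟩ := hΩ.1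
  have hfr : ∀ x ∈ U, x ∈ frontier Ω ↔ r x = 0 := fun x hx => by
    simpa [hx] using Set.ext_iff.1 hΓ x
  have hrp := hr.contDiffAt (hU.mem_nhds hpU)
  obtain ⟨ℓ, ν, hν, c, hc0, hrΩ⟩ := exists_isInnerNormal hΩ.1
    (hrp.hasStrictFDerivAt (by simp)) (hdr p hpU) (eventually_of_mem (hU.mem_nhds hpU) hfr) hpΓ
  have hcontact : ∀ n ≥ 1, ∃ e, e ≠ 0 ∧ ℓ e = 0 ∧ HasContact Ω p e ν (n + 1) := fun n hn => by
    obtain ⟨ε, ζ, hε, hζ, hζ0, hζne, hord⟩ := htype (n + 1)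
    obtain ⟨e, he, h⟩ := exists_hasContact_of_le_vanishOrder ho hc hν hc0 hrp
      ((hfr p hpU).1 hpΓ) hrΩ hε hζ hζ0 hζne hord
    exact ⟨e, he, h.map_eq_zero (by omega) hν, h⟩
  by_cases hdisc : ∃ e, e ≠ 0 ∧ 0 ∈ interior (closureSlice Ω p e)
  · obtain ⟨e, he, h0⟩ := hdisc
    exact hasBidiskSections_of_zero_mem_interior hΩ (fun h => hpΓ.2 (ho.interior_eq.symm ▸ h)) he h0
  · refine hasBidiskSections_of_isFlatOfOrder ho hc hν (Eventually.frequently ?_)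
    filter_upwards [eventually_ge_atTop 1] with n hn
    obtain ⟨e, he, hℓe, h⟩ := hcontact n hn
    refine ⟨e, hℓe, h.frequently_isFlatOfOrder ho (by simpa using hν.eventually_mem 1 (by simp))
      fun hev => hdisc ⟨e, he, mem_interior_iff_mem_nhds.2 ?_⟩⟩
    exact hev.mono fun z => not_not.1

end InfiniteType

theorem statement1_general [FiniteDimensional ℂ E] {Ω : Set E} (hΩ : InX Ω)
    (h : (∃ f : ℂ → E, DifferentiableOn ℂ f (Metric.ball 0 1) ∧
        MapsTo f (Metric.ball (0 : ℂ) 1) (frontier Ω) ∧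
        ¬ ∃ c, ∀ w ∈ Metric.ball (0 : ℂ) 1, f w = c) ∨
      ∃ p, InfiniteTypePoint (frontier Ω) p) :
    ∃ Ωlim V : Set E, IsAffineLimit Ω Ωlim ∧
      (∃ (q : E) (W : Submodule ℂ E), Module.finrank ℂ W = 2 ∧ V = {x | x - q ∈ W}) ∧
      Biholomorphic (V ∩ Ωlim) unitBidisk := by
  have : CompleteSpace E := FiniteDimensional.complete ℂ E
  refine HasBidiskSections.exists_isAffineLimit ?_ hΩ
  rcases h with ⟨f, hf, hmap, hne⟩ | ⟨p, hp⟩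
  · exact hasBidiskSections_of_holomorphic_disc hΩ hf hmap hne
  · exact hasBidiskSections_of_infiniteTypePoint hΩ hp

/-- if `Ω ∈ 𝕏_d` and either `∂Ω` contains a non-constant holomorphic disk,
or `∂Ω` is a `C^∞` hypersurface with a point of infinite D'Angelo type, then there are an
affine limit `Ω_∞` of `Ω` and a complex affine 2-plane `V` with `V ∩ Ω_∞` biholomorphic
to `𝔻 × 𝔻`. -/
theorem statement1 (d : ℕ) (Ω : Set (EuclideanSpace ℂ (Fin d))) (hΩ : InX Ω)
    (h : (∃ f : ℂ → EuclideanSpace ℂ (Fin d),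
        DifferentiableOn ℂ f (Metric.ball 0 1) ∧
        MapsTo f (Metric.ball (0:ℂ) 1) (frontier Ω) ∧
        ¬ ∃ c, ∀ w ∈ Metric.ball (0:ℂ) 1, f w = c) ∨
      (IsSmoothRealHypersurface (frontier Ω) ∧
        ∃ p, InfiniteTypePoint (frontier Ω) p)) :
    ∃ (Ωlim V : Set (EuclideanSpace ℂ (Fin d))),
      IsAffineLimit Ω Ωlim ∧
      (∃ (q : EuclideanSpace ℂ (Fin d)) (W : Submodule ℂ (EuclideanSpace ℂ (Fin d))),
        Module.finrank ℂ W = 2 ∧ V = {x | x - q ∈ W}) ∧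
      Biholomorphic (V ∩ Ωlim) unitBidisk :=
  statement1_general hΩ (h.imp_right And.right)
end
end

section
/- Suppose Ω_n is a sequence of convex domains in ℂ^d containing no complex affine line converging in the local Hausdorff topology to a convex domain Ω ∈ 𝕏_d, p_n ∈ Ω_n ∩ Ω is a sequence converging to p ∈ Ω, and v_n are unit vectors in ℂ^d converging to v. Then k_Ω(p; v) ≤ liminf_{n→∞} k_{Ω_n}(p_n; v_n). -/
open Set Metric Filter Topology
open scoped ENNReal NNReal

noncomputable section

/-!
If `k_{Ω_n}(p_n; v_n) < c` for infinitely many `n`, pick holomorphic disks `f_n : 𝔻 → Ω_n` through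
`p_n` and scalars `ξ_n` with `ξ_n f_n'(0) = v_n`, `|ξ_n| < c`. A limit `(ξ, f)` satisfies
`ξ f'(0) = v`, `|ξ| ≤ c`, and maps `𝔻` into `closure Ω`, hence into `Ω` by the maximum principle
because `f(0) = p ∈ Ω`; so `k_Ω(p; v) ≤ c`.

A limit exists by Montel's theorem once the `f_n` are locally bounded. As `Ω` contains no complex
line, every complex line through `p` contains a point outside `closure Ω`. Such a point lies
outside `Ω_n` for large `n`, also after small changes of the base point and the direction, so by
compactness of the unit sphere every complex line through `p_n` leaves `Ω_n` within a distance `Λ`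
of `p_n` independent of `n`. Supporting hyperplanes at the exit points and the Borel-Carathéodory
theorem then give `‖f_n(z) - p_n‖ ≤ 2 Λ |z| / (1 - |z|)`.
-/

section LocalHausdorff

variable {ι E : Type*} [NormedAddCommGroup E] {Ωn : ℕ → Set E} {Ω : Set E}

theorem LocHausConv.mem_closure_of_tendsto (hconv : LocHausConv Ωn Ω) (hne : Ω.Nonempty)
    {l : Filter ι} {k : ι → ℕ} (hk : Tendsto k l atTop) {x : ι → E} {y : E}
    (hxy : Tendsto x l (𝓝 y)) (hmem : ∃ᶠ i in l, x i ∈ Ωn (k i)) : y ∈ closure Ω := by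
  obtain ⟨R₀, -, hconv⟩ := hconv
  obtain ⟨q, hq⟩ := hne
  obtain ⟨R, hR⟩ := exists_gt (max R₀ (max ‖q‖ ‖y‖))
  simp only [max_lt_iff] at hR
  obtain ⟨hR₀, hqR, hyR⟩ := hR
  rw [Metric.mem_closure_iff]
  intro ε hε
  obtain ⟨i, hi, hdist, hxR, hxε⟩ := (hmem.and_eventually
    (((hconv R hR₀.le).comp hk |>.eventually_lt_const (half_pos hε)).and
      ((hxy.norm.eventually_lt_const hyR).and
        (Metric.tendsto_nhds.1 hxy (ε / 2) (half_pos hε))))).exists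
  have hxi : x i ∈ Ωn (k i) ∩ ball 0 R := ⟨hi, mem_ball_zero_iff.2 hxR⟩
  -- Both truncated sets are non-empty, so the Hausdorff distance is not the junk value `0`.
  have hfin : hausdorffEDist (Ωn (k i) ∩ ball 0 R) (Ω ∩ ball 0 R) ≠ ⊤ :=
    hausdorffEDist_ne_top_of_nonempty_of_bounded ⟨_, hxi⟩ ⟨q, hq, mem_ball_zero_iff.2 hqR⟩
      (isBounded_ball.subset inter_subset_right) (isBounded_ball.subset inter_subset_right)
  obtain ⟨y', hy', hxy'⟩ := exists_dist_lt_of_hausdorffDist_lt hxi hdist hfin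
  refine ⟨y', hy'.1, ?_⟩
  calc dist y y' ≤ dist (x i) y + dist (x i) y' := dist_triangle_left _ _ _
    _ < ε := by linarith

end LocalHausdorff

section DirectionallyBounded

variable {E : Type*} [NormedAddCommGroup E] [NormedSpace ℂ E]

/-- `S` is directionally bounded by `Λ` at `p` if every complex line through `p` leaves `S` at a
point within distance `Λ` of `p`. For open `S ∋ p` this forces `distInDir S p b ≤ Λ` for every
`b ≠ 0`; directions are normalized to lie in the unit sphere, which is compact in finite dimension,
and `Λ` is taken in `ℝ≥0` so that the zero space is no exception. -/
def DirectionallyBounded (S : Set E) (p : E) (Λ : ℝ≥0) : Prop :=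
  ∀ b ∈ sphere (0 : E) 1, ∃ lam : ℂ, ‖lam‖ ≤ Λ ∧ p + lam • b ∉ S

theorem InX.exists_notMem_closure {Ω : Set E} (hΩ : InX Ω) {q b : E} (hq : q ∈ Ω) (hb : b ≠ 0) :
    ∃ lam : ℂ, q + lam • b ∉ closure Ω := by
  obtain ⟨⟨hopen, hconvex, -⟩, hline⟩ := hΩ
  by_contra! hcl
  refine hline q b hb fun lam => ?_
  have hmid := hconvex.combo_interior_closure_mem_interior
    (by rwa [hopen.interior_eq]) (hcl (2 * lam))
    (show (0 : ℝ) < 1 / 2 by norm_num) (show (0 : ℝ) ≤ 1 / 2 by norm_num) (by norm_num)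
  rw [hopen.interior_eq] at hmid
  convert hmid using 1
  module

theorem LocHausConv.eventually_directionallyBounded [ProperSpace E] {Ωn : ℕ → Set E} {Ω : Set E}
    (hconv : LocHausConv Ωn Ω) (hΩ : InX Ω) {p : ℕ → E} {q : E} (hq : q ∈ Ω)
    (hpq : Tendsto p atTop (𝓝 q)) :
    ∃ Λ : ℝ≥0, ∀ᶠ n in atTop, DirectionallyBounded (Ωn n) (p n) Λ := by
  refine (isCompact_sphere (0 : E) 1).induction_on
    (p := fun s => ∃ Λ : ℝ≥0, ∀ᶠ n in atTop, ∀ b ∈ s, ∃ lam : ℂ, ‖lam‖ ≤ Λ ∧ p n + lam • b ∉ Ωn n)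
    ⟨0, by simp⟩ ?mono ?union ?nhds
  case mono =>
    exact fun s t hst ⟨Λ, hΛ⟩ => ⟨Λ, hΛ.mono fun n hn b hb => hn b (hst hb)⟩
  case union =>
    rintro s t ⟨Λ₁, h₁⟩ ⟨Λ₂, h₂⟩
    refine ⟨max Λ₁ Λ₂, ?_⟩
    filter_upwards [h₁, h₂] with n hn₁ hn₂
    rintro b (hb | hb)
    · exact (hn₁ b hb).imp fun lam h => ⟨h.1.trans (le_max_left _ _), h.2⟩
    · exact (hn₂ b hb).imp fun lam h => ⟨h.1.trans (le_max_right _ _), h.2⟩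
  case nhds =>
    intro b hb
    obtain ⟨lam, hlam⟩ := hΩ.exists_notMem_closure hq (ne_zero_of_mem_unit_sphere ⟨b, hb⟩)
    have hlim : Tendsto (fun i : ℕ × E => p i.1 + lam • i.2) (atTop ×ˢ 𝓝 b) (𝓝 (q + lam • b)) :=
      (hpq.comp tendsto_fst).add (tendsto_snd.const_smul lam)
    have hev : ∀ᶠ i : ℕ × E in atTop ×ˢ 𝓝 b, p i.1 + lam • i.2 ∉ Ωn i.1 := by
      by_contra! hmem
      exact hlam (hconv.mem_closure_of_tendsto hΩ.1.2.2 tendsto_fst hlim hmem)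
    obtain ⟨N, hN, t, ht, hNt⟩ := eventually_prod_iff.1 hev
    exact ⟨{b' | t b'}, mem_nhdsWithin_of_mem_nhds ht, ‖lam‖₊,
      hN.mono fun n hn b' hb' => ⟨lam, le_rfl, hNt hn hb'⟩⟩

/-- A supporting functional of `S` at `f 0 + lam • (f z - f 0)` sends the disk into a half-plane, to
which the Borel-Carathéodory theorem applies. -/
theorem one_le_norm_mul_of_add_smul_sub_notMem {S : Set E} (hc : Convex ℝ S) (ho : IsOpen S)
    {f : ℂ → E} {R : ℝ} (hd : DifferentiableOn ℂ f (ball 0 R)) (hf : MapsTo f (ball 0 R) S)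
    {z lam : ℂ} (hz : z ∈ ball 0 R) (hlam : f 0 + lam • (f z - f 0) ∉ S) :
    1 ≤ ‖lam‖ * (2 * ‖z‖ / (R - ‖z‖)) := by
  have hR : 0 < R := pos_of_mem_ball hz
  have hRz : 0 < R - ‖z‖ := sub_pos.2 (mem_ball_zero_iff.1 hz)
  obtain ⟨φ, hφ⟩ := RCLike.geometric_hahn_banach_open_point (𝕜 := ℂ) hc ho hlam
  set g : ℂ → ℂ := fun w => φ (f w - f 0) with hg
  have hφg : ∀ w ∈ ball (0 : ℂ) R, (g w).re < (lam * g z).re := fun w hw => by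
    have := hφ (f w) (hf hw)
    simp only [RCLike.re_to_complex, map_add, map_smul, smul_eq_mul] at this
    simp only [hg, map_sub φ (f w), Complex.sub_re]
    linarith [Complex.add_re (φ (f 0)) (lam * φ (f z - f 0))]
  have hM : 0 < (lam * g z).re := by simpa [hg] using hφg 0 (mem_ball_self hR)
  have hgz : 0 < ‖g z‖ := norm_pos_iff.2 fun h => by simp [h] at hM
  refine le_of_mul_le_mul_right ?_ hgz
  calc 1 * ‖g z‖ = ‖g z‖ := one_mul _
    _ ≤ 2 * (lam * g z).re * ‖z‖ / (R - ‖z‖) :=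
      Complex.borelCaratheodory_zero hM (φ.differentiable.comp_differentiableOn (hd.sub_const _))
        (fun w hw => (hφg w hw).le) hR hz (by simp [hg])
    _ ≤ 2 * (‖lam‖ * ‖g z‖) * ‖z‖ / (R - ‖z‖) := by
      gcongr
      exact (Complex.re_le_norm _).trans (norm_mul_le _ _)
    _ = ‖lam‖ * (2 * ‖z‖ / (R - ‖z‖)) * ‖g z‖ := by ring

theorem DirectionallyBounded.norm_sub_le {S : Set E} {Λ : ℝ≥0} {f : ℂ → E}
    (hS : DirectionallyBounded S (f 0) Λ) (hc : Convex ℝ S) (ho : IsOpen S) {R : ℝ}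
    (hd : DifferentiableOn ℂ f (ball 0 R)) (hf : MapsTo f (ball 0 R) S) {z : ℂ}
    (hz : z ∈ ball 0 R) : ‖f z - f 0‖ ≤ Λ * (2 * ‖z‖ / (R - ‖z‖)) := by
  have hRz : 0 < R - ‖z‖ := sub_pos.2 (mem_ball_zero_iff.1 hz)
  rcases eq_or_ne (f z - f 0) 0 with h0 | h0
  · rw [h0, norm_zero]
    positivity
  obtain ⟨lam, hlamΛ, hlam⟩ := hS ((‖f z - f 0‖⁻¹ : ℂ) • (f z - f 0))
    (mem_sphere_zero_iff_norm.2 (norm_smul_inv_norm h0))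
  rw [smul_smul] at hlam
  have hone := one_le_norm_mul_of_add_smul_sub_notMem hc ho hd hf hz hlam
  rw [norm_mul, norm_inv, Complex.norm_real, norm_norm] at hone
  calc ‖f z - f 0‖ = ‖f z - f 0‖ * 1 := (mul_one _).symm
    _ ≤ ‖f z - f 0‖ * (‖lam‖ * ‖f z - f 0‖⁻¹ * (2 * ‖z‖ / (R - ‖z‖))) := by gcongr
    _ = ‖lam‖ * (2 * ‖z‖ / (R - ‖z‖)) := by field_simp
    _ ≤ Λ * (2 * ‖z‖ / (R - ‖z‖)) := by gcongr

end DirectionallyBounded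

section NormalFamilies

theorem exists_tendsto_ultrafilter_of_norm_le {ι E : Type*} [SeminormedAddCommGroup E]
    [ProperSpace E] (U : Ultrafilter ι) {x : ι → E} {C : ℝ} (hC : ∀ᶠ i in U, ‖x i‖ ≤ C) :
    ∃ y, Tendsto x U (𝓝 y) := by
  obtain ⟨y, -, hy⟩ := (isCompact_closedBall (0 : E) C).ultrafilter_le_nhds (U.map x)
    (le_principal_iff.2 (hC.mono fun i hi => mem_closedBall_zero_iff.2 hi))
  exact ⟨y, hy⟩

theorem tendstoLocallyUniformlyOn_of_eventually_dist_le {ι X Y : Type*} [PseudoMetricSpace X]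
    [PseudoMetricSpace Y] {l : Filter ι} [l.NeBot] {F : ι → X → Y} {f : X → Y} {s : Set X}
    (hF : ∀ x ∈ s, ∃ K : ℝ, ∃ t ∈ 𝓝[s] x, ∀ᶠ i in l, ∀ y ∈ t, dist (F i y) (F i x) ≤ K * dist y x)
    (hf : ∀ x ∈ s, Tendsto (F · x) l (𝓝 (f x))) : TendstoLocallyUniformlyOn F f l s := by
  rw [Metric.tendstoLocallyUniformlyOn_iff]
  intro ε hε x hx
  obtain ⟨K, t, ht, hK⟩ := hF x hx
  have hsmall : ∀ᶠ y in 𝓝[s] x, K * dist y x < ε / 3 := by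
    have hlim : Tendsto (fun y => K * dist y x) (𝓝[s] x) (𝓝 (K * dist x x)) :=
      ((continuous_id.dist continuous_const).const_mul K).continuousWithinAt
    exact hlim.eventually_lt_const (by simpa using hε)
  refine ⟨_, inter_mem (inter_mem ht self_mem_nhdsWithin) hsmall, ?_⟩
  filter_upwards [hK, Metric.tendsto_nhds.1 (hf x hx) (ε / 3) (by positivity)]
    with i hi hix y ⟨⟨hyt, hys⟩, hyx⟩
  have hfy : dist (f y) (f x) ≤ K * dist y x :=
    le_of_tendsto ((hf y hys).dist (hf x hx)) (hK.mono fun j hj => hj y hyt)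
  calc dist (f y) (F i y) ≤ dist (f y) (f x) + dist (f x) (F i x) + dist (F i x) (F i y) :=
        dist_triangle4 _ _ _ _
    _ = dist (f y) (f x) + dist (F i x) (f x) + dist (F i y) (F i x) := by
        rw [dist_comm (f x), dist_comm (F i x) (F i y)]
    _ < ε := by linarith [hi y hyt, show K * dist y x < ε / 3 from hyx]

variable {ι D E : Type*} [NormedAddCommGroup D] [NormedSpace ℂ D]
  [NormedAddCommGroup E] [NormedSpace ℂ E]

theorem dist_le_two_mul_div_mul_of_norm_le {g : D → E} {x : D} {r C : ℝ}
    (hd : DifferentiableOn ℂ g (ball x r)) (hC : ∀ y ∈ ball x r, ‖g y‖ ≤ C) {y : D}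
    (hy : y ∈ ball x r) : dist (g y) (g x) ≤ 2 * C / r * dist y x := by
  refine Complex.dist_le_div_mul_dist_of_mapsTo_ball hd (fun w hw => ?_) hy
  rw [mem_closedBall, dist_eq_norm]
  linarith [norm_sub_le (g w) (g x), hC w hw, hC x (mem_ball_self (pos_of_mem_ball hy))]

/-- Montel's theorem; an ultrafilter plays the role of the convergent subsequence. -/
theorem exists_tendstoLocallyUniformlyOn_of_locallyBounded [ProperSpace E] (U : Ultrafilter ι)
    {W : Set D} (hW : IsOpen W) {F : ι → D → E} (hd : ∀ᶠ i in U, DifferentiableOn ℂ (F i) W)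
    (hb : ∀ x ∈ W, ∃ C : ℝ, ∃ t ∈ 𝓝 x, ∀ᶠ i in U, ∀ y ∈ t, ‖F i y‖ ≤ C) :
    ∃ f : D → E, TendstoLocallyUniformlyOn F f U W := by
  have hlim : ∀ x ∈ W, ∃ y, Tendsto (F · x) U (𝓝 y) := fun x hx => by
    obtain ⟨C, t, ht, hC⟩ := hb x hx
    exact exists_tendsto_ultrafilter_of_norm_le U (hC.mono fun i hi => hi x (mem_of_mem_nhds ht))
  choose! f hf using hlim
  refine ⟨f, tendstoLocallyUniformlyOn_of_eventually_dist_le (fun x hx => ?_) hf⟩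
  obtain ⟨C, t, ht, hC⟩ := hb x hx
  obtain ⟨r, hr, hball⟩ := Metric.mem_nhds_iff.1 (inter_mem ht (hW.mem_nhds hx))
  refine ⟨2 * C / r, ball x r, mem_nhdsWithin_of_mem_nhds (ball_mem_nhds x hr), ?_⟩
  filter_upwards [hd, hC] with i hdi hCi y hy
  exact dist_le_two_mul_div_mul_of_norm_le (hdi.mono fun w hw => (hball hw).2)
    (fun w hw => hCi w (hball hw).1) hy

/-- If `f z ∉ S`, a supporting functional `φ` of `S` at `f z` makes `‖exp ∘ φ ∘ f‖` attain its
maximum at `z`, so it is constant by the maximum principle, contradicting `f z₀ ∈ S`. -/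
theorem mapsTo_of_mapsTo_closure_of_convex {S : Set E} (hc : Convex ℝ S) (ho : IsOpen S)
    {W : Set D} (hW : IsOpen W) (hWc : IsPreconnected W) {f : D → E}
    (hd : DifferentiableOn ℂ f W) (hf : MapsTo f W (closure S)) {z₀ : D} (hz₀ : z₀ ∈ W)
    (hfz₀ : f z₀ ∈ S) : MapsTo f W S := by
  intro z hz
  by_contra hzS
  obtain ⟨φ, hφ⟩ := RCLike.geometric_hahn_banach_open_point (𝕜 := ℂ) hc ho hzS
  simp only [RCLike.re_to_complex] at hφ
  have hle : ∀ w ∈ W, (φ (f w)).re ≤ (φ (f z)).re := fun w hw =>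
    closure_minimal (t := {y | (φ y).re ≤ (φ (f z)).re}) (fun y hy => (hφ y hy).le)
      (isClosed_le (by fun_prop) continuous_const) (hf hw)
  have hmax : IsMaxOn (norm ∘ fun w => Complex.exp (φ (f w))) W z := fun w hw => by
    simpa [Complex.norm_exp] using hle w hw
  have hconst := Complex.norm_eqOn_of_isPreconnected_of_isMaxOn hWc hW
    (φ.differentiable.comp_differentiableOn hd).cexp hz hmax hz₀
  simp only [Function.comp_apply, Function.const_apply, Complex.norm_exp, Real.exp_eq_exp]
    at hconst
  exact (hφ _ hfz₀).ne hconst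

end NormalFamilies

section Kobayashi

variable {E : Type*} [NormedAddCommGroup E] [NormedSpace ℂ E]

/-- `f` is a holomorphic disk in `Ω` centred at `z` with `ξ • f'(0) = v`, i.e. `(ξ, f)` is a
competitor in the infimum defining `kob Ω z v`. -/
structure IsKobDisk (Ω : Set E) (z v : E) (ξ : ℂ) (f : ℂ → E) : Prop where
  differentiableOn : DifferentiableOn ℂ f (ball 0 1)
  mapsTo : MapsTo f (ball 0 1) Ω
  map_zero : f 0 = z
  smul_deriv : ξ • deriv f 0 = v

variable {Ω : Set E} {z v : E}

theorem IsKobDisk.kob_le {ξ : ℂ} {f : ℂ → E} (h : IsKobDisk Ω z v ξ f) : kob Ω z v ≤ ‖ξ‖ := by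
  refine csInf_le ⟨0, ?_⟩ ⟨ξ, f, h.1, h.2, h.3, h.4, rfl⟩
  rintro c ⟨ξ', f', -, -, -, -, rfl⟩
  exact norm_nonneg ξ'

theorem exists_isKobDisk (ho : IsOpen Ω) (hz : z ∈ Ω) (v : E) : ∃ ξ f, IsKobDisk Ω z v ξ f := by
  have hline : Continuous fun w : ℂ => z + w • v := by fun_prop
  obtain ⟨ε, hε, hball⟩ := Metric.isOpen_iff.1 (ho.preimage hline) 0 (by simpa using hz)
  refine ⟨(ε : ℂ)⁻¹, fun w => z + w • (ε : ℂ) • v, by fun_prop, fun w hw => ?_, by simp, ?_⟩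
  · have hεw : w * ε ∈ ball (0 : ℂ) ε := by
      rw [mem_ball_zero_iff, norm_mul, Complex.norm_real, Real.norm_of_nonneg hε.le]
      exact mul_lt_of_lt_one_left hε (mem_ball_zero_iff.1 hw)
    simpa only [smul_smul, mem_preimage] using hball hεw
  · have hderiv : HasDerivAt (fun w : ℂ => z + w • (ε : ℂ) • v) ((ε : ℂ) • v) 0 := by
      simpa using ((hasDerivAt_id (0 : ℂ)).smul_const ((ε : ℂ) • v)).const_add z
    rw [hderiv.deriv, inv_smul_smul₀ (by exact_mod_cast hε.ne')]

theorem exists_isKobDisk_norm_lt (ho : IsOpen Ω) (hz : z ∈ Ω) {c : ℝ} (hc : kob Ω z v < c) :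
    ∃ ξ f, IsKobDisk Ω z v ξ f ∧ ‖ξ‖ < c := by
  obtain ⟨ξ₀, f₀, h₀⟩ := exists_isKobDisk ho hz v
  obtain ⟨_, ⟨ξ, f, hd, hm, h0, hv, rfl⟩, hξ⟩ :=
    exists_lt_of_csInf_lt (by exact ⟨_, ξ₀, f₀, h₀.1, h₀.2, h₀.3, h₀.4, rfl⟩) hc
  exact ⟨ξ, f, ⟨hd, hm, h0, hv⟩, hξ⟩

variable {Ωn : ℕ → Set E} {p vn : ℕ → E}

theorem LocHausConv.exists_nhds_norm_isKobDisk_le [ProperSpace E] (hconv : LocHausConv Ωn Ω)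
    (ho : ∀ n, IsOpen (Ωn n)) (hc : ∀ n, Convex ℝ (Ωn n)) (hΩ : InX Ω) (hz : z ∈ Ω)
    (hpz : Tendsto p atTop (𝓝 z)) {w : ℂ} (hw : w ∈ ball 0 1) :
    ∃ C : ℝ, ∃ t ∈ 𝓝 w, ∀ᶠ n in atTop, ∀ v ξ f, IsKobDisk (Ωn n) (p n) v ξ f →
      ∀ x ∈ t, ‖f x‖ ≤ C := by
  obtain ⟨Λ, hΛ⟩ := hconv.eventually_directionallyBounded hΩ hz hpz
  set B : ℂ → ℝ := fun x => Λ * (2 * ‖x‖ / (1 - ‖x‖))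
  have hw1 : 1 - ‖w‖ ≠ 0 := (sub_pos.2 (mem_ball_zero_iff.1 hw)).ne'
  have hB : ContinuousAt B w := by fun_prop (disch := exact hw1)
  refine ⟨(B w + 1) + (‖z‖ + 1), _, inter_mem (isOpen_ball.mem_nhds hw)
    (hB.eventually_lt_const (lt_add_one _)), ?_⟩
  filter_upwards [hΛ, hpz.norm.eventually_lt_const (lt_add_one ‖z‖)]
    with n hΛn hpn v ξ f hf x ⟨hx, hxB⟩
  have hfx : ‖f x - f 0‖ ≤ B x :=
    (hf.map_zero ▸ hΛn : DirectionallyBounded (Ωn n) (f 0) Λ).norm_sub_le (hc n) (ho n)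
      hf.differentiableOn hf.mapsTo hx
  calc ‖f x‖ ≤ ‖f x - f 0‖ + ‖f 0‖ := norm_le_norm_sub_add _ _
    _ ≤ (B w + 1) + (‖z‖ + 1) :=
      add_le_add (hfx.trans (le_of_lt hxB)) (hf.map_zero ▸ hpn.le)

theorem LocHausConv.isKobDisk_of_tendstoLocallyUniformlyOn [CompleteSpace E]
    (hconv : LocHausConv Ωn Ω) (hc : Convex ℝ Ω) (ho : IsOpen Ω) (hz : z ∈ Ω) {l : Filter ℕ}
    [l.NeBot] (hl : l ≤ atTop) (hpz : Tendsto p l (𝓝 z)) (hv : Tendsto vn l (𝓝 v)) {ξ : ℕ → ℂ}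
    {ξ' : ℂ} (hξ : Tendsto ξ l (𝓝 ξ')) {f : ℕ → ℂ → E} {f' : ℂ → E}
    (hdisk : ∀ᶠ n in l, IsKobDisk (Ωn n) (p n) (vn n) (ξ n) (f n))
    (hf : TendstoLocallyUniformlyOn f f' l (ball 0 1)) : IsKobDisk Ω z v ξ' f' := by
  have h0 : (0 : ℂ) ∈ ball (0 : ℂ) 1 := mem_ball_self one_pos
  have hd : ∀ᶠ n in l, DifferentiableOn ℂ (f n) (ball 0 1) := hdisk.mono fun n hn => hn.1
  have hd' : DifferentiableOn ℂ f' (ball 0 1) := hf.differentiableOn hd isOpen_ball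
  have hderiv : Tendsto (fun n => deriv (f n) 0) l (𝓝 (deriv f' 0)) :=
    (hf.deriv hd isOpen_ball).tendsto_at h0
  have hf0 : f' 0 = z :=
    tendsto_nhds_unique_of_eventuallyEq (hf.tendsto_at h0) hpz (hdisk.mono fun n hn => hn.map_zero)
  have hclosure : MapsTo f' (ball 0 1) (closure Ω) := fun w hw =>
    hconv.mem_closure_of_tendsto ⟨z, hz⟩ hl (hf.tendsto_at hw)
      (hdisk.mono fun n hn => hn.mapsTo hw).frequently
  exact ⟨hd', mapsTo_of_mapsTo_closure_of_convex hc ho isOpen_ball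
      (convex_ball (0 : ℂ) 1).isPreconnected hd' hclosure h0 (hf0 ▸ hz), hf0,
    tendsto_nhds_unique_of_eventuallyEq (hξ.smul hderiv) hv (hdisk.mono fun n hn => hn.smul_deriv)⟩

theorem LocHausConv.kob_le_of_frequently_lt [ProperSpace E] (hconv : LocHausConv Ωn Ω)
    (ho : ∀ n, IsOpen (Ωn n)) (hc : ∀ n, Convex ℝ (Ωn n)) (hΩ : InX Ω) (hp : ∀ n, p n ∈ Ωn n)
    (hz : z ∈ Ω) (hpz : Tendsto p atTop (𝓝 z)) (hv : Tendsto vn atTop (𝓝 v)) {c : ℝ}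
    (hlt : ∃ᶠ n in atTop, kob (Ωn n) (p n) (vn n) < c) : kob Ω z v ≤ c := by
  have := frequently_iff_neBot.1 hlt
  obtain ⟨U, hU⟩ := exists_ultrafilter_le (atTop ⊓ 𝓟 {n | kob (Ωn n) (p n) (vn n) < c})
  obtain ⟨hUtop, hUlt⟩ := le_inf_iff.1 hU
  have hex : ∀ n, kob (Ωn n) (p n) (vn n) < c →
      ∃ ξ f, IsKobDisk (Ωn n) (p n) (vn n) ξ f ∧ ‖ξ‖ < c := fun n =>
    exists_isKobDisk_norm_lt (ho n) (hp n)
  choose! ξ f h using hex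
  have hdisk : ∀ᶠ n in U, IsKobDisk (Ωn n) (p n) (vn n) (ξ n) (f n) ∧ ‖ξ n‖ < c :=
    mem_of_superset (le_principal_iff.1 hUlt) h
  have hξc : ∀ᶠ n in U, ‖ξ n‖ ≤ c := hdisk.mono fun n hn => hn.2.le
  obtain ⟨ξ', hξ'⟩ := exists_tendsto_ultrafilter_of_norm_le U hξc
  obtain ⟨f', hf'⟩ := exists_tendstoLocallyUniformlyOn_of_locallyBounded U isOpen_ball
    (hdisk.mono fun n hn => hn.1.differentiableOn) fun w hw => by
      obtain ⟨C, t, ht, hC⟩ := hconv.exists_nhds_norm_isKobDisk_le ho hc hΩ hz hpz hw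
      exact ⟨C, t, ht, by filter_upwards [hUtop hC, hdisk] with n hn hdn using hn _ _ _ hdn.1⟩
  have hlimit : IsKobDisk Ω z v ξ' f' :=
    hconv.isKobDisk_of_tendstoLocallyUniformlyOn hΩ.1.2.1 hΩ.1.1 hz hUtop (hpz.mono_left hUtop)
      (hv.mono_left hUtop) hξ' (hdisk.mono fun n hn => hn.1) hf'
  exact hlimit.kob_le.trans (le_of_tendsto hξ'.norm hξc)

end Kobayashi

theorem statement9_general {E : Type*} [NormedAddCommGroup E] [NormedSpace ℂ E]
    [FiniteDimensional ℂ E] {Ωn : ℕ → Set E} (ho : ∀ n, IsOpen (Ωn n))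
    (hc : ∀ n, Convex ℝ (Ωn n)) {Ω : Set E} (hΩ : InX Ω) (hconv : LocHausConv Ωn Ω) {p : ℕ → E}
    {plim : E} (hp : ∀ n, p n ∈ Ωn n) (hplim : plim ∈ Ω) (hptend : Tendsto p atTop (𝓝 plim))
    {v : ℕ → E} {vlim : E} (hvtend : Tendsto v atTop (𝓝 vlim)) :
    ENNReal.ofReal (kob Ω plim vlim) ≤
      liminf (fun n => ENNReal.ofReal (kob (Ωn n) (p n) (v n))) atTop := by
  have : ProperSpace E := FiniteDimensional.proper ℂ E
  rw [le_liminf_iff']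
  intro c hc_lt
  lift c to ℝ≥0 using hc_lt.ne_top
  rw [← ENNReal.ofReal_coe_nnreal] at hc_lt ⊢
  by_contra! hfreq
  refine hc_lt.not_ge (ENNReal.ofReal_le_ofReal ?_)
  exact hconv.kob_le_of_frequently_lt ho hc hΩ hp hplim hptend hvtend
    (hfreq.mono fun n hn => (ENNReal.ofReal_lt_ofReal_iff'.1 hn).1)

/-- lower semicontinuity of the Kobayashi metric under local Hausdorff
convergence: `k_Ω(p; v) ≤ liminf k_{Ω_n}(p_n; v_n)` (liminf taken in `ℝ≥0∞`). -/
theorem statement9 (d : ℕ) (Ωn : ℕ → Set (EuclideanSpace ℂ (Fin d)))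
    (hΩn : ∀ n, InX (Ωn n))
    (Ω : Set (EuclideanSpace ℂ (Fin d))) (hΩ : InX Ω)
    (hconv : LocHausConv Ωn Ω)
    (p : ℕ → EuclideanSpace ℂ (Fin d)) (plim : EuclideanSpace ℂ (Fin d))
    (hp : ∀ n, p n ∈ Ωn n ∩ Ω) (hplim : plim ∈ Ω) (hptend : Tendsto p atTop (nhds plim))
    (v : ℕ → EuclideanSpace ℂ (Fin d)) (vlim : EuclideanSpace ℂ (Fin d))
    (hv : ∀ n, ‖v n‖ = 1) (hvtend : Tendsto v atTop (nhds vlim)) :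
    ENNReal.ofReal (kob Ω plim vlim) ≤
      Filter.liminf (fun n => ENNReal.ofReal (kob (Ωn n) (p n) (v n))) atTop :=
  statement9_general (fun n => (hΩn n).1.1) (fun n => (hΩn n).1.2.1) hΩ hconv (fun n => (hp n).1)
    hplim hptend hvtend
end
end

section
/- Let Ω ⊂ ℂ^d be a convex domain containing no complex affine line, and let V ⊂ ℂ^d be a complex affine k-plane intersecting Ω. Then for every z ∈ V ∩ Ω and every vector v tangent to V (i.e., v in the direction space of V), one has k_Ω(z; v) ≤ k_{Ω ∩ V}(z; v) ≤ 2 k_Ω(z; v), where k_{Ω ∩ V}(z; v) is defined using holomorphic disks in ℂ^d whose image lies in Ω ∩ V. -/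
open Set Metric Filter Topology
open scoped ENNReal NNReal

noncomputable section

/-!
Holomorphic discs in the slice `Ω ∩ V` are holomorphic discs in `Ω`, hence the lower bound. For the
upper bound, let `f` be a holomorphic disc in `Ω` centred at `z`. Every real half-space containing
`Ω` is `{re l < M}` for a complex linear `l`, and the Borel–Carathéodory inequality for `l ∘ f`
bounds `l (f' 0)` by twice the distance of `l z` from the line `re = M`. So the affine disc
`z + lam • f' 0`, `‖lam‖ < 1 / 2`, stays in each such half-space, and, `Ω` being convex, in `Ω`.
If `f' 0` is tangent to `V`, this affine disc lies in `Ω ∩ V`; it costs a factor of `2`.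
-/

theorem norm_sub_le_of_mapsTo_halfPlane {h : ℂ → ℂ} {c z : ℂ} {R M : ℝ}
    (hd : DifferentiableOn ℂ h (ball c R)) (hM : MapsTo h (ball c R) {w | w.re < M})
    (hz : z ∈ ball c R) :
    ‖h z - h c‖ ≤ 2 * (M - (h c).re) * ‖z - c‖ / (R - ‖z - c‖) := by
  have hR : 0 < R := pos_of_mem_ball hz
  have hmaps : MapsTo (fun w ↦ w + c) (ball 0 R) (ball c R) := fun w hw ↦ by
    simpa using hw
  have hgd : DifferentiableOn ℂ (fun w ↦ h (w + c) - h c) (ball 0 R) :=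
    (hd.comp (by fun_prop) hmaps).sub_const _
  have hgM : MapsTo (fun w ↦ h (w + c) - h c) (ball 0 R) {w | w.re ≤ M - (h c).re} := by
    intro w hw
    simpa using (hM (hmaps hw)).le
  simpa using Complex.borelCaratheodory_zero (sub_pos.2 (hM (mem_ball_self hR))) hgd hgM hR
    (z := z - c) (by simpa [dist_eq_norm] using hz) (by simp)

theorem norm_deriv_le_of_mapsTo_halfPlane {h : ℂ → ℂ} {c : ℂ} {R M : ℝ} (hR : 0 < R)
    (hd : DifferentiableOn ℂ h (ball c R)) (hM : MapsTo h (ball c R) {w | w.re < M}) :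
    ‖deriv h c‖ ≤ 2 * (M - (h c).re) / R := by
  have hball : ball c R ∈ 𝓝 c := ball_mem_nhds c hR
  have hslope : Tendsto (fun z ↦ ‖slope h c z‖) (𝓝[≠] c) (𝓝 ‖deriv h c‖) :=
    (hasDerivAt_iff_tendsto_slope.1 (hd.differentiableAt hball).hasDerivAt).norm
  have hbound : Tendsto (fun z ↦ 2 * (M - (h c).re) / (R - ‖z - c‖)) (𝓝[≠] c)
      (𝓝 (2 * (M - (h c).re) / R)) := by
    have hcont : ContinuousAt (fun z ↦ 2 * (M - (h c).re) / (R - ‖z - c‖)) c :=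
      ContinuousAt.div (by fun_prop) (by fun_prop) (by simpa using hR.ne')
    simpa using hcont.tendsto.mono_left nhdsWithin_le_nhds
  refine le_of_tendsto_of_tendsto hslope hbound ?_
  filter_upwards [nhdsWithin_le_nhds hball, self_mem_nhdsWithin] with z hz hzc
  rw [slope_def_field, norm_div, div_le_iff₀ (norm_pos_iff.2 (sub_ne_zero.2 hzc)),
    div_mul_eq_mul_div]
  exact norm_sub_le_of_mapsTo_halfPlane hd hM hz

theorem add_smul_mem_of_mem_direction {𝕜 M : Type*} [Ring 𝕜] [AddCommGroup M] [Module 𝕜 M]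
    {V : AffineSubspace 𝕜 M} {z v : M} (hz : z ∈ V) (hv : v ∈ V.direction) (lam : 𝕜) :
    z + lam • v ∈ V := by
  rw [add_comm]
  exact AffineSubspace.vadd_mem_of_mem_direction (V.direction.smul_mem lam hv) hz

theorem exists_pos_forall_add_smul_mem {𝕜 M : Type*} [NormedField 𝕜] [SeminormedAddCommGroup M]
    [NormedSpace 𝕜 M] {Ω : Set M} (ho : IsOpen Ω) {z : M} (hz : z ∈ Ω) (v : M) :
    ∃ r > 0, ∀ lam ∈ ball (0 : 𝕜) r, z + lam • v ∈ Ω :=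
  Metric.isOpen_iff.1 (ho.preimage (f := fun lam : 𝕜 ↦ z + lam • v) (by fun_prop)) 0 (by simpa)

section Kobayashi

variable {E : Type*} [NormedAddCommGroup E] [NormedSpace ℂ E]

theorem add_smul_deriv_mem_of_convex {Ω : Set E} (ho : IsOpen Ω) (hc : Convex ℝ Ω) {f : ℂ → E}
    {c : ℂ} {R : ℝ} (hd : DifferentiableOn ℂ f (ball c R)) (hf : MapsTo f (ball c R) Ω) {lam : ℂ}
    (hlam : ‖lam‖ < R / 2) : f c + lam • deriv f c ∈ Ω := by
  have hR : 0 < R := by linarith [norm_nonneg lam]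
  by_contra hx
  obtain ⟨l, hl⟩ := RCLike.geometric_hahn_banach_open_point (𝕜 := ℂ) hc ho hx
  have hderiv : deriv (fun x ↦ l (f x)) c = l (deriv f c) :=
    (l.hasFDerivAt.comp_hasDerivAt c
      (hd.differentiableAt (ball_mem_nhds c hR)).hasDerivAt).deriv
  have hbound := norm_deriv_le_of_mapsTo_halfPlane hR
    (l.differentiable.comp_differentiableOn hd) (fun x hx ↦ hl _ (hf hx))
  have hpos := hl _ (hf (mem_ball_self hR))
  simp only [Function.comp_def, hderiv, map_add, map_smul, smul_eq_mul, RCLike.re_to_complex,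
    add_sub_cancel_left, lt_add_iff_pos_right, le_div_iff₀ hR] at hbound hpos
  have hre : (lam * l (deriv f c)).re ≤ ‖lam‖ * ‖l (deriv f c)‖ :=
    (Complex.re_le_norm _).trans_eq (norm_mul _ _)
  have hderiv_pos : 0 < ‖l (deriv f c)‖ :=
    pos_of_mul_pos_right (hpos.trans_le hre) (norm_nonneg lam)
  have hcancel : ‖l (deriv f c)‖ * R ≤ ‖l (deriv f c)‖ * (2 * ‖lam‖) := by linarith
  linarith [le_of_mul_le_mul_left hcancel hderiv_pos]

/-- `f` is a holomorphic disc in `S` centred at `z` with `ξ f'(0) = v`: these are the discs over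
which the infimum of `‖ξ‖` defines the Kobayashi metric `kob S z v`. As there, `f` is a map on all
of `ℂ` of which only the restriction to the unit disc matters. -/
structure IsKobayashiDisc (S : Set E) (z v : E) (ξ : ℂ) (f : ℂ → E) : Prop where
  differentiableOn : DifferentiableOn ℂ f (ball 0 1)
  mapsTo : MapsTo f (ball 0 1) S
  map_zero : f 0 = z
  smul_deriv : ξ • deriv f 0 = v

namespace IsKobayashiDisc

variable {S T : Set E} {z v : E} {ξ : ℂ} {f : ℂ → E}

theorem kob_le (h : IsKobayashiDisc S z v ξ f) : kob S z v ≤ ‖ξ‖ :=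
  csInf_le ⟨0, by rintro _ ⟨ξ, -, -, -, -, -, rfl⟩; exact norm_nonneg ξ⟩
    ⟨ξ, f, h.differentiableOn, h.mapsTo, h.map_zero, h.smul_deriv, rfl⟩

-- If there is no such disc at all, then `kob S z v` is the junk value `sInf ∅ = 0`.
theorem le_kob (h : IsKobayashiDisc S z v ξ f) {c : ℝ}
    (hc : ∀ ζ g, IsKobayashiDisc S z v ζ g → c ≤ ‖ζ‖) : c ≤ kob S z v := by
  refine le_csInf ⟨_, ξ, f, h.differentiableOn, h.mapsTo, h.map_zero, h.smul_deriv, rfl⟩ ?_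
  rintro _ ⟨ζ, g, hgd, hgS, hgz, hgv, rfl⟩
  exact hc ζ g ⟨hgd, hgS, hgz, hgv⟩

theorem mono (h : IsKobayashiDisc S z v ξ f) (hST : S ⊆ T) : IsKobayashiDisc T z v ξ f :=
  { h with mapsTo := h.mapsTo.mono_right hST }

theorem kob_anti (h : IsKobayashiDisc S z v ξ f) (hST : S ⊆ T) : kob T z v ≤ kob S z v :=
  h.le_kob fun _ _ hg ↦ (hg.mono hST).kob_le

theorem add_smul_mem (h : IsKobayashiDisc S z v ξ f) (ho : IsOpen S) (hc : Convex ℝ S) {lam : ℂ}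
    (hlam : ‖lam‖ * ‖ξ‖ < 1 / 2) : z + lam • v ∈ S := by
  rw [← h.map_zero, ← h.smul_deriv, smul_smul]
  exact add_smul_deriv_mem_of_convex ho hc h.differentiableOn h.mapsTo (by rwa [norm_mul])

end IsKobayashiDisc

theorem isKobayashiDisc_affine {S : Set E} {z v : E} {r : ℝ} (hr : 0 < r)
    (hS : ∀ lam ∈ ball (0 : ℂ) r, z + lam • v ∈ S) :
    IsKobayashiDisc S z v (r⁻¹ : ℝ) fun x ↦ z + (x * r) • v where
  differentiableOn := by fun_prop
  mapsTo x hx := hS _ <| by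
    simpa [abs_of_pos hr] using mul_lt_of_lt_one_left hr (mem_ball_zero_iff.1 hx)
  map_zero := by simp
  smul_deriv := by
    have hderiv : HasDerivAt (fun x : ℂ ↦ z + (x * r) • v) ((r : ℂ) • v) 0 := by
      simpa using (((hasDerivAt_id (0 : ℂ)).mul_const (r : ℂ)).smul_const v).const_add z
    rw [hderiv.deriv, Complex.ofReal_inv, inv_smul_smul₀ (by exact_mod_cast hr.ne')]

theorem exists_isKobayashiDisc_inter {Ω : Set E} (ho : IsOpen Ω) (V : AffineSubspace ℂ E) {z v : E}
    (hzΩ : z ∈ Ω) (hzV : z ∈ V) (hv : v ∈ V.direction) :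
    ∃ ξ f, IsKobayashiDisc (Ω ∩ V) z v ξ f := by
  obtain ⟨r, hr, hdisc⟩ := exists_pos_forall_add_smul_mem (𝕜 := ℂ) ho hzΩ v
  exact ⟨_, _, isKobayashiDisc_affine hr fun lam hlam ↦
    ⟨hdisc lam hlam, add_smul_mem_of_mem_direction hzV hv lam⟩⟩

theorem kob_inter_le_two_mul_norm {Ω : Set E} (ho : IsOpen Ω) (hc : Convex ℝ Ω)
    (V : AffineSubspace ℂ E) {z v : E} (hzV : z ∈ V) (hv : v ∈ V.direction) {ξ : ℂ} {f : ℂ → E}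
    (h : IsKobayashiDisc Ω z v ξ f) : kob (Ω ∩ V) z v ≤ 2 * ‖ξ‖ := by
  -- Any `t > 2 * ‖ξ‖` is positive, so the disc of radius `t⁻¹` makes sense even when `ξ = 0`.
  refine le_of_forall_gt_imp_ge_of_dense fun t ht ↦ ?_
  have ht_pos : 0 < t := (mul_nonneg two_pos.le (norm_nonneg ξ)).trans_lt ht
  have hdisc : ∀ lam ∈ ball (0 : ℂ) t⁻¹, z + lam • v ∈ Ω ∩ V := fun lam hlam ↦ by
    have hlam_t : ‖lam‖ * t < 1 := by
      rwa [mem_ball_zero_iff, ← one_div, lt_div_iff₀ ht_pos] at hlam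
    have hlam_ξ : ‖lam‖ * ‖ξ‖ < 1 / 2 := by nlinarith [norm_nonneg lam]
    exact ⟨h.add_smul_mem ho hc hlam_ξ, add_smul_mem_of_mem_direction hzV hv lam⟩
  simpa [abs_of_pos ht_pos] using (isKobayashiDisc_affine (inv_pos.2 ht_pos) hdisc).kob_le

theorem statement11_general {Ω : Set E} (ho : IsOpen Ω) (hc : Convex ℝ Ω) (V : AffineSubspace ℂ E)
    {z v : E} (hzΩ : z ∈ Ω) (hzV : z ∈ V) (hv : v ∈ V.direction) :
    kob Ω z v ≤ kob (Ω ∩ V) z v ∧ kob (Ω ∩ V) z v ≤ 2 * kob Ω z v := by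
  obtain ⟨ξ, f, hf⟩ := exists_isKobayashiDisc_inter ho V hzΩ hzV hv
  refine ⟨hf.kob_anti inter_subset_left, ?_⟩
  rw [← div_le_iff₀' two_pos]
  refine (hf.mono inter_subset_left).le_kob fun ζ g hg ↦ ?_
  rw [div_le_iff₀' two_pos]
  exact kob_inter_le_two_mul_norm ho hc V hzV hv hg

end Kobayashi

/-- For `Ω ∈ 𝕏_d` and a complex affine `k`-plane `V = p + W` meeting `Ω`,
`k_Ω(z;v) ≤ k_{Ω ∩ V}(z;v) ≤ 2 k_Ω(z;v)` for all `z ∈ V ∩ Ω` and `v` tangent to `V`. -/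
theorem statement11 (d k : ℕ) (Ω : Set (EuclideanSpace ℂ (Fin d))) (hΩ : InX Ω)
    (p : EuclideanSpace ℂ (Fin d)) (W : Submodule ℂ (EuclideanSpace ℂ (Fin d)))
    (hW : Module.finrank ℂ W = k)
    (V : Set (EuclideanSpace ℂ (Fin d))) (hV : V = {x | x - p ∈ W})
    (hmeet : (V ∩ Ω).Nonempty)
    (z : EuclideanSpace ℂ (Fin d)) (hz : z ∈ V ∩ Ω)
    (v : EuclideanSpace ℂ (Fin d)) (hv : v ∈ W) :
    kob Ω z v ≤ kob (Ω ∩ V) z v ∧ kob (Ω ∩ V) z v ≤ 2 * kob Ω z v := by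
  subst hV
  exact statement11_general hΩ.1.1 hΩ.1.2.1 (AffineSubspace.mk' p W) hz.2 hz.1
    ((AffineSubspace.direction_mk' p W).symm ▸ hv)
end
end
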